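/- arXiv:1011.4691 — 3 statements merged into one kernel-verified Lean document; each statement's English description precedes it below -/
import Mathlib

section
/- Let N ≥ 3, p > 0, α, β ∈ ℝ with N + α + p(N−2) > 0 and β < −2, γ ∈ (0,1), and let φ : (0,∞) → (0,∞) be locally γ-Hölder continuous and satisfy, for some constants c₁, c₂ > 0: c₁ r^α ≤ φ(r) ≤ c₂ r^α for all 0 < r < 1, and c₁ r^β ≤ φ(r) ≤ c₂ r^β for all r > 1. Then for every a ≥ 0 and b ≥ 0 the equation −Δu = φ(|x|) u^{−p} on ℝ^N \ {0} admits a radially symmetric C² positive solution u_{a,b} such that |x|^{N−2} u_{a,b}(x) → a as |x| → 0 and u_{a,b}(x) → b as |x| → ∞. -/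
open Metric Set MeasureTheory Filter

noncomputable def laplacian {N : ℕ} (u : EuclideanSpace ℝ (Fin N) → ℝ)
    (x : EuclideanSpace ℝ (Fin N)) : ℝ :=
  ∑ i, iteratedFDeriv ℝ 2 u x ![EuclideanSpace.single i 1, EuclideanSpace.single i 1]

/-- A `C²` positive solution of `-Δu = φ(|x|) u^{-p}` on `ℝ^N \ {0}`. -/
def IsSol {N : ℕ} (φ : ℝ → ℝ) (p : ℝ) (u : EuclideanSpace ℝ (Fin N) → ℝ) : Prop :=
  ContDiffOn ℝ 2 u {(0 : EuclideanSpace ℝ (Fin N))}ᶜ ∧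
    ∀ x : EuclideanSpace ℝ (Fin N), x ≠ 0 →
      0 < u x ∧ -laplacian u x = φ ‖x‖ * u x ^ (-p)

/-- Green operator of `-d²/ds²` on the half line. -/
noncomputable def Gop (g : ℝ → ℝ) (s : ℝ) : ℝ := ∫ t in Ioi (0:ℝ), min s t * g t

/-- The integrability condition used throughout. -/
def GInt (g : ℝ → ℝ) : Prop := IntegrableOn (fun t => min 1 t * g t) (Ioi (0:ℝ))

lemma min_le_max_mul {s t : ℝ} (_hs : 0 ≤ s) (ht : 0 ≤ t) : min s t ≤ max 1 s * min 1 t := by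
  rcases le_total 1 t with h | h
  · rw [min_eq_left h, mul_one]
    exact (min_le_left _ _).trans (le_max_right _ _)
  · rw [min_eq_right h]
    calc min s t ≤ 1 * t := by rw [one_mul]; exact min_le_right _ _
      _ ≤ _ := mul_le_mul_of_nonneg_right (le_max_left _ _) ht

lemma GInt.int {g : ℝ → ℝ} (hg : GInt g) {s : ℝ} (hs : 0 ≤ s) :
    IntegrableOn (fun t => min s t * g t) (Ioi (0:ℝ)) := by
  have h := Integrable.bdd_mul (c := max 1 s) (f := fun t => min s t / min 1 t) hg
    (Measurable.aestronglyMeasurable (by fun_prop)) (by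
      rw [ae_restrict_iff' measurableSet_Ioi]
      refine Eventually.of_forall fun t ht => ?_
      have ht : 0 < t := ht
      have h1 : 0 < min 1 t := lt_min one_pos ht
      rw [Real.norm_of_nonneg (div_nonneg (le_min hs ht.le) h1.le), div_le_iff₀ h1]
      exact min_le_max_mul hs ht.le)
  refine h.congr ?_
  filter_upwards [ae_restrict_mem measurableSet_Ioi] with t ht
  have h1 : 0 < min 1 t := lt_min one_pos ht
  field_simp

lemma GInt.intIoi {g : ℝ → ℝ} (hg : GInt g) {s : ℝ} (hs : 0 < s) :
    IntegrableOn g (Ioi s) := by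
  have h0 : IntegrableOn (fun t => min 1 t * g t) (Ioi s) := hg.mono_set (Ioi_subset_Ioi hs.le)
  have h1 : 0 < min 1 s := lt_min one_pos hs
  have h := Integrable.bdd_mul (c := (min 1 s)⁻¹) (f := fun t => (min 1 t)⁻¹) h0
    (by fun_prop) (by
      rw [ae_restrict_iff' measurableSet_Ioi]
      refine Eventually.of_forall fun t ht => ?_
      have h2 : min 1 s ≤ min 1 t := min_le_min_left _ (le_of_lt ht)
      rw [Real.norm_of_nonneg (inv_nonneg.2 (h1.le.trans h2))]
      exact inv_anti₀ h1 h2)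
  refine h.congr ?_
  filter_upwards [ae_restrict_mem measurableSet_Ioi] with t ht
  have h2 : 0 < min 1 t := lt_min one_pos (hs.trans ht)
  field_simp

lemma Gop_zero (g : ℝ → ℝ) : Gop g 0 = 0 := by
  unfold Gop
  rw [setIntegral_congr_fun (g := fun _ => (0:ℝ)) measurableSet_Ioi]
  · simp
  · intro t ht
    simp [min_eq_left (le_of_lt (mem_Ioi.1 ht))]

lemma GInt.cont {g : ℝ → ℝ} (hg : GInt g) : Continuous (fun s => Gop g (max s 0)) := by
  rw [continuous_iff_continuousAt]
  intro s0
  unfold Gop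
  refine continuousAt_of_dominated (bound := fun t => (max 1 (max (s0+1) 0)) * ‖min 1 t * g t‖)
    ?_ ?_ ?_ ?_
  · exact Eventually.of_forall fun s => (hg.int (le_max_right s 0)).1
  · filter_upwards [Iio_mem_nhds (show s0 < s0 + 1 by linarith)] with s hs
    filter_upwards [ae_restrict_mem measurableSet_Ioi] with t ht
    have ht : 0 < t := ht
    rw [norm_mul, norm_mul, ← mul_assoc]
    refine mul_le_mul_of_nonneg_right ?_ (norm_nonneg _)
    have h1 : 0 < min 1 t := lt_min one_pos ht
    rw [Real.norm_of_nonneg h1.le, Real.norm_of_nonneg (le_min (le_max_right _ _) ht.le)]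
    refine (min_le_max_mul (le_max_right _ _) ht.le).trans ?_
    refine mul_le_mul_of_nonneg_right ?_ h1.le
    have : s ≤ s0 + 1 := le_of_lt hs
    gcongr
  · exact hg.norm.const_mul _
  · refine Eventually.of_forall fun t => ?_
    fun_prop

lemma GInt.hasDerivAt {g : ℝ → ℝ} (hg : GInt g) {s : ℝ} (hs : 0 < s) :
    HasDerivAt (Gop g) (∫ t in Ioi s, g t) s := by
  have hgs2 : IntegrableOn g (Ioi (s/2)) := hg.intIoi (by linarith)
  have hgs : IntegrableOn g (Ioi s) := hg.intIoi hs
  have key := hasDerivAt_integral_of_dominated_loc_of_lip (μ := volume.restrict (Ioi (0:ℝ)))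
    (F := fun s t => min s t * g t) (F' := (Ioi s).indicator g) (x₀ := s) (s := Ioi (s/2))
    (bound := (Ioi (s/2)).indicator (fun t => |g t|)) (𝕜 := ℝ)
    (Ioi_mem_nhds (by linarith)) ?_ (hg.int hs.le) ?_ ?_ ?_ ?_
  · have h := key.2
    rw [setIntegral_indicator measurableSet_Ioi, Ioi_inter_Ioi, max_eq_right hs.le] at h
    exact h
  · filter_upwards [Ioi_mem_nhds hs] with x hx
    exact (hg.int (le_of_lt hx)).1
  · refine AEStronglyMeasurable.mono_measure ?_ Measure.restrict_le_self
    exact ((integrable_indicator_iff measurableSet_Ioi).2 hgs).1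
  · refine Eventually.of_forall fun t => ?_
    rw [lipschitzOnWith_iff_dist_le_mul]
    intro x hx y hy
    have hx : s/2 < x := hx
    have hy : s/2 < y := hy
    by_cases ht : t ∈ Ioi (s/2)
    · rw [indicator_of_mem ht, Real.dist_eq, Real.dist_eq, ← sub_mul, abs_mul]
      simp only [Real.coe_nnabs, abs_abs]
      rw [mul_comm]
      refine mul_le_mul_of_nonneg_left ?_ (abs_nonneg _)
      exact (abs_min_sub_min_le_max x t y t).trans (by simp)
    · have ht : t ≤ s/2 := not_lt.1 ht
      rw [min_eq_right (by linarith), min_eq_right (by linarith)]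
      simp only [dist_self]
      positivity
  · refine Integrable.mono_measure ?_ Measure.restrict_le_self
    exact (integrable_indicator_iff measurableSet_Ioi).2 hgs2.norm
  · have : ∀ᵐ t : ℝ ∂(volume.restrict (Ioi (0:ℝ))), t ≠ s :=
      ae_restrict_of_ae (by simp [ae_iff])
    filter_upwards [this] with t ht
    rcases lt_or_gt_of_ne ht with h | h
    · rw [indicator_of_notMem (by simpa using h.le)]
      refine (hasDerivAt_const s (t * g t)).congr_of_eventuallyEq ?_
      filter_upwards [Ioi_mem_nhds h] with x hx
      rw [min_eq_right (le_of_lt hx)]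
    · rw [indicator_of_mem (by simpa using h)]
      have h2 : HasDerivAt (fun x : ℝ => x * g t) (1 * g t) s := (hasDerivAt_id s).mul_const _
      rw [one_mul] at h2
      refine h2.congr_of_eventuallyEq ?_
      filter_upwards [Iio_mem_nhds h] with x hx
      rw [min_eq_left (le_of_lt hx)]

lemma GInt.hasDerivAt2 {g : ℝ → ℝ} (hg : GInt g) (hc : ContinuousOn g (Ioi 0)) {s : ℝ}
    (hs : 0 < s) : HasDerivAt (fun s => ∫ t in Ioi s, g t) (- g s) s := by
  have hs2 : 0 < s/2 := by linarith
  have hgs2 : IntegrableOn g (Ioi (s/2)) := hg.intIoi hs2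
  have h1 : HasDerivAt (fun x => (∫ t in Ioi (s/2), g t) - ∫ t in (s/2)..x, g t) (0 - g s) s := by
    refine (hasDerivAt_const _ _).sub ?_
    refine intervalIntegral.integral_hasDerivAt_right ?_ ?_ (hc.continuousAt (Ioi_mem_nhds hs))
    · rw [intervalIntegrable_iff_integrableOn_Ioc_of_le (by linarith)]
      exact hgs2.mono_set Ioc_subset_Ioi_self
    · exact hc.stronglyMeasurableAtFilter isOpen_Ioi s hs
  rw [zero_sub] at h1
  refine h1.congr_of_eventuallyEq ?_
  filter_upwards [Ioi_mem_nhds (show s/2 < s by linarith)] with x hx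
  have := intervalIntegral.integral_interval_add_Ioi hgs2 (hg.intIoi (hs2.trans hx))
  linarith

lemma GInt.tendsto_div {g : ℝ → ℝ} (hg : GInt g) :
    Tendsto (fun s => Gop g s / s) atTop (nhds 0) := by
  have key : Tendsto (fun s => ∫ t in Ioi (0:ℝ), (min s t / s) * g t) atTop (nhds 0) := by
    suffices h : Tendsto (fun s => ∫ t in Ioi (0:ℝ), (min s t / s) * g t) atTop
        (nhds (∫ t in Ioi (0:ℝ), (fun _ : ℝ => (0:ℝ)) t)) by simpa using h
    refine tendsto_integral_filter_of_dominated_convergence (fun t => ‖min 1 t * g t‖) ?_ ?_ ?_ ?_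
    · filter_upwards [eventually_gt_atTop 0] with s hs
      have := ((hg.int hs.le).div_const s).1
      refine this.congr (Eventually.of_forall fun t => ?_)
      simp only; ring
    · filter_upwards [eventually_gt_atTop 1] with s hs
      filter_upwards [ae_restrict_mem measurableSet_Ioi] with t ht
      have ht : 0 < t := ht
      have hs0 : 0 < s := by linarith
      rw [norm_mul, norm_mul]
      refine mul_le_mul_of_nonneg_right ?_ (norm_nonneg _)
      have h1 : 0 < min 1 t := lt_min one_pos ht
      have h2 : 0 < min s t := lt_min hs0 ht
      rw [Real.norm_of_nonneg h1.le, Real.norm_of_nonneg (by positivity), div_le_iff₀ hs0]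
      have := min_le_max_mul hs0.le ht.le
      rw [max_eq_right hs.le] at this
      linarith
    · exact hg.norm
    · filter_upwards [ae_restrict_mem measurableSet_Ioi] with t ht
      have h1 : Tendsto (fun s : ℝ => t / s * g t) atTop (nhds (0 * g t)) :=
        (tendsto_const_nhds.div_atTop tendsto_id).mul_const _
      rw [zero_mul] at h1
      refine h1.congr' ?_
      filter_upwards [eventually_gt_atTop t] with s hs
      rw [min_eq_right (le_of_lt hs)]
  refine key.congr fun s => ?_
  unfold Gop
  rw [← integral_div]
  refine integral_congr_ae (Eventually.of_forall fun t => ?_)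
  simp only; ring

/-- Maximum principle. -/
lemma max_principle (q q' : ℝ → ℝ) (hc : Continuous q) (hq0 : q 0 ≤ 0)
    (hd : ∀ s, 0 < s → HasDerivAt q (q' s) s)
    (hm : ∀ s t, 0 < s → s ≤ t → (∀ x, s ≤ x → x ≤ t → 0 < q x) → q' s ≤ q' t)
    (hi : ∀ s, 0 < s → (∀ x, s ≤ x → 0 < q x) → q' s ≤ 0) :
    ∀ s, 0 ≤ s → q s ≤ 0 := by
  intro s0 hs0
  by_contra! hpos
  have hcl : IsClosed {x | q x ≤ 0} := isClosed_le hc continuous_const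
  -- last zero before s0
  obtain ⟨s1, ⟨⟨h10, h1s⟩, hq1⟩, hmax⟩ : ∃ s1, IsGreatest (Icc 0 s0 ∩ {x | q x ≤ 0}) s1 :=
    (isCompact_Icc.inter_right hcl).exists_isGreatest ⟨0, ⟨⟨le_rfl, hs0⟩, hq0⟩⟩
  have hq1 : q s1 ≤ 0 := hq1
  have hs1lt : s1 < s0 := lt_of_le_of_ne h1s (by rintro rfl; linarith)
  have hpos1 : ∀ x, s1 < x → x ≤ s0 → 0 < q x := by
    intro x hx hx2
    by_contra! h
    have := hmax ⟨⟨h10.trans hx.le, hx2⟩, h⟩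
    linarith
  obtain ⟨c, ⟨hc1, hc2⟩, hcd⟩ := exists_hasDerivAt_eq_slope q q' hs1lt hc.continuousOn
    (fun x hx => hd x (h10.trans_lt hx.1))
  have hcpos : 0 < q' c := by
    rw [hcd]; exact div_pos (by linarith) (by linarith)
  have hc0 : 0 < c := h10.trans_lt hc1
  have : ∀ x, c ≤ x → 0 < q x := by
    intro x hx
    by_contra! hqx
    have hx0 : s0 ≤ x := by
      by_contra! h
      exact absurd (hpos1 x (hc1.trans_le hx) h.le) (not_lt.2 hqx)
    obtain ⟨s2, ⟨⟨h20, h2s⟩, hq2⟩, hmin⟩ : ∃ s2, IsLeast (Icc s0 x ∩ {x | q x ≤ 0}) s2 :=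
      (isCompact_Icc.inter_right hcl).exists_isLeast ⟨x, ⟨⟨hx0, le_rfl⟩, hqx⟩⟩
    have hq2 : q s2 ≤ 0 := hq2
    have hlt : s0 < s2 := lt_of_le_of_ne h20 (by rintro rfl; linarith)
    obtain ⟨d, ⟨hd1, hd2⟩, hdd⟩ := exists_hasDerivAt_eq_slope q q' hlt hc.continuousOn
      (fun x hx => hd x (hs0.trans_lt hx.1))
    have hdneg : q' d < 0 := by
      rw [hdd]; exact div_neg_of_neg_of_pos (by linarith) (by linarith)
    have := hm c d hc0 (by linarith) (by
      intro y hy1 hy2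
      rcases le_total y s0 with h | h
      · exact hpos1 y (by linarith) h
      · by_contra! hqy
        have := hmin ⟨⟨h, by linarith⟩, hqy⟩
        linarith)
    linarith
  have := hi c hc0 this
  linarith

lemma GInt.max_principle {g : ℝ → ℝ} (hg : GInt g) {c0 c1 : ℝ} (h0 : 0 ≤ c0) (h1 : 0 ≤ c1)
    (H : ∀ s, 0 < s → c0 + c1 * s < Gop g s → g s ≤ 0) :
    ∀ s, 0 ≤ s → Gop g s ≤ c0 + c1 * s := by
  have key := _root_.max_principle (fun s => Gop g (max s 0) - (c0 + c1 * s))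
    (fun s => (∫ t in Ioi s, g t) - c1) (by have := hg.cont; fun_prop)
    (by simp [Gop_zero, h0]) ?_ ?_ ?_
  · intro s hs
    have := key s hs
    simp only [max_eq_left hs] at this
    linarith
  · intro s hs
    have h2 : HasDerivAt (fun s => Gop g s - (c0 + c1 * s)) ((∫ t in Ioi s, g t) - c1) s := by
      refine (hg.hasDerivAt hs).sub ?_
      have := ((hasDerivAt_id s).const_mul c1).const_add c0
      simpa using this
    refine h2.congr_of_eventuallyEq ?_
    filter_upwards [Ioi_mem_nhds hs] with x hx
    rw [max_eq_left (le_of_lt hx)]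
  · intro s t hs hst hq
    have := intervalIntegral.integral_interval_add_Ioi (hg.intIoi hs) (hg.intIoi (hs.trans_le hst))
    have h3 : ∫ x in s..t, g x ≤ 0 := by
      rw [intervalIntegral.integral_of_le hst]
      refine setIntegral_nonpos measurableSet_Ioc fun x hx => ?_
      have hx0 := hs.trans hx.1
      refine H x hx0 ?_
      have := hq x hx.1.le hx.2
      rw [max_eq_left hx0.le] at this
      linarith
    linarith
  · intro s hs hq
    have h3 : ∫ x in Ioi s, g x ≤ 0 := by
      refine setIntegral_nonpos measurableSet_Ioi fun x hx => ?_
      have hx0 := hs.trans hx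
      refine H x hx0 ?_
      have := hq x (le_of_lt hx)
      rw [max_eq_left hx0.le] at this
      linarith
    linarith

/-- Continuation method. -/
lemma continuation {E : Type*} [NormedAddCommGroup E] [NormedSpace ℝ E] [CompleteSpace E]
    (A : E → E) (L C : ℝ) (hL0 : 0 ≤ L) (hC0 : 0 ≤ C) (hL : ∀ x y, ‖A x - A y‖ ≤ L * ‖x - y‖)
    (hC : ∀ l : ℝ, 0 ≤ l → l ≤ 1 → ∀ x y,
      ‖x - y‖ ≤ C * ‖(x - l • A x) - (y - l • A y)‖) (z : E) : ∃ x, x - A x = z := by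
  obtain ⟨n, hn⟩ := exists_nat_gt (C * L)
  have hn0 : (0:ℝ) < n := lt_of_le_of_lt (by positivity) hn
  have key : ∀ k : ℕ, k ≤ n → ∀ z, ∃ x, x - ((k:ℝ)/n) • A x = z := by
    intro k
    induction k with
    | zero => intro _ z; exact ⟨z, by simp⟩
    | succ k ih =>
      intro hk z
      choose S hS using ih (by omega)
      have hkn : (k:ℝ)/n ≤ 1 := by
        rw [div_le_one hn0]; exact_mod_cast (by omega : k ≤ n)
      have hSl : ∀ y y', ‖S y - S y'‖ ≤ C * ‖y - y'‖ := by
        intro y y'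
        have := hC ((k:ℝ)/n) (by positivity) hkn (S y) (S y')
        rwa [hS, hS] at this
      have hcon : ContractingWith (Real.toNNReal (C * L / n))
          (fun y => z + (1/(n:ℝ)) • A (S y)) := by
        constructor
        · rw [Real.toNNReal_lt_one, div_lt_one hn0]; exact hn
        · refine LipschitzWith.of_dist_le_mul fun y y' => ?_
          rw [dist_eq_norm, dist_eq_norm, Real.coe_toNNReal _ (by positivity),
            add_sub_add_left_eq_sub, ← smul_sub, norm_smul, Real.norm_of_nonneg (by positivity)]
          have h1 := (hL (S y) (S y')).trans (mul_le_mul_of_nonneg_left (hSl y y') hL0)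
          calc 1/(n:ℝ) * ‖A (S y) - A (S y')‖ ≤ 1/(n:ℝ) * (L * (C * ‖y - y'‖)) := by gcongr
            _ = _ := by ring
      obtain ⟨y, hy⟩ : ∃ y, z + (1/(n:ℝ)) • A (S y) = y :=
        ⟨_, hcon.fixedPoint_isFixedPt⟩
      refine ⟨S y, ?_⟩
      have h2 := hS y
      have h3 : (((k+1:ℕ):ℝ)/n) = (k:ℝ)/n + 1/n := by push_cast; ring
      rw [h3, add_smul, ← sub_sub, h2, sub_eq_iff_eq_add]
      exact hy.symm
  obtain ⟨x, hx⟩ := key n le_rfl z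
  refine ⟨x, ?_⟩
  rwa [div_self hn0.ne', one_smul] at hx

lemma Gop_abs_le {ρ g : ℝ → ℝ} (hρ : GInt ρ) {K : ℝ} (hK : ∀ t, 0 < t → |g t| ≤ K * ρ t)
    {s : ℝ} (hs : 0 ≤ s) :
    |Gop g s| ≤ max 1 s * (K * ∫ t in Ioi (0:ℝ), min 1 t * ρ t) := by
  unfold Gop
  rw [← integral_const_mul, ← integral_const_mul, ← Real.norm_eq_abs]
  have h0 : Integrable (fun t => min 1 t * ρ t) (volume.restrict (Ioi (0:ℝ))) := hρ
  refine norm_integral_le_of_norm_le ((h0.const_mul K).const_mul _) ?_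
  filter_upwards [ae_restrict_mem measurableSet_Ioi] with t ht
  have ht : 0 < t := ht
  rw [norm_mul, Real.norm_of_nonneg (le_min hs ht.le), Real.norm_eq_abs]
  have h1 := hK t ht
  have h2 := min_le_max_mul hs ht.le
  have h3 : 0 < min 1 t := lt_min one_pos ht
  calc min s t * |g t| ≤ (max 1 s * min 1 t) * (K * ρ t) := by
        refine mul_le_mul h2 h1 (abs_nonneg _) (by positivity)
    _ = _ := by ring

lemma GInt.sub {g g' : ℝ → ℝ} (hg : GInt g) (hg' : GInt g') : GInt (fun t => g t - g' t) := by
  have := Integrable.sub hg hg'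
  refine this.congr (Eventually.of_forall fun t => ?_)
  simp only [Pi.sub_apply]; ring

lemma GInt.const_mul {g : ℝ → ℝ} (hg : GInt g) (c : ℝ) : GInt (fun t => c * g t) := by
  have := Integrable.const_mul hg c
  refine this.congr (Eventually.of_forall fun t => ?_)
  simp only; ring

lemma GInt.mul_bdd {g k : ℝ → ℝ} (hg : GInt g) (hk : AEStronglyMeasurable k (volume.restrict (Ioi 0)))
    {c : ℝ} (hc : ∀ t, 0 < t → |k t| ≤ c) : GInt (fun t => g t * k t) := by
  have := Integrable.bdd_mul (c := c) hg hk (by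
    filter_upwards [ae_restrict_mem measurableSet_Ioi] with t ht
    exact hc t ht)
  refine this.congr (Eventually.of_forall fun t => ?_)
  simp only; ring

lemma Gop_sub {g g' : ℝ → ℝ} (hg : GInt g) (hg' : GInt g') {s : ℝ} (hs : 0 ≤ s) :
    Gop (fun t => g t - g' t) s = Gop g s - Gop g' s := by
  unfold Gop
  rw [← integral_sub (hg.int hs) (hg'.int hs)]
  refine integral_congr_ae (Eventually.of_forall fun t => ?_)
  simp only; ring

lemma Gop_const_mul (g : ℝ → ℝ) (c s : ℝ) :
    Gop (fun t => c * g t) s = c * Gop g s := by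
  unfold Gop
  rw [← integral_const_mul]
  refine integral_congr_ae (Eventually.of_forall fun t => ?_)
  simp only; ring

lemma Gop_nonneg {g : ℝ → ℝ} (hg : ∀ t, 0 < t → 0 ≤ g t) {s : ℝ} (hs : 0 ≤ s) : 0 ≤ Gop g s :=
  setIntegral_nonneg measurableSet_Ioi fun t ht =>
    mul_nonneg (le_min hs (le_of_lt ht)) (hg t ht)

lemma trunc_lip {p : ℝ} (hp : 0 < p) (x y : ℝ) :
    |(max x 1) ^ (-p) - (max y 1) ^ (-p)| ≤ p * |x - y| := by
  have h := Convex.norm_image_sub_le_of_norm_hasDerivWithin_le (f := fun x : ℝ => x ^ (-p))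
    (f' := fun x => -p * x ^ (-p-1)) (C := p) (s := Ici (1:ℝ)) (x := max y 1) (y := max x 1)
    (fun z hz => (Real.hasDerivAt_rpow_const (Or.inl (by
      have : (1:ℝ) ≤ z := hz
      linarith))).hasDerivWithinAt) (fun z hz => by
      have hz : (1:ℝ) ≤ z := hz
      rw [norm_mul, norm_neg, Real.norm_of_nonneg hp.le,
        Real.norm_of_nonneg (Real.rpow_nonneg (by linarith) _)]
      have : z ^ (-p-1) ≤ 1 := Real.rpow_le_one_of_one_le_of_nonpos hz (by linarith)
      nlinarith) (convex_Ici 1) (mem_Ici.2 (le_max_right _ _)) (mem_Ici.2 (le_max_right _ _))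
  rw [Real.norm_eq_abs, Real.norm_eq_abs] at h
  refine h.trans (mul_le_mul_of_nonneg_left ?_ hp.le)
  exact (abs_max_sub_max_le_max x 1 y 1).trans (by simp)

lemma trunc_le_one {p : ℝ} (hp : 0 < p) (x : ℝ) : (max x 1) ^ (-p) ≤ 1 :=
  Real.rpow_le_one_of_one_le_of_nonpos (le_max_right _ _) (by linarith)

lemma trunc_anti {p : ℝ} (hp : 0 < p) {x y : ℝ} (h : x ≤ y) :
    (max y 1) ^ (-p) ≤ (max x 1) ^ (-p) :=
  Real.rpow_le_rpow_of_nonpos (lt_of_lt_of_le one_pos (le_max_right _ _))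
    (max_le_max_right _ h) (by linarith)

open scoped BoundedContinuousFunction in
lemma exists_pos {p : ℝ} (hp : 0 < p) {ψ : ℝ → ℝ} (hψ : ∀ t, 0 < t → 0 ≤ ψ t)
    (hI : GInt (fun t => (max 1 t) ^ (-p) * ψ t)) {a b : ℝ} (ha : 0 < a) (hb : 0 < b) :
    ∃ w : ℝ → ℝ, Continuous w ∧ GInt (fun t => ψ t * (w t) ^ (-p)) ∧ ∀ s, 0 ≤ s →
      b + a * s ≤ w s ∧ w s = b + a * s + Gop (fun t => ψ t * (w t) ^ (-p)) s := by
  set h : ℝ → ℝ := fun s => b + a * max s 0 with hh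
  have hhc : Continuous h := by fun_prop
  have hhpos : ∀ s, 0 < h s := fun s => by
    have : 0 ≤ max s 0 := le_max_right _ _
    simp only [hh]; positivity
  set c := min a b with hcdef
  have hc : 0 < c := lt_min ha hb
  have hhc1 : ∀ s, c * max 1 (max s 0) ≤ h s := by
    intro s
    have h0 : 0 ≤ max s 0 := le_max_right _ _
    have h1 : c ≤ a := min_le_left _ _
    have h2 : c ≤ b := min_le_right _ _
    simp only [hh]
    rcases le_total 1 (max s 0) with h | h
    · rw [max_eq_right h]; nlinarith
    · rw [max_eq_left h]; nlinarith
  set ρ : ℝ → ℝ := fun t => ψ t * (h t) ^ (-p) with hρdef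
  have hρ0 : ∀ t, 0 < t → 0 ≤ ρ t := fun t ht =>
    mul_nonneg (hψ t ht) (Real.rpow_nonneg (hhpos t).le _)
  have hρ : GInt ρ := by
    have := hI.mul_bdd (k := fun t => (h t / max 1 t) ^ (-p)) (c := c ^ (-p))
      (Measurable.aestronglyMeasurable (by have := hhc.measurable; fun_prop)) (by
        intro t ht
        have h1 : 0 < max 1 t := lt_of_lt_of_le one_pos (le_max_left _ _)
        rw [abs_of_nonneg (Real.rpow_nonneg (div_pos (hhpos t) h1).le _)]
        refine Real.rpow_le_rpow_of_nonpos hc ?_ (by linarith)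
        rw [le_div_iff₀ h1]
        have := hhc1 t
        rwa [max_eq_left ht.le] at this)
    refine this.congr (Eventually.of_forall fun t => ?_)
    have h1 : 0 < max 1 t := lt_of_lt_of_le one_pos (le_max_left _ _)
    simp only [hρdef]
    rw [Real.div_rpow (hhpos t).le h1.le]
    have := Real.rpow_pos_of_pos h1 (-p)
    field_simp
  have hρv : ∀ v : ℝ →ᵇ ℝ, GInt (fun t => ρ t * (max (v t) 1) ^ (-p)) := fun v =>
    hρ.mul_bdd (c := 1) (Measurable.aestronglyMeasurable
      (by have := v.continuous.measurable; fun_prop)) (by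
        intro t _
        rw [abs_of_nonneg (Real.rpow_nonneg (by positivity) _)]
        exact trunc_le_one hp _)
  set I := ∫ t in Ioi (0:ℝ), min 1 t * ρ t with hIdef
  have hI0 : 0 ≤ I := setIntegral_nonneg measurableSet_Ioi fun t ht =>
    mul_nonneg (le_min zero_le_one (le_of_lt ht)) (hρ0 t ht)
  -- general bound
  have hbd : ∀ (g : ℝ → ℝ) (K : ℝ), 0 ≤ K → (∀ t, 0 < t → |g t| ≤ K * ρ t) → ∀ s,
      |Gop g (max s 0) / h s| ≤ K * I / c := by
    intro g K hK0 hK s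
    have h1 := Gop_abs_le hρ hK (le_max_right s 0)
    rw [abs_div, abs_of_pos (hhpos s), div_le_div_iff₀ (hhpos s) hc]
    have h2 := hhc1 s
    calc |Gop g (max s 0)| * c ≤ max 1 (max s 0) * (K * I) * c := by gcongr
      _ = K * I * (c * max 1 (max s 0)) := by ring
      _ ≤ K * I * h s := by gcongr
  let A : (ℝ →ᵇ ℝ) → (ℝ →ᵇ ℝ) := fun v => BoundedContinuousFunction.ofNormedAddCommGroup
    (fun s => Gop (fun t => ρ t * (max (v t) 1) ^ (-p)) (max s 0) / h s)
    ((hρv v).cont.div hhc fun s => (hhpos s).ne') (1 * I / c) (fun s => by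
      refine hbd _ 1 zero_le_one (fun t ht => ?_) s
      rw [abs_mul, abs_of_nonneg (hρ0 t ht), abs_of_nonneg (Real.rpow_nonneg (by positivity) _),
        one_mul]
      exact mul_le_of_le_one_right (hρ0 t ht) (trunc_le_one hp _))
  have hA : ∀ v s, A v s = Gop (fun t => ρ t * (max (v t) 1) ^ (-p)) (max s 0) / h s :=
    fun v s => rfl
  have hAsub : ∀ v v' s, A v s - A v' s = Gop (fun t => ρ t * (max (v t) 1) ^ (-p) -
      ρ t * (max (v' t) 1) ^ (-p)) (max s 0) / h s := by
    intro v v' s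
    rw [hA, hA, Gop_sub (hρv v) (hρv v') (le_max_right _ _)]
    ring
  have hnn : ∀ v v' : ℝ →ᵇ ℝ, ∀ s, |v s - v' s| ≤ ‖v - v'‖ := fun v v' s => by
    have := (v - v').norm_coe_le_norm s
    simpa using this
  have half : ∀ l : ℝ, 0 ≤ l → l ≤ 1 → ∀ v v' : ℝ →ᵇ ℝ, ∀ s,
      l * (A v s - A v' s) ≤ ‖(v - l • A v) - (v' - l • A v')‖ := by
    intro l hl0 hl1 v v' s
    set δ := ‖(v - l • A v) - (v' - l • A v')‖ with hδ
    have hδ0 : 0 ≤ δ := norm_nonneg _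
    have hg := ((hρv v).sub (hρv v')).const_mul l
    have hmp := hg.max_principle (c0 := δ * b) (c1 := δ * a) (by positivity) (by positivity) (by
      intro s hs hlt
      have h1 := hAsub v v' s
      have hs' : h s = b + a * s := by simp only [hh, max_eq_left hs.le]
      rw [max_eq_left hs.le, eq_div_iff (hhpos s).ne', hs'] at h1
      rw [Gop_const_mul, ← h1] at hlt
      have h2 : δ < l * (A v s - A v' s) := by
        have h3 : 0 < b + a * s := hs' ▸ hhpos s
        by_contra! h4
        nlinarith
      have h5 := (abs_le.1 (hnn (v - l • A v) (v' - l • A v') s)).1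
      simp only [BoundedContinuousFunction.sub_apply, BoundedContinuousFunction.smul_apply,
        smul_eq_mul] at h5
      rw [← hδ] at h5
      have h6 : v' s ≤ v s := by nlinarith
      have h7 := mul_le_mul_of_nonneg_left (trunc_anti hp h6) (hρ0 s hs)
      nlinarith)
    have h8 := hmp (max s 0) (le_max_right _ _)
    rw [Gop_const_mul] at h8
    rw [hAsub, ← mul_div_assoc, div_le_iff₀ (hhpos s)]
    calc _ ≤ _ := h8
      _ = _ := by simp only [hh]; ring
  obtain ⟨v, hv⟩ := continuation A (p * I / c) 2 (by positivity) (by positivity) (by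
    intro v v'
    rw [BoundedContinuousFunction.norm_le (by positivity)]
    intro s
    rw [BoundedContinuousFunction.sub_apply, hAsub, Real.norm_eq_abs]
    have := hbd (fun t => ρ t * (max (v t) 1) ^ (-p) - ρ t * (max (v' t) 1) ^ (-p))
      (p * ‖v - v'‖) (by positivity) (by
        intro t ht
        rw [← mul_sub, abs_mul, abs_of_nonneg (hρ0 t ht), mul_comm]
        refine mul_le_mul_of_nonneg_right ?_ (hρ0 t ht)
        refine (trunc_lip hp _ _).trans ?_
        exact mul_le_mul_of_nonneg_left (hnn v v' t) hp.le) s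
    calc _ ≤ _ := this
      _ = _ := by ring) (by
    intro l hl0 hl1 v v'
    rw [BoundedContinuousFunction.norm_le (by positivity)]
    intro s
    have h1 := half l hl0 hl1 v v' s
    have h2 := half l hl0 hl1 v' v s
    rw [norm_sub_rev] at h2
    have h5 := hnn (v - l • A v) (v' - l • A v') s
    simp only [BoundedContinuousFunction.sub_apply, BoundedContinuousFunction.smul_apply,
        smul_eq_mul] at h5
    have h6 := abs_le.1 h5
    rw [BoundedContinuousFunction.sub_apply, Real.norm_eq_abs, abs_le]
    constructor <;> linarith [h6.1, h6.2]) (1 : ℝ →ᵇ ℝ)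
  have hv1 : ∀ s, v s = 1 + A v s := by
    intro s
    have := DFunLike.congr_fun hv s
    simp only [BoundedContinuousFunction.sub_apply, BoundedContinuousFunction.coe_one,
      Pi.one_apply] at this
    linarith
  have hAv0 : ∀ s, 0 ≤ A v s := fun s => by
    rw [hA]
    exact div_nonneg (Gop_nonneg (fun t ht => mul_nonneg (hρ0 t ht)
      (Real.rpow_nonneg (by positivity) _)) (le_max_right _ _)) (hhpos s).le
  have hv1' : ∀ s, 1 ≤ v s := fun s => by linarith [hv1 s, hAv0 s]
  have heq : (fun t => ψ t * (h t * v t) ^ (-p)) = fun t => ρ t * (max (v t) 1) ^ (-p) := by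
    funext t
    rw [max_eq_left (hv1' t), Real.mul_rpow (hhpos t).le (by linarith [hv1' t])]
    simp only [hρdef]; ring
  refine ⟨fun s => h s * v s, hhc.mul v.continuous, ?_, ?_⟩
  · simp only [heq]; exact hρv v
  · intro s hs
    simp only [heq]
    have hs' : h s = b + a * s := by simp only [hh, max_eq_left hs]
    have h1 := hv1 s
    rw [hA, max_eq_left hs] at h1
    have h2 := hv1' s
    have h3 := hhpos s
    constructor
    · rw [← hs']; nlinarith
    · rw [h1, ← hs']; field_simp

lemma mono_conv {μ : Measure ℝ} {f : ℕ → ℝ → ℝ} {F : ℝ → ℝ} (hf : ∀ n, Integrable (f n) μ)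
    (h0 : ∀ᵐ x ∂μ, ∀ n, 0 ≤ f n x) (hm : ∀ᵐ x ∂μ, Monotone fun n => f n x)
    (ht : ∀ᵐ x ∂μ, Tendsto (fun n => f n x) atTop (nhds (F x))) {I : ℝ}
    (hI : Tendsto (fun n => ∫ x, f n x ∂μ) atTop (nhds I)) :
    Integrable F μ ∧ ∫ x, F x ∂μ = I := by
  have hF : AEStronglyMeasurable F μ :=
    aestronglyMeasurable_of_tendsto_ae atTop (fun n => (hf n).1) ht
  have hF0 : 0 ≤ᵐ[μ] F := by
    filter_upwards [h0, ht] with x hx hx2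
    exact ge_of_tendsto' hx2 hx
  have h00 : ∀ n, 0 ≤ᵐ[μ] f n := fun n => by
    filter_upwards [h0] with x hx using hx n
  have hI0 : 0 ≤ I := ge_of_tendsto' hI fun n => integral_nonneg_of_ae (h00 n)
  have h1 := lintegral_tendsto_of_tendsto_of_monotone (μ := μ)
    (f := fun n x => ENNReal.ofReal (f n x)) (F := fun x => ENNReal.ofReal (F x))
    (fun n => (hf n).1.aemeasurable.ennreal_ofReal)
    (by filter_upwards [hm] with x hx i j hij using ENNReal.ofReal_le_ofReal (hx hij))
    (by filter_upwards [ht] with x hx using (ENNReal.continuous_ofReal.tendsto _).comp hx)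
  have h2 : Tendsto (fun n => ∫⁻ x, ENNReal.ofReal (f n x) ∂μ) atTop (nhds (ENNReal.ofReal I)) := by
    refine ((ENNReal.continuous_ofReal.tendsto _).comp hI).congr fun n => ?_
    exact ofReal_integral_eq_lintegral_ofReal (hf n) (h00 n)
  have h3 := tendsto_nhds_unique h1 h2
  refine ⟨⟨hF, ?_⟩, ?_⟩
  · rw [hasFiniteIntegral_iff_ofReal hF0, h3]; exact ENNReal.ofReal_lt_top
  · rw [integral_eq_lintegral_of_nonneg_ae hF0 hF, h3, ENNReal.toReal_ofReal hI0]

/-- Being a solution of the integral equation. -/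
def ISol (p : ℝ) (ψ : ℝ → ℝ) (a b : ℝ) (w : ℝ → ℝ) : Prop :=
  GInt (fun t => ψ t * (w t) ^ (-p)) ∧ ∀ s, 0 < s →
    0 < w s ∧ w s = b + a * s + Gop (fun t => ψ t * (w t) ^ (-p)) s

lemma ISol.comparison {p : ℝ} (hp : 0 < p) {ψ : ℝ → ℝ} (hψ : ∀ t, 0 < t → 0 < ψ t)
    {a₁ b₁ a₂ b₂ : ℝ} (ha : a₁ ≤ a₂) (hb : b₁ ≤ b₂) {w₁ w₂ : ℝ → ℝ}
    (h₁ : ISol p ψ a₁ b₁ w₁) (h₂ : ISol p ψ a₂ b₂ w₂) : ∀ s, 0 < s → w₁ s ≤ w₂ s := by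
  have key := (h₁.1.sub h₂.1).max_principle (c0 := b₂ - b₁) (c1 := a₂ - a₁) (by linarith)
    (by linarith) (by
      intro s hs hlt
      rw [Gop_sub h₁.1 h₂.1 hs.le] at hlt
      have h3 := (h₁.2 s hs).2
      have h4 := (h₂.2 s hs).2
      have h5 : w₂ s ≤ w₁ s := by nlinarith
      have h6 := Real.rpow_le_rpow_of_nonpos (h₂.2 s hs).1 h5 (show -p ≤ 0 by linarith)
      have := mul_le_mul_of_nonneg_left h6 (hψ s hs).le
      linarith)
  intro s hs
  have h := key s hs.le
  rw [Gop_sub h₁.1 h₂.1 hs.le] at h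
  have h3 := (h₁.2 s hs).2
  have h4 := (h₂.2 s hs).2
  nlinarith

lemma Gop_pos {g : ℝ → ℝ} (hg : GInt g) (h0 : ∀ t, 0 < t → 0 < g t) {s : ℝ} (hs : 0 < s) :
    0 < Gop g s := by
  unfold Gop
  rw [setIntegral_pos_iff_support_of_nonneg_ae _ (hg.int hs.le)]
  · have : Function.support (fun t => min s t * g t) ∩ Ioi 0 = Ioi 0 := by
      refine inter_eq_right.2 fun t ht => ?_
      exact (mul_pos (lt_min hs ht) (h0 t ht)).ne'
    rw [this]; simp
  · filter_upwards [ae_restrict_mem measurableSet_Ioi] with t ht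
    exact (mul_pos (lt_min hs ht) (h0 t ht)).le

lemma exists_ISol {p : ℝ} (hp : 0 < p) {ψ : ℝ → ℝ} (hψ : ∀ t, 0 < t → 0 < ψ t)
    (hI : GInt (fun t => (max 1 t) ^ (-p) * ψ t)) {a b : ℝ} (ha : 0 ≤ a) (hb : 0 ≤ b) :
    ∃ w : ℝ → ℝ, ISol p ψ a b w := by
  have hex : ∀ n : ℕ, ∃ w, ISol p ψ (a + 1/((n:ℝ)+1)) (b + 1/((n:ℝ)+1)) w := by
    intro n
    have hn : (0:ℝ) < 1/((n:ℝ)+1) := by positivity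
    obtain ⟨w, hw1, hw2, hw3⟩ := exists_pos hp (fun t ht => (hψ t ht).le) hI
      (a := a + 1/((n:ℝ)+1)) (b := b + 1/((n:ℝ)+1)) (by linarith) (by linarith)
    refine ⟨w, hw2, fun s hs => ⟨?_, (hw3 s hs.le).2⟩⟩
    have h1 := (hw3 s hs.le).1
    have : 0 < b + 1/((n:ℝ)+1) + (a + 1/((n:ℝ)+1)) * s := by positivity
    linarith
  choose W hW using hex
  have hanti : ∀ s, 0 < s → Antitone fun n => W n s := by
    intro s hs m n hmn
    have h1 : 1/((n:ℝ)+1) ≤ 1/((m:ℝ)+1) := one_div_le_one_div_of_le (by positivity) (by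
      have : (m:ℝ) ≤ n := by exact_mod_cast hmn
      linarith)
    exact ISol.comparison hp hψ (by linarith) (by linarith) (hW n) (hW m) s hs
  have hgm : ∀ s, 0 < s → Monotone fun n => ψ s * (W n s) ^ (-p) := by
    intro s hs m n hmn
    refine mul_le_mul_of_nonneg_left ?_ (hψ s hs).le
    exact Real.rpow_le_rpow_of_nonpos ((hW n).2 s hs).1 (hanti s hs hmn) (by linarith)
  have hg0 : ∀ n s, 0 < s → 0 < ψ s * (W n s) ^ (-p) := fun n s hs =>
    mul_pos (hψ s hs) (Real.rpow_pos_of_pos ((hW n).2 s hs).1 _)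
  set m : ℝ → ℝ := Gop (fun t => ψ t * (W 0 t) ^ (-p)) with hm
  have hmpos : ∀ s, 0 < s → 0 < m s := fun s hs => Gop_pos (hW 0).1 (hg0 0) hs
  have hmle : ∀ n s, 0 < s → m s ≤ W n s := by
    intro n s hs
    rw [((hW n).2 s hs).2]
    have h1 : m s ≤ Gop (fun t => ψ t * (W n t) ^ (-p)) s := by
      refine setIntegral_mono_on ((hW 0).1.int hs.le) ((hW n).1.int hs.le) measurableSet_Ioi ?_
      intro t ht
      exact mul_le_mul_of_nonneg_left (hgm t ht (Nat.zero_le n)) (le_min hs.le (le_of_lt ht))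
    have : 0 ≤ b + 1/((n:ℝ)+1) + (a + 1/((n:ℝ)+1)) * s := by positivity
    linarith
  set w : ℝ → ℝ := fun s => ⨅ n, W n s with hw
  have hlim : ∀ s, 0 < s → Tendsto (fun n => W n s) atTop (nhds (w s)) := fun s hs =>
    tendsto_atTop_ciInf (hanti s hs) ⟨m s, by rintro _ ⟨n, rfl⟩; exact hmle n s hs⟩
  have hwpos : ∀ s, 0 < s → 0 < w s := fun s hs =>
    (hmpos s hs).trans_le (ge_of_tendsto' (hlim s hs) fun n => hmle n s hs)
  have hone : Tendsto (fun n : ℕ => 1/((n:ℝ)+1)) atTop (nhds 0) :=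
    tendsto_one_div_add_atTop_nhds_zero_nat
  have key : ∀ s, 0 < s → IntegrableOn (fun t => min s t * (ψ t * (w t) ^ (-p))) (Ioi 0) ∧
      Gop (fun t => ψ t * (w t) ^ (-p)) s = w s - (b + a * s) := by
    intro s hs
    refine mono_conv (f := fun n t => min s t * (ψ t * (W n t) ^ (-p)))
      (fun n => (hW n).1.int hs.le) ?_ ?_ ?_ ?_
    · filter_upwards [ae_restrict_mem measurableSet_Ioi] with t ht n
      exact mul_nonneg (le_min hs.le (le_of_lt ht)) (hg0 n t ht).le
    · filter_upwards [ae_restrict_mem measurableSet_Ioi] with t ht i j hij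
      exact mul_le_mul_of_nonneg_left (hgm t ht hij) (le_min hs.le (le_of_lt ht))
    · filter_upwards [ae_restrict_mem measurableSet_Ioi] with t ht
      exact (((hlim t ht).rpow_const (Or.inl (hwpos t ht).ne')).const_mul _).const_mul _
    · have h1 : Tendsto (fun n : ℕ => W n s - (b + 1/((n:ℝ)+1) + (a + 1/((n:ℝ)+1)) * s)) atTop
          (nhds (w s - (b + 0 + (a + 0) * s))) :=
        (hlim s hs).sub ((hone.const_add b).add ((hone.const_add a).mul_const s))
      rw [add_zero, add_zero] at h1
      refine h1.congr fun n => ?_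
      have := ((hW n).2 s hs).2
      unfold Gop at this
      linarith
  refine ⟨w, (key 1 one_pos).1, fun s hs => ⟨hwpos s hs, ?_⟩⟩
  linarith [(key s hs).2]

lemma exists_ODE {p : ℝ} (hp : 0 < p) {ψ : ℝ → ℝ} (hψ : ∀ t, 0 < t → 0 < ψ t)
    (hψc : ContinuousOn ψ (Ioi 0))
    (hI : GInt (fun t => (max 1 t) ^ (-p) * ψ t)) {a b : ℝ} (ha : 0 ≤ a) (hb : 0 ≤ b) :
    ∃ w w' : ℝ → ℝ, (∀ s, 0 < s → 0 < w s) ∧ (∀ s, 0 < s → HasDerivAt w (w' s) s) ∧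
      (∀ s, 0 < s → HasDerivAt w' (-(ψ s * (w s) ^ (-p))) s) ∧
      Tendsto w (nhdsWithin 0 (Ioi 0)) (nhds b) ∧
      Tendsto (fun s => w s / s) atTop (nhds a) := by
  obtain ⟨w, hg, hw⟩ := exists_ISol hp hψ hI ha hb
  set g : ℝ → ℝ := fun t => ψ t * (w t) ^ (-p) with hgdef
  have hd : ∀ s, 0 < s → HasDerivAt w (a + ∫ t in Ioi s, g t) s := by
    intro s hs
    have h1 : HasDerivAt (fun s => b + a * s + Gop g s) (a + ∫ t in Ioi s, g t) s := by
      refine HasDerivAt.add ?_ (hg.hasDerivAt hs)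
      have := ((hasDerivAt_id s).const_mul a).const_add b
      simpa using this
    refine h1.congr_of_eventuallyEq ?_
    filter_upwards [Ioi_mem_nhds hs] with x hx using (hw x hx).2
  have hwc : ContinuousOn w (Ioi 0) := fun s hs => (hd s hs).continuousAt.continuousWithinAt
  have hgc : ContinuousOn g (Ioi 0) :=
    hψc.mul (hwc.rpow_const fun s hs => Or.inl (hw s hs).1.ne')
  refine ⟨w, fun s => a + ∫ t in Ioi s, g t, fun s hs => (hw s hs).1, hd, ?_, ?_, ?_⟩
  · intro s hs
    exact (hg.hasDerivAt2 hgc hs).const_add a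
  · have h1 : Continuous fun s => b + a * s + Gop g (max s 0) := by
      have := hg.cont
      fun_prop
    have h2 := (h1.tendsto 0).mono_left (nhdsWithin_le_nhds (s := Ioi 0))
    simp only [max_self, Gop_zero, mul_zero, add_zero] at h2
    refine h2.congr' ?_
    filter_upwards [self_mem_nhdsWithin] with s hs
    rw [(hw s hs).2, max_eq_left (le_of_lt hs)]
  · have h1 : Tendsto (fun s : ℝ => b / s + a + Gop g s / s) atTop (nhds (0 + a + 0)) :=
      ((tendsto_const_nhds.div_atTop tendsto_id).add_const a).add hg.tendsto_div
    rw [zero_add, add_zero] at h1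
    refine h1.congr' ?_
    filter_upwards [eventually_gt_atTop 0] with s hs
    rw [(hw s hs).2]
    field_simp

lemma radial_contDiffOn {N : ℕ} {W W' W'' : ℝ → ℝ} (h1 : ∀ s, 0 < s → HasDerivAt W (W' s) s)
    (h2 : ∀ s, 0 < s → HasDerivAt W' (W'' s) s) (hc : ContinuousOn W'' (Ioi 0)) :
    ContDiffOn ℝ 2 (fun x : EuclideanSpace ℝ (Fin N) => W (‖x‖ ^ 2)) {0}ᶜ := by
  have hW' : ContDiffOn ℝ 1 W' (Ioi 0) := by
    rw [show (1 : WithTop ℕ∞) = 0 + 1 by norm_num, contDiffOn_succ_iff_deriv_of_isOpen isOpen_Ioi]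
    refine ⟨fun s hs => (h2 s hs).differentiableAt.differentiableWithinAt, by simp, ?_⟩
    rw [contDiffOn_zero]
    exact hc.congr fun s hs => (h2 s hs).deriv
  have hW : ContDiffOn ℝ 2 W (Ioi 0) := by
    rw [show (2 : WithTop ℕ∞) = 1 + 1 by norm_num, contDiffOn_succ_iff_deriv_of_isOpen isOpen_Ioi]
    refine ⟨fun s hs => (h1 s hs).differentiableAt.differentiableWithinAt, by simp, ?_⟩
    exact hW'.congr fun s hs => (h1 s hs).deriv
  refine hW.comp (contDiff_norm_sq ℝ).contDiffOn ?_
  intro x hx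
  have : 0 < ‖x‖ := norm_pos_iff.2 hx
  exact mem_Ioi.2 (by positivity)

lemma radial_laplacian {N : ℕ} {W W' W'' : ℝ → ℝ} (h1 : ∀ s, 0 < s → HasDerivAt W (W' s) s)
    (h2 : ∀ s, 0 < s → HasDerivAt W' (W'' s) s) (hc : ContinuousOn W'' (Ioi 0))
    {x : EuclideanSpace ℝ (Fin N)} (hx : x ≠ 0) :
    laplacian (fun x : EuclideanSpace ℝ (Fin N) => W (‖x‖ ^ 2)) x =
      4 * ‖x‖ ^ 2 * W'' (‖x‖ ^ 2) + 2 * N * W' (‖x‖ ^ 2) := by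
  set u : EuclideanSpace ℝ (Fin N) → ℝ := fun x => W (‖x‖ ^ 2) with hu
  have hsq : ∀ y : EuclideanSpace ℝ (Fin N), y ≠ 0 → 0 < ‖y‖ ^ 2 := fun y hy => by
    have : 0 < ‖y‖ := norm_pos_iff.2 hy
    positivity
  have hopen : ({0}ᶜ : Set (EuclideanSpace ℝ (Fin N))) ∈ nhds x :=
    isOpen_compl_singleton.mem_nhds hx
  have hfd : ∀ y, y ≠ 0 → ∀ e, fderiv ℝ u y e = W' (‖y‖ ^ 2) * (2 * inner ℝ y e) := by
    intro y hy e
    have := (h1 _ (hsq y hy)).comp_hasFDerivAt y (hasStrictFDerivAt_norm_sq y).hasFDerivAt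
    rw [show fderiv ℝ u y = _ from this.fderiv]
    simp
  have hdiff : DifferentiableAt ℝ (fderiv ℝ u) x := by
    have h3 : ContDiffAt ℝ 2 u x := (radial_contDiffOn h1 h2 hc).contDiffAt hopen
    exact (h3.fderiv_right (m := 1) (by norm_num)).differentiableAt (by norm_num)
  have hsec : ∀ e, iteratedFDeriv ℝ 2 u x ![e, e] =
      4 * W'' (‖x‖ ^ 2) * (inner ℝ x e) ^ 2 + 2 * W' (‖x‖ ^ 2) * inner ℝ e e := by
    intro e
    rw [iteratedFDeriv_two_apply]
    simp only [Matrix.cons_val_zero, Matrix.cons_val_one]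
    have h4 : fderiv ℝ (fun y => fderiv ℝ u y e) x e = fderiv ℝ (fderiv ℝ u) x e e := by
      rw [fderiv_clm_apply hdiff (differentiableAt_const e)]
      simp
    rw [← h4]
    have h5 : (fun y => fderiv ℝ u y e) =ᶠ[nhds x] fun y => W' (‖y‖ ^ 2) * (2 * inner ℝ y e) := by
      filter_upwards [hopen] with y hy using hfd y hy e
    rw [h5.fderiv_eq]
    have h6 := (h2 _ (hsq x hx)).comp_hasFDerivAt x (hasStrictFDerivAt_norm_sq x).hasFDerivAt
    have h7 : HasFDerivAt (fun y : EuclideanSpace ℝ (Fin N) => (2:ℝ) * inner ℝ y e)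
        ((2:ℝ) • innerSL ℝ e) x := by
      have := ((innerSL ℝ e).hasFDerivAt (x := x)).const_mul (2:ℝ)
      refine this.congr_of_eventuallyEq (Eventually.of_forall fun y => ?_)
      simp [real_inner_comm]
    rw [show fderiv ℝ (fun y => W' (‖y‖ ^ 2) * (2 * inner ℝ y e)) x = _ from (h6.mul h7).fderiv]
    simp
    ring
  unfold laplacian
  simp only [hsec]
  rw [Finset.sum_add_distrib, ← Finset.mul_sum]
  have h8 : ∑ i, (inner ℝ x (EuclideanSpace.single i (1:ℝ))) ^ 2 = ‖x‖ ^ 2 := by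
    rw [EuclideanSpace.real_norm_sq_eq]
    simp [EuclideanSpace.inner_single_right]
  rw [h8]
  simp
  ring

lemma hold_cont {γ : NNReal} (hγ0 : 0 < γ) {φ : ℝ → ℝ}
    (hφhold : ∀ s : Set ℝ, IsCompact s → s ⊆ Ioi (0:ℝ) → ∃ C : NNReal, HolderOnWith C γ φ s) :
    ContinuousOn φ (Ioi 0) := by
  intro x hx
  have hx : 0 < x := hx
  obtain ⟨C, hC⟩ := hφhold (Icc (x/2) (2*x)) isCompact_Icc (fun y hy =>
    lt_of_lt_of_le (by linarith) hy.1)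
  exact ((hC.continuousOn hγ0).continuousAt
    (Icc_mem_nhds (by linarith) (by linarith))).continuousWithinAt

lemma psi_GInt {k M p α β c₂ : ℝ} (hk : 0 < k) (hM : M = 2 * k + 2) (hp : 0 < p)
    (h1 : 0 < k + 2 + α + p * k) (hβ2 : β < -2) {φ : ℝ → ℝ}
    (hφpos : ∀ r : ℝ, 0 < r → 0 < φ r) (hφc : ContinuousOn φ (Ioi 0))
    (hα : ∀ r : ℝ, 0 < r → r < 1 → φ r ≤ c₂ * r ^ α)
    (hβ : ∀ r : ℝ, 1 < r → φ r ≤ c₂ * r ^ β) :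
    ContinuousOn (fun s : ℝ => φ (s ^ (-1/k)) * (s ^ (-1/k)) ^ M / k ^ 2) (Ioi 0) ∧
    GInt (fun t => (max 1 t) ^ (-p) * (φ (t ^ (-1/k)) * (t ^ (-1/k)) ^ M / k ^ 2)) := by
  have hrc : ContinuousOn (fun s : ℝ => s ^ (-1/k)) (Ioi 0) :=
    continuousOn_id.rpow_const fun s hs => Or.inl (ne_of_gt hs)
  have hrpos : ∀ s : ℝ, 0 < s → 0 < s ^ (-1/k) := fun s hs => Real.rpow_pos_of_pos hs _
  have hψc : ContinuousOn (fun s : ℝ => φ (s ^ (-1/k)) * (s ^ (-1/k)) ^ M / k ^ 2) (Ioi 0) :=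
    ((hφc.comp hrc fun s hs => hrpos s hs).mul
      (hrc.rpow_const fun s hs => Or.inl (hrpos s hs).ne')).div_const _
  refine ⟨hψc, ?_⟩
  set F : ℝ → ℝ := fun t => min 1 t *
    ((max 1 t) ^ (-p) * (φ (t ^ (-1/k)) * (t ^ (-1/k)) ^ M / k ^ 2)) with hF
  have hFc : ContinuousOn F (Ioi 0) := by
    refine ContinuousOn.mul (by fun_prop) (ContinuousOn.mul ?_ hψc)
    refine ContinuousOn.rpow_const (by fun_prop) fun s _ => Or.inl ?_
    exact (lt_of_lt_of_le one_pos (le_max_left 1 s)).ne'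
  have hF0 : ∀ t, 0 < t → 0 ≤ F t := fun t ht => by
    have := hφpos _ (hrpos t ht)
    have := hrpos t ht
    have : 0 < min 1 t := lt_min one_pos ht
    have : 0 < max 1 t := lt_max_of_lt_left one_pos
    simp only [hF]; positivity
  have hpow : ∀ t e : ℝ, 0 < t → (t ^ (-1/k)) ^ e * (t ^ (-1/k)) ^ M = t ^ (-(e + M)/k) := by
    intro t e ht
    rw [← Real.rpow_add (hrpos t ht), ← Real.rpow_mul ht.le]
    congr 1; ring
  have hA : IntegrableOn F (Ioo 0 1) := by
    have hi : IntegrableOn (fun t : ℝ => c₂ / k ^ 2 * t ^ (1 + -(β + M)/k)) (Ioo 0 1) := by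
      refine Integrable.const_mul ?_ _
      refine (intervalIntegral.integrableOn_Ioo_rpow_iff one_pos).2 ?_
      have : -2 < -(β+M)/k := by
        rw [lt_div_iff₀ hk]; linarith
      linarith
    refine Integrable.mono' hi ((hFc.mono fun t ht => ht.1).aestronglyMeasurable
      measurableSet_Ioo) ?_
    filter_upwards [ae_restrict_mem measurableSet_Ioo] with t ht
    have ht0 : 0 < t := ht.1
    rw [Real.norm_of_nonneg (hF0 t ht0)]
    have hr : 1 < t ^ (-1/k) := Real.one_lt_rpow_of_pos_of_lt_one_of_neg ht0 ht.2
      (div_neg_of_neg_of_pos (by norm_num) hk)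
    simp only [hF]
    rw [min_eq_right ht.2.le, max_eq_left ht.2.le, Real.one_rpow, one_mul, Real.rpow_add ht0,
      Real.rpow_one, ← hpow t β ht0]
    have h2 := hβ _ hr
    have h3 : 0 < (t ^ (-1/k)) ^ M := Real.rpow_pos_of_pos (hrpos t ht0) _
    calc t * (φ (t ^ (-1/k)) * (t ^ (-1/k)) ^ M / k ^ 2)
        ≤ t * ((c₂ * (t ^ (-1/k)) ^ β) * (t ^ (-1/k)) ^ M / k ^ 2) := by gcongr
      _ = _ := by ring
  have hB : IntegrableOn F (Ici 1) := by
    rw [integrableOn_Ici_iff_integrableOn_Ioi]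
    have hi : IntegrableOn (fun t : ℝ => c₂ / k ^ 2 * t ^ (-p + -(α + M)/k)) (Ioi 1) := by
      refine Integrable.const_mul ?_ _
      refine integrableOn_Ioi_rpow_of_lt ?_ one_pos
      have : -(α+M)/k < p - 1 := by
        rw [div_lt_iff₀ hk]; linarith
      linarith
    refine Integrable.mono' hi ((hFc.mono (Ioi_subset_Ioi (zero_le_one (α := ℝ)))).aestronglyMeasurable
      measurableSet_Ioi) ?_
    filter_upwards [ae_restrict_mem measurableSet_Ioi] with t ht
    have ht : 1 < t := ht
    have ht0 : 0 < t := by linarith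
    rw [Real.norm_of_nonneg (hF0 t ht0)]
    have hr : t ^ (-1/k) < 1 := Real.rpow_lt_one_of_one_lt_of_neg ht
      (div_neg_of_neg_of_pos (by norm_num) hk)
    simp only [hF]
    rw [min_eq_left ht.le, max_eq_right ht.le, one_mul, Real.rpow_add ht0, ← hpow t α ht0]
    have h2 := hα _ (hrpos t ht0) hr
    have h3 : 0 < (t ^ (-1/k)) ^ M := Real.rpow_pos_of_pos (hrpos t ht0) _
    have h4 : 0 < t ^ (-p) := Real.rpow_pos_of_pos ht0 _
    calc t ^ (-p) * (φ (t ^ (-1/k)) * (t ^ (-1/k)) ^ M / k ^ 2)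
        ≤ t ^ (-p) * ((c₂ * (t ^ (-1/k)) ^ α) * (t ^ (-1/k)) ^ M / k ^ 2) := by gcongr
      _ = _ := by ring
  have := hA.union hB
  rwa [Ioo_union_Ici_eq_Ioi one_pos] at this

theorem statement_14 {N : ℕ} (hN : 3 ≤ N) (p : ℝ) (hp : 0 < p) (α β : ℝ)
    (haabb : 0 < (N:ℝ) + α + p * ((N:ℝ) - 2)) (hβ2 : β < -2)
    (γ : NNReal) (hγ0 : 0 < γ) (hγ1 : γ < 1) (φ : ℝ → ℝ)
    (hφpos : ∀ r : ℝ, 0 < r → 0 < φ r)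
    (hφhold : ∀ s : Set ℝ, IsCompact s → s ⊆ Ioi (0:ℝ) → ∃ C : NNReal, HolderOnWith C γ φ s)
    (c₁ c₂ : ℝ) (hc₁ : 0 < c₁) (hc₂ : 0 < c₂)
    (hα : ∀ r : ℝ, 0 < r → r < 1 → c₁ * r ^ α ≤ φ r ∧ φ r ≤ c₂ * r ^ α)
    (hβ : ∀ r : ℝ, 1 < r → c₁ * r ^ β ≤ φ r ∧ φ r ≤ c₂ * r ^ β) :
    ∀ a b : ℝ, 0 ≤ a → 0 ≤ b →
      ∃ u : EuclideanSpace ℝ (Fin N) → ℝ, IsSol φ p u ∧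
        (∀ x y : EuclideanSpace ℝ (Fin N), x ≠ 0 → y ≠ 0 → ‖x‖ = ‖y‖ → u x = u y) ∧
        Tendsto (fun x : EuclideanSpace ℝ (Fin N) => ‖x‖ ^ ((N:ℝ) - 2) * u x)
          (nhdsWithin (0 : EuclideanSpace ℝ (Fin N)) {0}ᶜ) (nhds a) ∧
        Tendsto u (Filter.cocompact (EuclideanSpace ℝ (Fin N))) (nhds b) := by
  intro a b ha hb
  have hφc := hold_cont hγ0 hφhold
  obtain ⟨k, hk⟩ : ∃ k : ℝ, k = (N:ℝ) - 2 := ⟨_, rfl⟩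
  have hk0 : 0 < k := by
    have : (3:ℝ) ≤ N := by exact_mod_cast hN
    linarith
  have hNk : (N:ℝ) = k + 2 := by linarith
  rw [← hk]
  obtain ⟨hψc, hGI⟩ := psi_GInt (M := 2 * k + 2) (c₂ := c₂) hk0 rfl hp
    (by rw [← hk, hNk] at haabb; linarith) hβ2 hφpos hφc (fun r h1 h2 => (hα r h1 h2).2)
    (fun r h => (hβ r h).2)
  set ψ : ℝ → ℝ := fun s : ℝ => φ (s ^ (-1/k)) * (s ^ (-1/k)) ^ (2 * k + 2) / k ^ 2 with hψdef
  have hψpos : ∀ t, 0 < t → 0 < ψ t := fun t ht => by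
    have h1 := Real.rpow_pos_of_pos ht (-1/k)
    have := hφpos _ h1
    simp only [hψdef]; positivity
  obtain ⟨w, w', hwpos, hw1, hw2, hwb, hwa⟩ := exists_ODE hp hψpos hψc hGI ha hb
  -- change of variables
  have hS : ∀ ρ : ℝ, 0 < ρ → 0 < ρ ^ (-(k/2)) := fun ρ h => Real.rpow_pos_of_pos h _
  have hSd : ∀ ρ : ℝ, 0 < ρ → HasDerivAt (fun ρ : ℝ => ρ ^ (-(k/2)))
      (-(k/2) * ρ ^ (-(k/2) - 1)) ρ := fun ρ h => Real.hasDerivAt_rpow_const (Or.inl h.ne')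
  have hSd2 : ∀ ρ : ℝ, 0 < ρ → HasDerivAt (fun ρ : ℝ => -(k/2) * ρ ^ (-(k/2) - 1))
      (-(k/2) * ((-(k/2) - 1) * ρ ^ (-(k/2) - 1 - 1))) ρ := fun ρ h =>
    (Real.hasDerivAt_rpow_const (Or.inl h.ne')).const_mul _
  set G : ℝ → ℝ := fun s => -(ψ s * (w s) ^ (-p)) with hG
  have hGc : ContinuousOn G (Ioi 0) := by
    have hwc : ContinuousOn w (Ioi 0) := fun s hs => (hw1 s hs).continuousAt.continuousWithinAt
    exact (hψc.mul (hwc.rpow_const fun s hs => Or.inl (hwpos s hs).ne')).neg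
  set W : ℝ → ℝ := fun ρ => w (ρ ^ (-(k/2))) with hW
  set W' : ℝ → ℝ := fun ρ => w' (ρ ^ (-(k/2))) * (-(k/2) * ρ ^ (-(k/2) - 1)) with hW'
  set W'' : ℝ → ℝ := fun ρ => (G (ρ ^ (-(k/2))) * (-(k/2) * ρ ^ (-(k/2) - 1))) *
    (-(k/2) * ρ ^ (-(k/2) - 1)) + w' (ρ ^ (-(k/2))) *
    (-(k/2) * ((-(k/2) - 1) * ρ ^ (-(k/2) - 1 - 1))) with hW''
  have hd1 : ∀ ρ, 0 < ρ → HasDerivAt W (W' ρ) ρ := fun ρ h =>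
    (hw1 _ (hS ρ h)).comp ρ (hSd ρ h)
  have hd2 : ∀ ρ, 0 < ρ → HasDerivAt W' (W'' ρ) ρ := fun ρ h =>
    ((hw2 _ (hS ρ h)).comp ρ (hSd ρ h)).mul (hSd2 ρ h)
  have hcW : ContinuousOn W'' (Ioi 0) := by
    have hpc : ∀ e : ℝ, ContinuousOn (fun ρ : ℝ => ρ ^ e) (Ioi 0) := fun e =>
      continuousOn_id.rpow_const fun s hs => Or.inl (ne_of_gt hs)
    have hw'c : ContinuousOn w' (Ioi 0) := fun s hs => (hw2 s hs).continuousAt.continuousWithinAt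
    have c1 := hGc.comp (hpc (-(k/2))) fun ρ h => hS ρ h
    have c2 := hw'c.comp (hpc (-(k/2))) fun ρ h => hS ρ h
    have c3 := hpc (-(k/2) - 1)
    have c4 := hpc (-(k/2) - 1 - 1)
    exact ((c1.mul (c3.const_mul _)).mul (c3.const_mul _)).add
      (c2.mul ((c4.const_mul _).const_mul _))
  have hnpow : ∀ x : EuclideanSpace ℝ (Fin N), (‖x‖ ^ 2) ^ (-(k/2)) = ‖x‖ ^ (-k) := by
    intro x
    rw [← Real.rpow_natCast, ← Real.rpow_mul (norm_nonneg x)]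
    congr 1; push_cast; ring
  refine ⟨fun x => W (‖x‖ ^ 2), ⟨radial_contDiffOn hd1 hd2 hcW, fun x hx => ?_⟩, ?_, ?_, ?_⟩
  · have hr : 0 < ‖x‖ := norm_pos_iff.2 hx
    have hr2 : 0 < ‖x‖ ^ 2 := by positivity
    refine ⟨hwpos _ (hS _ hr2), ?_⟩
    rw [radial_laplacian hd1 hd2 hcW hx]
    set r := ‖x‖ with hrdef
    obtain ⟨ρ, hρ⟩ : ∃ ρ, ρ = r ^ 2 := ⟨_, rfl⟩
    have hρ0 : 0 < ρ := hρ ▸ hr2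
    have e1 : ρ * ρ ^ (-(k/2) - 1 - 1) = ρ ^ (-(k/2) - 1) := by
      nth_rewrite 1 [← Real.rpow_one ρ]
      rw [← Real.rpow_add hρ0]; congr 1; ring
    have e2 : (ρ ^ (-(k/2))) ^ (-1/k) = r := by
      rw [hρ, hnpow x, ← hrdef, ← Real.rpow_mul hr.le]
      rw [show -k * (-1/k) = 1 by field_simp, Real.rpow_one]
    have e3 : ρ * ρ ^ (-(k/2) - 1) * ρ ^ (-(k/2) - 1) * r ^ (2 * k + 2) = 1 := by
      have : r ^ (2 * k + 2) = ρ ^ (k + 1) := by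
        rw [hρ, ← Real.rpow_natCast, ← Real.rpow_mul hr.le]
        congr 1; push_cast; ring
      rw [this]
      nth_rewrite 1 [← Real.rpow_one ρ]
      rw [← Real.rpow_add hρ0, ← Real.rpow_add hρ0, ← Real.rpow_add hρ0]
      rw [show 1 + (-(k/2) - 1) + (-(k/2) - 1) + (k + 1) = 0 by ring, Real.rpow_zero]
    change _ = φ r * W (r ^ 2) ^ (-p)
    rw [← hρ]
    simp only [hW, hW', hW'', hG, hψdef]
    rw [e2, hNk]
    set P := ρ ^ (-(k/2) - 1)
    set Q := ρ ^ (-(k/2) - 1 - 1)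
    set R := r ^ (2 * k + 2)
    set Y := w (ρ ^ (-(k/2))) ^ (-p)
    set V := w' (ρ ^ (-(k/2)))
    have e4 : φ r * R / k ^ 2 * Y * k ^ 2 = φ r * R * Y := by field_simp
    linear_combination (ρ * P * P) * e4 + φ r * Y * e3 - V * k * (k + 2) * e1
  · intro x y _ _ hxy
    simp only [hxy]
  · have hlim : Tendsto (fun x : EuclideanSpace ℝ (Fin N) => ‖x‖ ^ (-k))
        (nhdsWithin 0 {0}ᶜ) atTop :=
      (tendsto_rpow_neg_nhdsGT_zero (by linarith)).comp tendsto_norm_nhdsNE_zero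
    refine (hwa.comp hlim).congr' ?_
    filter_upwards [self_mem_nhdsWithin] with x hx
    have hr : 0 < ‖x‖ := norm_pos_iff.2 hx
    simp only [Function.comp, hW]
    rw [hnpow x, Real.rpow_neg hr.le, div_inv_eq_mul, mul_comm]
  · have hlim : Tendsto (fun x : EuclideanSpace ℝ (Fin N) => ‖x‖ ^ (-k))
        (cocompact _) (nhdsWithin 0 (Ioi 0)) := by
      rw [tendsto_nhdsWithin_iff]
      refine ⟨(tendsto_rpow_neg_atTop hk0).comp (tendsto_norm_cocompact_atTop), ?_⟩
      have : {(0 : EuclideanSpace ℝ (Fin N))}ᶜ ∈ cocompact (EuclideanSpace ℝ (Fin N)) :=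
        isCompact_singleton.compl_mem_cocompact
      filter_upwards [this] with x hx
      exact Real.rpow_pos_of_pos (norm_pos_iff.2 hx) _
    refine (hwb.comp hlim).congr fun x => ?_
    simp only [Function.comp, hW]
    rw [hnpow x]
end

section
/- Let N ≥ 3, p > 0, α, β ∈ ℝ with N + α + p(N−2) > 0 and β < −2, γ ∈ (0,1), and let φ : (0,∞) → (0,∞) be locally γ-Hölder continuous and satisfy, for some constants c₁, c₂ > 0: c₁ r^α ≤ φ(r) ≤ c₂ r^α for all 0 < r < 1, and c₁ r^β ≤ φ(r) ≤ c₂ r^β for all r > 1. Then every C² positive solution u of −Δu = φ(|x|) u^{−p} on ℝ^N \ {0} is radially symmetric, the limits a := lim_{|x|→0} |x|^{N−2} u(x) and b := lim_{|x|→∞} u(x) exist and are finite nonnegative real numbers, and any two C² positive solutions having the same pair of limits (a,b) are identical. -/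
open Metric Set MeasureTheory Filter

/-! ### Part 1: the Laplacian -/

theorem lap_eq {N : ℕ} (u : EuclideanSpace ℝ (Fin N) → ℝ) :
    laplacian u = (Laplacian.laplacian u : EuclideanSpace ℝ (Fin N) → ℝ) := by
  rw [InnerProductSpace.laplacian_eq_iteratedFDeriv_orthonormalBasis u
    (EuclideanSpace.basisFun (Fin N) ℝ)]
  funext x
  simp [laplacian]

theorem lap_add {N : ℕ} {u v : EuclideanSpace ℝ (Fin N) → ℝ} {x : EuclideanSpace ℝ (Fin N)}
    (hu : ContDiffAt ℝ 2 u x) (hv : ContDiffAt ℝ 2 v x) :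
    laplacian (fun y => u y + v y) x = laplacian u x + laplacian v x := by
  simp only [lap_eq]
  exact hu.laplacian_add hv

theorem lap_sub {N : ℕ} {u v : EuclideanSpace ℝ (Fin N) → ℝ} {x : EuclideanSpace ℝ (Fin N)}
    (hu : ContDiffAt ℝ 2 u x) (hv : ContDiffAt ℝ 2 v x) :
    laplacian (fun y => u y - v y) x = laplacian u x - laplacian v x := by
  simp only [lap_eq]
  exact hu.laplacian_sub hv

theorem lap_mul {N : ℕ} {u : EuclideanSpace ℝ (Fin N) → ℝ} {x : EuclideanSpace ℝ (Fin N)}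
    (c : ℝ) (hu : ContDiffAt ℝ 2 u x) :
    laplacian (fun y => c * u y) x = c * laplacian u x := by
  simp only [lap_eq]
  exact InnerProductSpace.laplacian_smul c hu

theorem lap_const {N : ℕ} (c : ℝ) (x : EuclideanSpace ℝ (Fin N)) :
    laplacian (fun _ => c) x = 0 := by
  simp only [lap_eq]
  simp

theorem lap_congr {N : ℕ} {u v : EuclideanSpace ℝ (Fin N) → ℝ} {x : EuclideanSpace ℝ (Fin N)}
    (h : u =ᶠ[nhds x] v) : laplacian u x = laplacian v x := by
  simp only [lap_eq]
  exact (InnerProductSpace.laplacian_congr_nhds h).eq_of_nhds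

theorem lap_rot {N : ℕ} (R : EuclideanSpace ℝ (Fin N) ≃ₗᵢ[ℝ] EuclideanSpace ℝ (Fin N))
    (u : EuclideanSpace ℝ (Fin N) → ℝ) (x : EuclideanSpace ℝ (Fin N)) :
    laplacian (fun y => u (R y)) x = laplacian u (R x) := by
  rw [lap_eq u, InnerProductSpace.laplacian_eq_iteratedFDeriv_orthonormalBasis u
    ((EuclideanSpace.basisFun (Fin N) ℝ).map R)]
  unfold laplacian
  refine Finset.sum_congr rfl fun i _ => ?_
  have h := ContinuousLinearEquiv.iteratedFDerivWithin_comp_right (𝕜 := ℝ)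
    R.toContinuousLinearEquiv u uniqueDiffOn_univ (x := x) (mem_univ _) 2
  rw [preimage_univ, iteratedFDerivWithin_univ, iteratedFDerivWithin_univ] at h
  have h' : (u ∘ (R.toContinuousLinearEquiv)) = fun y => u (R y) := rfl
  rw [h'] at h
  rw [h]
  simp only [ContinuousMultilinearMap.compContinuousLinearMap_apply]
  congr 1
  funext j
  fin_cases j <;> simp

theorem fderiv_line {N : ℕ} {u : EuclideanSpace ℝ (Fin N) → ℝ} {x : EuclideanSpace ℝ (Fin N)}
    (hu : ContDiffAt ℝ 2 u x) (e : EuclideanSpace ℝ (Fin N)) :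
    deriv (fun t : ℝ => u (x + t • e)) =ᶠ[nhds 0] (fun t => fderiv ℝ u (x + t • e) e) := by
  have h1 : ∀ᶠ y in nhds x, DifferentiableAt ℝ u y := by
    filter_upwards [hu.eventually (by simp)] with y hy
    exact hy.differentiableAt (by simp)
  have hc : Tendsto (fun t : ℝ => x + t • e) (nhds 0) (nhds x) := by
    have : Continuous (fun t : ℝ => x + t • e) := by fun_prop
    simpa using this.tendsto 0
  filter_upwards [hc.eventually h1] with t ht
  have hl : HasDerivAt (fun t : ℝ => x + t • e) e t := by
    simpa using ((hasDerivAt_id t).smul_const e).const_add x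
  exact (ht.hasFDerivAt.comp_hasDerivAt t hl).deriv

theorem second_line {N : ℕ} {u : EuclideanSpace ℝ (Fin N) → ℝ} {x : EuclideanSpace ℝ (Fin N)}
    (hu : ContDiffAt ℝ 2 u x) (e : EuclideanSpace ℝ (Fin N)) :
    deriv (deriv (fun t : ℝ => u (x + t • e))) 0 = iteratedFDeriv ℝ 2 u x ![e, e] := by
  rw [(fderiv_line hu e).deriv_eq, iteratedFDeriv_two_apply]
  have h1 : DifferentiableAt ℝ (fderiv ℝ u) x :=
    (hu.fderiv_right (m := 1) (by norm_num)).differentiableAt (by simp)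
  have hl : HasDerivAt (fun t : ℝ => x + t • e) e 0 := by
    simpa using ((hasDerivAt_id (0:ℝ)).smul_const e).const_add x
  have h2 : HasFDerivAt (fderiv ℝ u) (fderiv ℝ (fderiv ℝ u) x) (x + (0:ℝ) • e) := by
    simpa using h1.hasFDerivAt
  have h3 := (h2.comp_hasDerivAt (0:ℝ) hl)
  have h4 := h3.clm_apply (hasDerivAt_const (0:ℝ) e)
  simpa using h4.deriv

theorem lap_nonneg_of_isLocalMin {N : ℕ} {u : EuclideanSpace ℝ (Fin N) → ℝ}
    {x : EuclideanSpace ℝ (Fin N)}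
    (hu : ContDiffAt ℝ 2 u x) (hm : IsLocalMin u x) : 0 ≤ laplacian u x := by
  unfold laplacian
  refine Finset.sum_nonneg fun i _ => ?_
  rw [← second_line hu]
  set e : EuclideanSpace ℝ (Fin N) := EuclideanSpace.single i 1
  by_contra hneg
  push Not at hneg
  have hcont : Continuous (fun t : ℝ => x + t • e) := by fun_prop
  have hc : Tendsto (fun t : ℝ => x + t • e) (nhds 0) (nhds x) := by
    simpa using hcont.tendsto 0
  set f : ℝ → ℝ := fun t : ℝ => u (x + t • e) with hf
  have hfmin : IsLocalMin f 0 := by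
    have := hc.eventually hm
    filter_upwards [this] with t ht
    simpa [hf] using ht
  have hcf : ContinuousAt f 0 := by
    have : ContinuousAt u (x + (0:ℝ) • e) := by simpa using hu.continuousAt
    exact ContinuousAt.comp (f := fun t : ℝ => x + t • e) this hcont.continuousAt
  have hfmax : IsLocalMax f 0 := isLocalMax_of_deriv_deriv_neg hneg hfmin.deriv_eq_zero hcf
  have hconst : f =ᶠ[nhds 0] fun _ => f 0 := by
    filter_upwards [hfmin, hfmax] with t h1 h2
    exact le_antisymm h2 h1
  have h0 : deriv (deriv f) 0 = 0 := by
    have := hconst.deriv.deriv_eq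
    rw [this]; simp
  linarith

theorem lap_nonpos_of_isLocalMax {N : ℕ} {u : EuclideanSpace ℝ (Fin N) → ℝ}
    {x : EuclideanSpace ℝ (Fin N)}
    (hu : ContDiffAt ℝ 2 u x) (hm : IsLocalMax u x) : laplacian u x ≤ 0 := by
  have h := lap_nonneg_of_isLocalMin (u := fun y => (-1) * u y) (x := x)
    (contDiffAt_const.mul hu) (by
      filter_upwards [hm] with y hy
      linarith)
  rw [lap_mul _ hu] at h
  linarith

/-- The fundamental solution, up to a constant. -/
noncomputable def fund (N : ℕ) (x : EuclideanSpace ℝ (Fin N)) : ℝ := ‖x‖ ^ (2 - (N:ℝ))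

theorem fund_contDiffAt {N : ℕ} {x : EuclideanSpace ℝ (Fin N)} (hx : x ≠ 0) :
    ContDiffAt ℝ 2 (fund N) x := by
  unfold fund
  exact (contDiffAt_norm ℝ hx).rpow_const_of_ne (by simpa using hx)

theorem fund_lap {N : ℕ} {x : EuclideanSpace ℝ (Fin N)} (hx : x ≠ 0) :
    laplacian (fund N) x = 0 := by
  have hpos : 0 < ‖x‖ ^ 2 := by positivity
  set k : ℝ := (2 - (N:ℝ)) / 2 with hk
  have key : ∀ i : Fin N, iteratedFDeriv ℝ 2 (fund N) x
      ![EuclideanSpace.single i 1, EuclideanSpace.single i 1]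
      = 4 * k * (k - 1) * (‖x‖ ^ 2) ^ (k - 2) * (x i) ^ 2 + 2 * k * (‖x‖ ^ 2) ^ (k - 1) := by
    intro i
    rw [← second_line (fund_contDiffAt hx)]
    set c := x i with hc
    set A := ‖x‖ ^ 2 with hA
    have hline : (fun t : ℝ => fund N (x + t • EuclideanSpace.single i 1))
        = fun t => (A + 2 * t * c + t ^ 2) ^ k := by
      funext t
      have h2 : ‖x + t • EuclideanSpace.single i (1:ℝ)‖ ^ 2 = A + 2 * t * c + t ^ 2 := by
        rw [norm_add_sq_real, inner_smul_right, norm_smul]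
        simp [EuclideanSpace.inner_single_right, hc, hA]
        ring
      rw [← h2, fund, ← Real.rpow_natCast, ← Real.rpow_mul (norm_nonneg _)]
      congr 1
      rw [hk]; push_cast; ring
    rw [hline]
    have hev : ∀ᶠ t : ℝ in nhds 0, 0 < A + 2 * t * c + t ^ 2 := by
      have hcont : Continuous (fun t : ℝ => A + 2 * t * c + t ^ 2) := by fun_prop
      exact (hcont.tendsto 0).eventually (lt_mem_nhds (by simpa using hpos))
    have hin : ∀ t : ℝ, HasDerivAt (fun t : ℝ => A + 2 * t * c + t ^ 2) (2 * c + 2 * t) t := by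
      intro t
      have h1 : HasDerivAt (fun t : ℝ => A + 2 * t * c + t ^ 2) (0 + 2 * 1 * c + 2 * t) t := by
        refine HasDerivAt.add (HasDerivAt.add (hasDerivAt_const _ _) ?_) ?_
        · exact ((hasDerivAt_id t).const_mul 2).mul_const c
        · simpa using hasDerivAt_pow 2 t
      simpa using h1
    have hd1 : deriv (fun t : ℝ => (A + 2 * t * c + t ^ 2) ^ k) =ᶠ[nhds 0]
        fun t => (2 * c + 2 * t) * k * (A + 2 * t * c + t ^ 2) ^ (k - 1) := by
      filter_upwards [hev] with t ht
      exact ((hin t).rpow_const (Or.inl ht.ne')).deriv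
    rw [hd1.deriv_eq]
    have h0 : A + 2 * (0:ℝ) * c + 0 ^ 2 = A := by ring
    have hq := (hin 0).rpow_const (p := k - 1) (Or.inl (by rw [h0]; exact hpos.ne'))
    have hl : HasDerivAt (fun t : ℝ => (2 * c + 2 * t) * k) (2 * k) 0 := by
      have : HasDerivAt (fun t : ℝ => (2 * c + 2 * t) * k) ((0 + 2 * 1) * k) 0 :=
        ((hasDerivAt_const _ _).add ((hasDerivAt_id (0:ℝ)).const_mul 2)).mul_const k
      simpa using this
    have hlq := (hl.mul hq).deriv
    simp only [Pi.mul_def] at hlq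
    rw [hlq, h0]
    have : k - 1 - 1 = k - 2 := by ring
    rw [this]
    ring
  unfold laplacian
  rw [Finset.sum_congr rfl fun i _ => key i, Finset.sum_add_distrib, ← Finset.mul_sum,
    ← EuclideanSpace.real_norm_sq_eq]
  simp only [Finset.sum_const, Finset.card_univ, Fintype.card_fin, nsmul_eq_mul]
  have h2 : (‖x‖ ^ 2) ^ (k - 1) = (‖x‖ ^ 2) ^ (k - 2) * ‖x‖ ^ 2 := by
    rw [← Real.rpow_add_one hpos.ne']; congr 1; ring
  rw [h2]
  have hN : (N:ℝ) = 2 - 2 * k := by rw [hk]; ring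
  rw [hN]; ring

/-! ### Part 2: mean value inequalities -/

/-- The averaging weight. -/
noncomputable def wt (N : ℕ) (y : EuclideanSpace ℝ (Fin N)) : ℝ := max (1 - ‖y‖ ^ 2) 0

/-- The primitive weight. -/
noncomputable def wt2 (N : ℕ) (y : EuclideanSpace ℝ (Fin N)) : ℝ := (max (1 - ‖y‖ ^ 2) 0) ^ 2 / 4

theorem wt_continuous (N : ℕ) : Continuous (wt N) := by unfold wt; fun_prop

theorem wt2_continuous (N : ℕ) : Continuous (wt2 N) := by unfold wt2; fun_prop

theorem wt_nonneg {N : ℕ} (y : EuclideanSpace ℝ (Fin N)) : 0 ≤ wt N y := le_max_right _ _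

theorem wt2_nonneg {N : ℕ} (y : EuclideanSpace ℝ (Fin N)) : 0 ≤ wt2 N y := by
  unfold wt2; positivity

theorem wt_eq_zero {N : ℕ} {y : EuclideanSpace ℝ (Fin N)} (hy : 1 ≤ ‖y‖) : wt N y = 0 := by
  unfold wt; exact max_eq_right (by nlinarith)

theorem wt2_eq_zero {N : ℕ} {y : EuclideanSpace ℝ (Fin N)} (hy : 1 ≤ ‖y‖) : wt2 N y = 0 := by
  have := wt_eq_zero hy
  unfold wt at this
  unfold wt2; rw [this]; norm_num

theorem wt_le_one {N : ℕ} (y : EuclideanSpace ℝ (Fin N)) : wt N y ≤ 1 := by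
  unfold wt; exact max_le (by nlinarith [sq_nonneg ‖y‖]) (by norm_num)

theorem wt2_le_wt {N : ℕ} (y : EuclideanSpace ℝ (Fin N)) : wt2 N y ≤ wt N y := by
  have h1 := wt_le_one y
  have h0 := wt_nonneg y
  have : wt2 N y = wt N y ^ 2 / 4 := rfl
  rw [this]; nlinarith

theorem wt_hcs (N : ℕ) : HasCompactSupport (wt N) := by
  refine HasCompactSupport.intro (isCompact_closedBall (0 : EuclideanSpace ℝ (Fin N)) 1) ?_
  intro y hy
  apply wt_eq_zero
  simp at hy
  exact hy.le

theorem wt2_hcs (N : ℕ) : HasCompactSupport (wt2 N) := by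
  refine HasCompactSupport.intro (isCompact_closedBall (0 : EuclideanSpace ℝ (Fin N)) 1) ?_
  intro y hy
  apply wt2_eq_zero
  simp at hy
  exact hy.le

theorem wt_int_pos (N : ℕ) : 0 < ∫ y, wt N y := by
  refine (wt_continuous N).integral_pos_of_hasCompactSupport_nonneg_nonzero (wt_hcs N)
    (fun y => wt_nonneg y) (x := 0) ?_
  simp [wt]

theorem wt_integrable (N : ℕ) : Integrable (wt N) :=
  (wt_continuous N).integrable_of_hasCompactSupport (wt_hcs N)

theorem wt2_integrable (N : ℕ) : Integrable (wt2 N) :=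
  (wt2_continuous N).integrable_of_hasCompactSupport (wt2_hcs N)

theorem hasDerivAt_posPart_sq (s : ℝ) : HasDerivAt (fun s : ℝ => (max s 0) ^ 2) (2 * max s 0) s := by
  rcases lt_trichotomy s 0 with h | h | h
  · have he : (fun s : ℝ => (max s 0) ^ 2) =ᶠ[nhds s] fun _ => 0 := by
      filter_upwards [gt_mem_nhds h] with t ht
      rw [max_eq_right ht.le]; norm_num
    rw [max_eq_right h.le, mul_zero]
    exact (hasDerivAt_const s (0:ℝ)).congr_of_eventuallyEq he
  · subst h
    rw [hasDerivAt_iff_tendsto_slope]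
    have he : slope (fun s : ℝ => (max s 0) ^ 2) 0 =ᶠ[nhdsWithin 0 {0}ᶜ] fun t => max t 0 := by
      filter_upwards [self_mem_nhdsWithin] with t ht
      have ht' : t ≠ 0 := ht
      simp only [slope_def_field, max_self, sub_zero]
      rcases le_total t 0 with h | h
      · rw [max_eq_right h]; simp
      · rw [max_eq_left h]; field_simp; simp
    refine Tendsto.congr' he.symm ?_
    have hc : Continuous (fun t : ℝ => max t 0) := by fun_prop
    have := hc.tendsto 0
    simp only [max_self, mul_zero] at this ⊢
    exact this.mono_left nhdsWithin_le_nhds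
  · have he : (fun s : ℝ => (max s 0) ^ 2) =ᶠ[nhds s] fun t => t ^ 2 := by
      filter_upwards [lt_mem_nhds h] with t ht
      rw [max_eq_left ht.le]
    rw [max_eq_left h.le]
    have := hasDerivAt_pow 2 s
    simp at this
    exact this.congr_of_eventuallyEq he

theorem wt2_hasFDerivAt {N : ℕ} (y : EuclideanSpace ℝ (Fin N)) :
    HasFDerivAt (wt2 N) (-(wt N y) • innerSL ℝ y) y := by
  have h1 : HasFDerivAt (fun z : EuclideanSpace ℝ (Fin N) => 1 - ‖z‖ ^ 2)
      (-((2:ℝ) • innerSL ℝ y)) y := by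
    have := ((hasStrictFDerivAt_norm_sq y).hasFDerivAt).const_sub 1
    exact this.congr_fderiv (by ext z; simp)
  have h2 := (hasDerivAt_posPart_sq (1 - ‖y‖ ^ 2)).comp_hasFDerivAt y h1
  have h3 := h2.mul_const (1/4 : ℝ)
  have e : wt2 N = fun y : EuclideanSpace ℝ (Fin N) =>
      ((fun s : ℝ => max s 0 ^ 2) ∘ fun z : EuclideanSpace ℝ (Fin N) => 1 - ‖z‖ ^ 2) y *
        (1 / 4) := by
    funext z; simp only [wt2, Function.comp]; ring
  rw [e]
  refine h3.congr_fderiv ?_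
  ext z; simp [wt]; ring

/-- Weighted average of `w` on the ball of centre `x` and radius `t`. -/
noncomputable def avg {N : ℕ} (w : EuclideanSpace ℝ (Fin N) → ℝ) (x : EuclideanSpace ℝ (Fin N))
    (t : ℝ) : ℝ := ∫ y, wt N y * w (x + t • y)

theorem lap_eq_sum_fderiv {N : ℕ} {w : EuclideanSpace ℝ (Fin N) → ℝ}
    (hw : ContDiff ℝ 2 w) (z : EuclideanSpace ℝ (Fin N)) :
    laplacian w z = ∑ i, fderiv ℝ (fun y => fderiv ℝ w y (EuclideanSpace.single i 1)) z
      (EuclideanSpace.single i 1) := by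
  unfold laplacian
  refine Finset.sum_congr rfl fun i _ => ?_
  rw [iteratedFDeriv_two_apply]
  have h1 : DifferentiableAt ℝ (fderiv ℝ w) z :=
    (hw.fderiv_right (m := 1) (by norm_num)).differentiable (by simp) z
  have h2 := (h1.hasFDerivAt.clm_apply (hasFDerivAt_const (EuclideanSpace.single i (1:ℝ)) z)).fderiv
  rw [h2]
  simp

theorem lap_continuous {N : ℕ} {w : EuclideanSpace ℝ (Fin N) → ℝ}
    (hw : ContDiff ℝ 2 w) : Continuous (laplacian w) := by
  have h := funext fun z => lap_eq_sum_fderiv hw z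
  rw [h]
  refine continuous_finsetSum _ fun i _ => ?_
  have h1 : ContDiff ℝ 1 (fun y => fderiv ℝ w y (EuclideanSpace.single i (1:ℝ))) :=
    (hw.fderiv_right (m := 1) (by norm_num)).clm_apply contDiff_const
  exact (h1.continuous_fderiv (by simp)).clm_apply continuous_const

theorem avg_parts {N : ℕ} {w : EuclideanSpace ℝ (Fin N) → ℝ}
    (hw : ContDiff ℝ 2 w) (x : EuclideanSpace ℝ (Fin N)) (t : ℝ) :
    ∫ y, wt N y * fderiv ℝ w (x + t • y) y = t * ∫ y, wt2 N y * laplacian w (x + t • y) := by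
  have hg : ∀ i : Fin N, ContDiff ℝ 1
      (fun y => fderiv ℝ w y (EuclideanSpace.single i (1:ℝ))) := fun i =>
    (hw.fderiv_right (m := 1) (by norm_num)).clm_apply contDiff_const
  have haff : ContDiff ℝ 1 (fun y : EuclideanSpace ℝ (Fin N) => x + t • y) := by fun_prop
  have hgc : ∀ i : Fin N, ContDiff ℝ 1
      (fun y => fderiv ℝ w (x + t • y) (EuclideanSpace.single i (1:ℝ))) := fun i =>
    (hg i).comp haff
  have hpart : ∀ i : Fin N,
      ∫ y, wt N y * (y i * fderiv ℝ w (x + t • y) (EuclideanSpace.single i (1:ℝ)))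
      = t * ∫ y, wt2 N y * fderiv ℝ (fun y => fderiv ℝ w y (EuclideanSpace.single i 1)) (x + t • y)
      (EuclideanSpace.single i 1) := by
    intro i
    have hfd : ∀ y, fderiv ℝ (wt2 N) y (EuclideanSpace.single i (1:ℝ)) = - (wt N y * y i) := by
      intro y
      rw [(wt2_hasFDerivAt y).fderiv]
      simp [EuclideanSpace.inner_single_right]
    have hfg : ∀ y, fderiv ℝ (fun y => fderiv ℝ w (x + t • y) (EuclideanSpace.single i (1:ℝ))) y
        (EuclideanSpace.single i (1:ℝ)) =
        t * fderiv ℝ (fun y => fderiv ℝ w y (EuclideanSpace.single i 1)) (x + t • y)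
      (EuclideanSpace.single i 1) := by
      intro y
      have ha : HasFDerivAt (fun y : EuclideanSpace ℝ (Fin N) => x + t • y)
          (t • ContinuousLinearMap.id ℝ _) y := ((hasFDerivAt_id y).const_smul t).const_add x
      have hb := ((hg i).differentiable (by simp) (x + t • y)).hasFDerivAt
      have hc := (hb.comp y ha).fderiv
      have : ((fun y => fderiv ℝ w y (EuclideanSpace.single i (1:ℝ))) ∘ fun y => x + t • y) =
        fun y => fderiv ℝ w (x + t • y) (EuclideanSpace.single i (1:ℝ)) := rfl
      rw [this] at hc
      rw [hc]; simp
    have hcoord : Continuous (fun y : EuclideanSpace ℝ (Fin N) => y i) := by fun_prop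
    have hI := integral_mul_fderiv_eq_neg_fderiv_mul_of_integrable (μ := volume) (f := wt2 N)
      (g := fun y => fderiv ℝ w (x + t • y) (EuclideanSpace.single i (1:ℝ)))
      (v := EuclideanSpace.single i (1:ℝ))
      (by
        simp only [hfd]
        refine Continuous.integrable_of_hasCompactSupport ?_ ?_
        · exact (((wt_continuous N).mul hcoord).neg).mul (hgc i).continuous
        · exact (((wt_hcs N).mul_right).comp_left (g := fun r : ℝ => -r) neg_zero).mul_right)
      (by
        refine Continuous.integrable_of_hasCompactSupport ?_ (wt2_hcs N).mul_right
        exact (wt2_continuous N).mul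
          (((hgc i).continuous_fderiv (by simp)).clm_apply continuous_const))
      (by
        refine Continuous.integrable_of_hasCompactSupport ?_ (wt2_hcs N).mul_right
        exact (wt2_continuous N).mul (hgc i).continuous)
      (fun y _ => (wt2_hasFDerivAt y).differentiableAt)
      (fun y _ => (hgc i).differentiable (by simp) y)
    simp only [hfd, hfg] at hI
    rw [← integral_neg] at hI
    rw [← integral_const_mul]
    have e1 : (fun y : EuclideanSpace ℝ (Fin N) =>
        wt N y * (y i * fderiv ℝ w (x + t • y) (EuclideanSpace.single i (1:ℝ)))) =
      fun y => -(-(wt N y * y i) * fderiv ℝ w (x + t • y) (EuclideanSpace.single i (1:ℝ))) := by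
      funext y; ring
    rw [e1, ← hI]
    congr 1
    funext y; ring
  have e2 : ∀ y : EuclideanSpace ℝ (Fin N), wt N y * fderiv ℝ w (x + t • y) y =
      ∑ i, wt N y * (y i * fderiv ℝ w (x + t • y) (EuclideanSpace.single i (1:ℝ))) := by
    intro y
    rw [← Finset.mul_sum]
    congr 1
    generalize fderiv ℝ w (x + t • y) = A
    conv_lhs => rw [← (EuclideanSpace.basisFun (Fin N) ℝ).sum_repr y]
    rw [map_sum]
    refine Finset.sum_congr rfl fun i _ => ?_
    simp
  simp only [e2]
  rw [integral_finsetSum]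
  · rw [Finset.sum_congr rfl fun i _ => hpart i, ← Finset.mul_sum]
    congr 1
    rw [← integral_finsetSum]
    · congr 1
      funext y
      rw [lap_eq_sum_fderiv hw, Finset.mul_sum]
    · intro i _
      refine Continuous.integrable_of_hasCompactSupport ?_ (wt2_hcs N).mul_right
      exact (wt2_continuous N).mul
        ((((hg i).continuous_fderiv (by simp)).comp haff.continuous).clm_apply continuous_const)
  · intro i _
    refine Continuous.integrable_of_hasCompactSupport ?_ (wt_hcs N).mul_right
    have hcoord : Continuous (fun y : EuclideanSpace ℝ (Fin N) => y i) := by fun_prop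
    exact (wt_continuous N).mul (hcoord.mul (hgc i).continuous)

theorem avg_integrable {N : ℕ} {w : EuclideanSpace ℝ (Fin N) → ℝ}
    (hw : Continuous w) (x : EuclideanSpace ℝ (Fin N)) (t : ℝ) :
    Integrable (fun y => wt N y * w (x + t • y)) := by
  refine Continuous.integrable_of_hasCompactSupport ?_ (wt_hcs N).mul_right
  exact (wt_continuous N).mul (hw.comp (by fun_prop))

theorem avg_hasDerivAt {N : ℕ} {w : EuclideanSpace ℝ (Fin N) → ℝ}
    (hw : ContDiff ℝ 2 w) (hs : HasCompactSupport w) (x : EuclideanSpace ℝ (Fin N)) (t : ℝ) :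
    HasDerivAt (avg w x) (t * ∫ y, wt2 N y * laplacian w (x + t • y)) t := by
  rw [← avg_parts hw]
  have hfc : Continuous (fderiv ℝ w) := hw.continuous_fderiv (by simp)
  obtain ⟨C, hC⟩ := (hs.fderiv (𝕜 := ℝ)).exists_bound_of_continuous hfc
  have hmain := hasDerivAt_integral_of_dominated_loc_of_deriv_le (μ := volume) (𝕜 := ℝ)
    (F := fun (s : ℝ) (y : EuclideanSpace ℝ (Fin N)) => wt N y * w (x + s • y))
    (F' := fun (s : ℝ) (y : EuclideanSpace ℝ (Fin N)) => wt N y * fderiv ℝ w (x + s • y) y)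
    (x₀ := t) (bound := fun y => C * wt N y) (s := univ) univ_mem
    (Eventually.of_forall fun s => (avg_integrable hw.continuous x s).aestronglyMeasurable)
    (avg_integrable hw.continuous x t)
    (by
      refine Continuous.aestronglyMeasurable ?_
      exact (wt_continuous N).mul ((hfc.comp (by fun_prop)).clm_apply continuous_id))
    (by
      refine Eventually.of_forall fun y s _ => ?_
      rw [norm_mul, Real.norm_of_nonneg (wt_nonneg y)]
      rcases le_total 1 ‖y‖ with h | h
      · rw [wt_eq_zero h]; simp
      · have h1 := (fderiv ℝ w (x + s • y)).le_opNorm y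
        have h2 := hC (x + s • y)
        have h3 : ‖fderiv ℝ w (x + s • y) y‖ ≤ C := by
          calc _ ≤ ‖fderiv ℝ w (x + s • y)‖ * ‖y‖ := h1
            _ ≤ ‖fderiv ℝ w (x + s • y)‖ * 1 := by gcongr
            _ ≤ C := by linarith
        have := mul_le_mul_of_nonneg_left h3 (wt_nonneg y)
        linarith)
    ((wt_integrable N).const_mul C)
    (by
      refine Eventually.of_forall fun y s _ => ?_
      have hl : HasDerivAt (fun t : ℝ => x + t • y) y s := by
        simpa using ((hasDerivAt_id s).smul_const y).const_add x
      exact ((hw.differentiable (by simp) _).hasFDerivAt.comp_hasDerivAt s hl).const_mul _)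
  exact hmain.2

theorem avg_zero {N : ℕ} (w : EuclideanSpace ℝ (Fin N) → ℝ) (x : EuclideanSpace ℝ (Fin N)) :
    avg w x 0 = (∫ y, wt N y) * w x := by
  unfold avg
  simp [integral_mul_const]

theorem avg_lower {N : ℕ} {w : EuclideanSpace ℝ (Fin N) → ℝ}
    (hw : ContDiff ℝ 2 w) (hs : HasCompactSupport w) (x : EuclideanSpace ℝ (Fin N)) {R L : ℝ}
    (hR : 0 < R) (hL : ∀ z ∈ ball x R, -L ≤ laplacian w z) :
    (∫ y, wt N y) * w x - L * R ^ 2 / 2 * ∫ y, wt2 N y ≤ avg w x R := by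
  set c := ∫ y, wt2 N y with hc
  have hd : ∀ t, HasDerivAt (fun t => avg w x t + L * t ^ 2 / 2 * c)
      (t * ∫ y, wt2 N y * (laplacian w (x + t • y) + L)) t := by
    intro t
    have h1 := avg_hasDerivAt hw hs x t
    have h2 : HasDerivAt (fun t : ℝ => L * t ^ 2 / 2 * c) (L * t * c) t := by
      have := (((hasDerivAt_pow 2 t).const_mul L).div_const 2).mul_const c
      refine this.congr_deriv ?_
      have ht1 : t ^ (2 - 1) = t := by norm_num
      rw [ht1]; push_cast; ring
    refine (h1.add h2).congr_deriv ?_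
    have hi : Integrable (fun y => wt2 N y * laplacian w (x + t • y)) := by
      refine Continuous.integrable_of_hasCompactSupport ?_ (wt2_hcs N).mul_right
      exact (wt2_continuous N).mul ((lap_continuous hw).comp (by fun_prop))
    have e : (fun y => wt2 N y * (laplacian w (x + t • y) + L)) =
        fun y => wt2 N y * laplacian w (x + t • y) + wt2 N y * L := by funext y; ring
    rw [e, integral_add hi ((wt2_integrable N).mul_const L), integral_mul_const]
    ring
  have hmono : MonotoneOn (fun t => avg w x t + L * t ^ 2 / 2 * c) (Icc 0 R) := by
    refine monotoneOn_of_deriv_nonneg (convex_Icc 0 R)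
      (fun t _ => (hd t).continuousAt.continuousWithinAt)
      (fun t _ => (hd t).differentiableAt.differentiableWithinAt) ?_
    intro t ht
    rw [interior_Icc] at ht
    rw [(hd t).deriv]
    refine mul_nonneg ht.1.le (integral_nonneg fun y => ?_)
    simp only [Pi.zero_apply]
    rcases le_or_gt 1 ‖y‖ with h | h
    · rw [wt2_eq_zero h]; simp
    · refine mul_nonneg (wt2_nonneg y) ?_
      have : x + t • y ∈ ball x R := by
        rw [mem_ball, dist_eq_norm, add_sub_cancel_left, norm_smul, Real.norm_of_nonneg ht.1.le]
        nlinarith [ht.1, ht.2, norm_nonneg y]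
      linarith [hL _ this]
  have := hmono (left_mem_Icc.2 hR.le) (right_mem_Icc.2 hR.le) hR.le
  simp only [avg_zero] at this
  norm_num at this
  linarith

theorem avg_upper {N : ℕ} {w : EuclideanSpace ℝ (Fin N) → ℝ}
    (hw : ContDiff ℝ 2 w) (hs : HasCompactSupport w) (x : EuclideanSpace ℝ (Fin N)) {R : ℝ}
    (hR : 0 < R) (hL : ∀ z ∈ ball x R, laplacian w z ≤ 0) :
    avg w x R ≤ (∫ y, wt N y) * w x := by
  have h := avg_lower (w := fun y => (-1) * w y) (contDiff_const.mul hw) hs.mul_left x hR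
    (L := 0) (by
      intro z hz
      rw [lap_mul _ hw.contDiffAt]
      linarith [hL z hz])
  have e : avg (fun y => (-1) * w y) x R = - avg w x R := by
    unfold avg
    rw [← integral_neg]
    congr 1
    funext y; ring
  rw [e] at h
  linarith

/-! ### Part 3: local Harnack inequality -/

theorem exists_cutoff {N : ℕ} {w : EuclideanSpace ℝ (Fin N) → ℝ} {x : EuclideanSpace ℝ (Fin N)}
    {R : ℝ} (hR : 0 < R) (hw : ∀ z ∈ closedBall x (2 * R), ContDiffAt ℝ 2 w z)
    (hpos : ∀ z ∈ closedBall x (2 * R), 0 ≤ w z) :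
    ∃ f : EuclideanSpace ℝ (Fin N) → ℝ, ContDiff ℝ 2 f ∧ HasCompactSupport f ∧
      (∀ z ∈ closedBall x R, f z = w z) ∧ (∀ z, 0 ≤ f z) := by
  let χ : ContDiffBump x := ⟨R, 2 * R, hR, by linarith⟩
  refine ⟨fun z => χ z * w z, ?_, χ.hasCompactSupport.mul_right, ?_, ?_⟩
  · rw [contDiff_iff_contDiffAt]
    intro z
    by_cases hz : z ∈ closedBall x (2 * R)
    · exact χ.contDiff.contDiffAt.mul (hw z hz)
    · have hz' : z ∉ tsupport χ := by rw [χ.tsupport_eq]; exact hz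
      have : (fun z => χ z * w z) =ᶠ[nhds z] fun _ => 0 := by
        filter_upwards [notMem_tsupport_iff_eventuallyEq.1 hz'] with y hy
        simp [hy]
      exact contDiffAt_const.congr_of_eventuallyEq this
  · intro z hz
    simp [χ.one_of_mem_closedBall hz]
  · intro z
    by_cases hz : z ∈ closedBall x (2 * R)
    · exact mul_nonneg χ.nonneg (hpos z hz)
    · have hz' : z ∉ tsupport χ := by rw [χ.tsupport_eq]; exact hz
      simp [image_eq_zero_of_notMem_tsupport hz']

theorem wt_compare {N : ℕ} (y c : EuclideanSpace ℝ (Fin N)) (hc : ‖c‖ ≤ 1) :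
    wt N ((4:ℝ) • y + c) ≤ 2 * wt N y := by
  rcases le_or_gt 1 ‖(4:ℝ) • y + c‖ with h | h
  · rw [wt_eq_zero h]; linarith [wt_nonneg y]
  · have h1 : ‖(4:ℝ) • y‖ ≤ ‖(4:ℝ) • y + c‖ + ‖c‖ := by
      have := norm_sub_le ((4:ℝ) • y + c) c
      simpa using this
    rw [norm_smul] at h1
    norm_num at h1
    have h2 : ‖y‖ ≤ 1 / 2 := by linarith
    have h3 : 3 / 4 ≤ wt N y := by
      unfold wt
      refine le_trans ?_ (le_max_left _ _)
      nlinarith [norm_nonneg y]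
    linarith [wt_le_one ((4:ℝ) • y + c)]

theorem avg_compare {N : ℕ} {w : EuclideanSpace ℝ (Fin N) → ℝ} (hw : Continuous w)
    (hpos : ∀ z, 0 ≤ w z) (x y : EuclideanSpace ℝ (Fin N)) {R : ℝ} (hR : 0 < R)
    (hxy : dist x y ≤ R / 4) :
    avg w y (R / 4) ≤ 2 * 4 ^ N * avg w x R := by
  set c : EuclideanSpace ℝ (Fin N) := (4 / R) • (x - y) with hc
  have hcn : ‖c‖ ≤ 1 := by
    rw [hc, norm_smul, ← dist_eq_norm, Real.norm_of_nonneg (by positivity)]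
    calc 4 / R * dist x y ≤ 4 / R * (R / 4) := by gcongr
      _ = 1 := by field_simp
  have e1 : ∫ η, wt N ((4:ℝ) • η + c) * w (x + R • η) = (4 ^ N)⁻¹ * avg w y (R / 4) := by
    have hshift : ∀ η : EuclideanSpace ℝ (Fin N), x + R • η = y + (R / 4) • ((4:ℝ) • η + c) := by
      intro η
      rw [hc, smul_add, smul_smul, smul_smul]
      have h1 : R / 4 * 4 = R := by ring
      have h2 : R / 4 * (4 / R) = 1 := by field_simp
      rw [h1, h2, one_smul]
      abel
    simp only [hshift]
    have h3 := Measure.integral_comp_smul (volume : Measure (EuclideanSpace ℝ (Fin N)))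
      (fun ζ => wt N (ζ + c) * w (y + (R / 4) • (ζ + c))) (4:ℝ)
    rw [h3]
    have h4 := integral_add_right_eq_self (μ := (volume : Measure (EuclideanSpace ℝ (Fin N))))
      (fun ζ => wt N ζ * w (y + (R / 4) • ζ)) c
    rw [h4]
    simp [avg]
  have e2 : ∫ η, wt N ((4:ℝ) • η + c) * w (x + R • η) ≤ 2 * avg w x R := by
    unfold avg
    rw [← integral_const_mul]
    refine integral_mono_of_nonneg ?_ ((avg_integrable hw x R).const_mul 2) ?_
    · exact Eventually.of_forall fun η => mul_nonneg (wt_nonneg _) (hpos _)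
    · refine Eventually.of_forall fun η => ?_
      have := mul_le_mul_of_nonneg_right (wt_compare η c hcn) (hpos (x + R • η))
      simp only
      linarith
  rw [e1] at e2
  have h4 : (0:ℝ) < 4 ^ N := by positivity
  rw [inv_mul_le_iff₀ h4] at e2
  linarith

/-- A convex regularisation of `max s δ`. -/
noncomputable def hfun (p δ s : ℝ) : ℝ := (δ ^ (1 + p) + s ^ (1 + p)) ^ (1 / (1 + p))

theorem le_hfun {p δ s : ℝ} (hp : 0 < p) (hδ : 0 < δ) (hs : 0 < s) : s ≤ hfun p δ s := by
  unfold hfun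
  have hq : 1 + p ≠ 0 := by positivity
  calc s = (s ^ (1 + p)) ^ (1 / (1 + p)) := by
        rw [← Real.rpow_mul hs.le, mul_one_div_cancel hq, Real.rpow_one]
    _ ≤ _ := by
        refine Real.rpow_le_rpow (by positivity) ?_ (by positivity)
        have : 0 < δ ^ (1 + p) := by positivity
        linarith

theorem hfun_symm (p δ s : ℝ) : hfun p δ s = hfun p s δ := by
  unfold hfun; rw [add_comm (δ ^ (1 + p))]

theorem hfun_le {p δ s : ℝ} (hp : 0 < p) (hδ : 0 < δ) (hs : 0 < s) : hfun p δ s ≤ s + δ := by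
  unfold hfun
  have hq : 1 + p ≠ 0 := by positivity
  have h1 := Real.add_rpow_le_rpow_add hδ.le hs.le (show 1 ≤ 1 + p by linarith)
  calc _ ≤ ((δ + s) ^ (1 + p)) ^ (1 / (1 + p)) :=
        Real.rpow_le_rpow (by positivity) h1 (by positivity)
    _ = s + δ := by
        rw [← Real.rpow_mul (by positivity), mul_one_div_cancel hq, Real.rpow_one, add_comm]

theorem hfun_tangent {p δ s s0 : ℝ} (hp : 0 < p) (hδ : 0 < δ) (hs : 0 < s) (hs0 : 0 < s0) :
    hfun p δ s0 + s0 ^ p * hfun p δ s0 ^ (-p) * (s - s0) ≤ hfun p δ s := by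
  have hq : 1 + p ≠ 0 := by positivity
  have hconj : (1 + p).HolderConjugate ((1 + p) / p) := by
    rw [Real.holderConjugate_iff]
    refine ⟨by linarith, ?_⟩
    field_simp
  have hH := Real.inner_le_Lp_mul_Lq (Finset.univ : Finset (Fin 2)) ![δ, s] ![δ ^ p, s0 ^ p] hconj
  simp only [Fin.sum_univ_two, Matrix.cons_val_zero, Matrix.cons_val_one] at hH
  rw [abs_of_pos hδ, abs_of_pos hs, abs_of_pos (Real.rpow_pos_of_pos hδ p),
    abs_of_pos (Real.rpow_pos_of_pos hs0 p), ← Real.rpow_mul hδ.le, ← Real.rpow_mul hs0.le,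
    mul_div_cancel₀ _ hp.ne'] at hH
  set A := δ ^ (1 + p) + s0 ^ (1 + p) with hA
  have hApos : 0 < A := by positivity
  have e0 : hfun p δ s0 = A ^ (1 / (1 + p)) := rfl
  have e1 : A ^ (1 / ((1 + p) / p)) = hfun p δ s0 ^ p := by
    rw [e0, ← Real.rpow_mul hApos.le]; congr 1; field_simp
  have hHpos : 0 < hfun p δ s0 := by rw [e0]; positivity
  have e2 : A = hfun p δ s0 * hfun p δ s0 ^ p := by
    rw [← Real.rpow_one_add' hHpos.le hq, e0, ← Real.rpow_mul hApos.le,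
      one_div_mul_cancel hq, Real.rpow_one]
  have e3 : δ * δ ^ p = δ ^ (1 + p) := by rw [Real.rpow_one_add' hδ.le hq]
  have e4 : s0 * s0 ^ p = s0 ^ (1 + p) := by rw [Real.rpow_one_add' hs0.le hq]
  have e5 : (δ ^ (1 + p) + s ^ (1 + p)) ^ (1 / (1 + p)) = hfun p δ s := rfl
  rw [e1, e3, e5] at hH
  set B := hfun p δ s0 ^ p with hB
  have hBpos : 0 < B := by positivity
  have e6 : hfun p δ s0 ^ (-p) = B⁻¹ := by rw [Real.rpow_neg hHpos.le]
  rw [e6]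
  have h7 : (hfun p δ s0 + s0 ^ p * B⁻¹ * (s - s0)) * B ≤ hfun p δ s * B := by
    have : (hfun p δ s0 + s0 ^ p * B⁻¹ * (s - s0)) * B
        = hfun p δ s0 * B + s0 ^ p * (s - s0) := by field_simp
    rw [this, ← e2, hA]
    nlinarith
  exact le_of_mul_le_mul_right h7 hBpos

theorem hfun_contDiffAt {N : ℕ} {p δ : ℝ} (hδ : 0 < δ)
    {v : EuclideanSpace ℝ (Fin N) → ℝ} {z : EuclideanSpace ℝ (Fin N)}
    (hv : ContDiffAt ℝ 2 v z) (hz : 0 < v z) :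
    ContDiffAt ℝ 2 (fun y => hfun p δ (v y)) z := by
  unfold hfun
  refine ContDiffAt.rpow_const_of_ne ?_ (by positivity)
  exact contDiffAt_const.add (hv.rpow_const_of_ne hz.ne')

theorem hfun_lap {N : ℕ} {p δ K : ℝ} (hp : 0 < p) (hδ : 0 < δ) (hK : 0 ≤ K)
    {v : EuclideanSpace ℝ (Fin N) → ℝ} {z : EuclideanSpace ℝ (Fin N)}
    (hv : ContDiffAt ℝ 2 v z) (hz : 0 < v z) (hl : -(K * v z ^ (-p)) ≤ laplacian v z) :
    -(K * δ ^ (-p)) ≤ laplacian (fun y => hfun p δ (v y)) z := by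
  set D := v z ^ p * hfun p δ (v z) ^ (-p) with hD
  have hHpos : 0 < hfun p δ (v z) := hz.trans_le (le_hfun hp hδ hz)
  have hD0 : 0 ≤ D := by positivity
  have hmin : IsLocalMin (fun y => hfun p δ (v y) - D * v y) z := by
    filter_upwards [hv.continuousAt.eventually (lt_mem_nhds hz)] with y hy
    have := hfun_tangent hp hδ hy hz
    rw [← hD] at this
    linarith
  have h1 := lap_nonneg_of_isLocalMin
    ((hfun_contDiffAt (p := p) hδ hv hz).sub (contDiffAt_const.mul hv)) hmin
  rw [lap_sub (hfun_contDiffAt hδ hv hz) (contDiffAt_const.mul hv), lap_mul D hv] at h1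
  have h2 : hfun p δ (v z) ^ (-p) ≤ δ ^ (-p) := by
    refine Real.rpow_le_rpow_of_nonpos hδ ?_ (by linarith)
    rw [hfun_symm]; exact le_hfun hp hz hδ
  have h3 : D * (K * v z ^ (-p)) = K * hfun p δ (v z) ^ (-p) := by
    rw [hD, Real.rpow_neg hz.le]
    have : v z ^ p ≠ 0 := by positivity
    field_simp
  have h4 := mul_le_mul_of_nonneg_left hl hD0
  have h5 := mul_le_mul_of_nonneg_left h2 hK
  linarith

theorem harnack_local {N : ℕ} {p δ K R : ℝ} (hp : 0 < p) (hδ : 0 < δ) (hK : 0 ≤ K) (hR : 0 < R)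
    (hKR : K * R ^ 2 ≤ δ ^ (1 + p))
    {v : EuclideanSpace ℝ (Fin N) → ℝ} {x y : EuclideanSpace ℝ (Fin N)}
    (hxy : dist x y ≤ R / 4)
    (hv : ∀ z ∈ closedBall x (2 * R), ContDiffAt ℝ 2 v z)
    (hpos : ∀ z ∈ closedBall x (2 * R), 0 < v z)
    (hl0 : ∀ z ∈ closedBall x (2 * R), laplacian v z ≤ 0)
    (hl1 : ∀ z ∈ closedBall x (2 * R), -(K * v z ^ (-p)) ≤ laplacian v z) :
    v y ≤ 2 * 4 ^ N * v x + 2 * δ := by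
  obtain ⟨f, hf2, hfs, hfe, hf0⟩ := exists_cutoff hR hv fun z hz => (hpos z hz).le
  obtain ⟨g, hg2, hgs, hge, hg0⟩ := exists_cutoff (w := fun y => hfun p δ (v y)) hR
    (fun z hz => hfun_contDiffAt (p := p) hδ (hv z hz) (hpos z hz))
    (fun z hz => ((hpos z hz).trans_le (le_hfun hp hδ (hpos z hz))).le)
  have hsub : closedBall x R ⊆ closedBall x (2 * R) := closedBall_subset_closedBall (by linarith)
  have hyb : ball y (R / 4) ⊆ ball x R := by
    intro z hz
    rw [mem_ball] at hz ⊢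
    have := dist_triangle z y x
    rw [dist_comm y x] at this
    linarith
  have hev : ∀ {a b : EuclideanSpace ℝ (Fin N) → ℝ} {z}, (∀ z ∈ closedBall x R, a z = b z) →
      z ∈ ball x R → laplacian a z = laplacian b z := by
    intro a b z hab hz
    refine lap_congr ?_
    filter_upwards [isOpen_ball.mem_nhds hz] with t ht
    exact hab t (ball_subset_closedBall ht)
  set c0 := ∫ y, wt N y with hc0
  have hc0pos : 0 < c0 := wt_int_pos N
  set c1 := ∫ y, wt2 N y with hc1
  have hc1le : c1 ≤ c0 := integral_mono (wt2_integrable N) (wt_integrable N) wt2_le_wt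
  have hc10 : 0 ≤ c1 := integral_nonneg wt2_nonneg
  have hxm : x ∈ closedBall x R := mem_closedBall_self hR.le
  have hym : y ∈ ball x R := hyb (mem_ball_self (by linarith))
  have hA := avg_upper hf2 hfs x hR (fun z hz => by
    rw [hev hfe hz]; exact hl0 z (hsub (ball_subset_closedBall hz)))
  have hB := avg_lower hg2 hgs y (R := R / 4) (L := K * δ ^ (-p)) (by linarith) (fun z hz => by
    have hz' := hyb hz
    have hz'' := hsub (ball_subset_closedBall hz')
    rw [hev hge hz']
    exact hfun_lap hp hδ hK (hv z hz'') (hpos z hz'') (hl1 z hz''))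
  have hC := avg_compare hf2.continuous hf0 x y hR hxy
  have hD : avg g y (R / 4) ≤ avg f y (R / 4) + c0 * δ := by
    unfold avg
    rw [hc0, ← integral_mul_const, ← integral_add (avg_integrable hf2.continuous y (R / 4))
      ((wt_integrable N).mul_const δ)]
    refine integral_mono (avg_integrable hg2.continuous y (R / 4))
      ((avg_integrable hf2.continuous y (R / 4)).add ((wt_integrable N).mul_const δ)) ?_
    intro η
    simp only
    rcases le_or_gt 1 ‖η‖ with h | h
    · rw [wt_eq_zero h]; simp
    · have hm : y + (R / 4) • η ∈ ball y (R / 4) := by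
        rw [mem_ball, dist_eq_norm, add_sub_cancel_left, norm_smul,
          Real.norm_of_nonneg (by linarith)]
        nlinarith [norm_nonneg η]
      have hm' := ball_subset_closedBall (hyb hm)
      rw [hge _ hm', hfe _ hm', ← mul_add]
      exact mul_le_mul_of_nonneg_left (hfun_le hp hδ (hpos _ (hsub hm'))) (wt_nonneg η)
  rw [hge y (ball_subset_closedBall hym)] at hB
  rw [hfe x hxm] at hA
  have hvy : v y ≤ hfun p δ (v y) := le_hfun hp hδ (hpos y (hsub (ball_subset_closedBall hym)))
  have hE : K * δ ^ (-p) * R ^ 2 ≤ δ := by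
    have h1 : K * δ ^ (-p) * R ^ 2 = K * R ^ 2 * δ ^ (-p) := by ring
    rw [h1]
    calc _ ≤ δ ^ (1 + p) * δ ^ (-p) := by gcongr
      _ = δ := by rw [← Real.rpow_add hδ]; simp
  have hF : K * δ ^ (-p) * (R / 4) ^ 2 / 2 * c1 ≤ δ * c0 := by
    have h2 : K * δ ^ (-p) * (R / 4) ^ 2 / 2 ≤ δ := by
      have : 0 ≤ K * δ ^ (-p) * R ^ 2 := by positivity
      nlinarith
    exact mul_le_mul h2 hc1le hc10 hδ.le
  have hG : 2 * 4 ^ N * avg f x R ≤ 2 * 4 ^ N * (c0 * v x) := by gcongr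
  have hfin : c0 * v y ≤ c0 * (2 * 4 ^ N * v x + 2 * δ) := by
    have := mul_le_mul_of_nonneg_left hvy hc0pos.le
    nlinarith
  exact le_of_mul_le_mul_left hfin hc0pos

/-! ### Part 4: Harnack inequality on spheres and a one-dimensional lemma -/

theorem harnack_segment {N : ℕ} {p δ K r : ℝ} (hp : 0 < p) (hδ : 0 < δ) (hK : 0 ≤ K) (hr : 0 < r)
    (hKr : K * r ^ 2 ≤ δ ^ (1 + p))
    {v : EuclideanSpace ℝ (Fin N) → ℝ}
    (hv : ∀ z, r / 4 ≤ ‖z‖ → ‖z‖ ≤ 2 * r → ContDiffAt ℝ 2 v z)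
    (hpos : ∀ z, r / 4 ≤ ‖z‖ → ‖z‖ ≤ 2 * r → 0 < v z)
    (hl0 : ∀ z, r / 4 ≤ ‖z‖ → ‖z‖ ≤ 2 * r → laplacian v z ≤ 0)
    (hl1 : ∀ z, r / 4 ≤ ‖z‖ → ‖z‖ ≤ 2 * r → -(K * v z ^ (-p)) ≤ laplacian v z)
    {x y : EuclideanSpace ℝ (Fin N)} (hx : ‖x‖ = r) (hy : ‖y‖ = r) (hxy : 0 ≤ inner ℝ x y) :
    v y + 2 * δ ≤ (2 * 4 ^ N) ^ 64 * (v x + 2 * δ) := by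
  have hseg1 : ∀ t : ℝ, 0 ≤ t → t ≤ 1 → r / 2 ≤ ‖x + t • (y - x)‖ := by
    intro t h0 h1
    have e : x + t • (y - x) = (1 - t) • x + t • y := by
      rw [smul_sub, sub_smul, one_smul]; abel
    have h2 : ‖x + t • (y - x)‖ ^ 2 = (1 - t) ^ 2 * r ^ 2 + 2 * ((1 - t) * t) * inner ℝ x y
        + t ^ 2 * r ^ 2 := by
      rw [e, norm_add_sq_real, norm_smul, norm_smul, inner_smul_left, inner_smul_right, hx, hy,
        mul_pow, mul_pow, Real.norm_eq_abs, Real.norm_eq_abs, sq_abs, sq_abs]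
      simp; ring
    have h3 : 0 ≤ (1 - t) * t * inner ℝ x y := by
      have : 0 ≤ 1 - t := by linarith
      positivity
    have h4 : (r / 2) ^ 2 ≤ ‖x + t • (y - x)‖ ^ 2 := by
      rw [h2]
      have : 0 ≤ r ^ 2 * (t - 1 / 2) ^ 2 := by positivity
      nlinarith [sq_nonneg r]
    exact (pow_le_pow_iff_left₀ (by linarith) (norm_nonneg _) two_ne_zero).1 h4
  have hseg2 : ∀ t : ℝ, 0 ≤ t → t ≤ 1 → ‖x + t • (y - x)‖ ≤ r := by
    intro t h0 h1
    have e : x + t • (y - x) = (1 - t) • x + t • y := by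
      rw [smul_sub, sub_smul, one_smul]; abel
    rw [e]
    refine (norm_add_le _ _).trans ?_
    rw [norm_smul, norm_smul, hx, hy, Real.norm_of_nonneg h0,
      Real.norm_of_nonneg (show 0 ≤ 1 - t by linarith)]
    linarith
  have hyx : ‖y - x‖ ≤ 2 * r := by
    refine (norm_sub_le _ _).trans ?_
    rw [hx, hy]; linarith
  set A : ℝ := 2 * 4 ^ N with hA
  have hA2 : 2 ≤ A := by
    have : (1:ℝ) ≤ 4 ^ N := one_le_pow₀ (by norm_num)
    linarith
  have hind : ∀ k : ℕ, k ≤ 64 →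
      v (x + ((k:ℝ) / 64) • (y - x)) + 2 * δ ≤ A ^ k * (v x + 2 * δ) := by
    intro k
    induction k with
    | zero => intro _; simp
    | succ k ih =>
      intro hk
      have hk' : (k:ℝ) + 1 ≤ 64 := by exact_mod_cast hk
      have h0 : (0:ℝ) ≤ (k:ℝ) / 64 := by positivity
      have h1 : (k:ℝ) / 64 ≤ 1 := by linarith
      have ih := ih (by omega)
      set X := x + ((k:ℝ) / 64) • (y - x) with hX
      have hb : ∀ z ∈ closedBall X (2 * (r / 8)), r / 4 ≤ ‖z‖ ∧ ‖z‖ ≤ 2 * r := by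
        intro z hz
        rw [mem_closedBall, dist_eq_norm] at hz
        have ha := hseg1 _ h0 h1
        have hb := hseg2 _ h0 h1
        rw [← hX] at ha hb
        have hc : ‖X‖ ≤ ‖z‖ + ‖z - X‖ := by
          have := norm_sub_le z (z - X)
          simpa using this
        have hd : ‖z‖ ≤ ‖X‖ + ‖z - X‖ := by
          have := norm_add_le X (z - X)
          simpa using this
        constructor <;> linarith
      have hdist : dist X (x + (((k + 1 : ℕ):ℝ) / 64) • (y - x)) ≤ r / 8 / 4 := by
        rw [dist_eq_norm]
        have e : X - (x + (((k + 1 : ℕ):ℝ) / 64) • (y - x)) = (-(1 / 64 : ℝ)) • (y - x) := by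
          rw [hX, add_sub_add_left_eq_sub, ← sub_smul]
          congr 1
          push_cast; ring
        rw [e, norm_smul]
        norm_num
        linarith
      have h := harnack_local hp hδ hK (R := r / 8) (by positivity) (by
          refine le_trans ?_ hKr
          refine mul_le_mul_of_nonneg_left ?_ hK
          nlinarith [sq_nonneg r]) hdist
        (fun z hz => hv z (hb z hz).1 (hb z hz).2) (fun z hz => hpos z (hb z hz).1 (hb z hz).2)
        (fun z hz => hl0 z (hb z hz).1 (hb z hz).2) (fun z hz => hl1 z (hb z hz).1 (hb z hz).2)
      rw [← hA] at h
      calc _ ≤ A * v X + 2 * δ + 2 * δ := by linarith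
        _ ≤ A * (v X + 2 * δ) := by nlinarith
        _ ≤ A * (A ^ k * (v x + 2 * δ)) := by gcongr
        _ = _ := by ring
  have := hind 64 le_rfl
  norm_num at this
  exact this

theorem exists_mid {N : ℕ} (hN : 2 ≤ N) (x y : EuclideanSpace ℝ (Fin N)) {r : ℝ} (hr : 0 < r) :
    ∃ z : EuclideanSpace ℝ (Fin N), ‖z‖ = r ∧ 0 ≤ inner ℝ x z ∧ 0 ≤ inner ℝ z y := by
  have hne : (Submodule.span ℝ {x})ᗮ ≠ ⊥ := by
    intro h
    rw [Submodule.orthogonal_eq_bot_iff] at h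
    have h1 := finrank_span_le_card (R := ℝ) ({x} : Set (EuclideanSpace ℝ (Fin N)))
    simp only [Set.toFinset_singleton, Finset.card_singleton] at h1
    rw [h, finrank_top, finrank_euclideanSpace_fin] at h1
    omega
  obtain ⟨w, hw, hw0⟩ := Submodule.exists_mem_ne_zero_of_ne_bot hne
  have hxw : inner ℝ x w = 0 := Submodule.mem_orthogonal_singleton_iff_inner_right.1 hw
  have hwn : 0 < ‖w‖ := norm_pos_iff.2 hw0
  have hn : ‖(r / ‖w‖) • w‖ = r := by
    rw [norm_smul, Real.norm_of_nonneg (by positivity)]; field_simp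
  rcases le_total 0 (inner ℝ ((r / ‖w‖) • w) y) with h | h
  · exact ⟨_, hn, by rw [inner_smul_right, hxw]; simp, h⟩
  · refine ⟨-((r / ‖w‖) • w), by rw [norm_neg, hn], ?_, ?_⟩
    · rw [inner_neg_right, inner_smul_right, hxw]; simp
    · rw [inner_neg_left]; linarith

theorem harnack_sphere {N : ℕ} (hN : 2 ≤ N) {p δ K r : ℝ} (hp : 0 < p) (hδ : 0 < δ)
    (hK : 0 ≤ K) (hr : 0 < r) (hKr : K * r ^ 2 ≤ δ ^ (1 + p))
    {v : EuclideanSpace ℝ (Fin N) → ℝ}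
    (hv : ∀ z, r / 4 ≤ ‖z‖ → ‖z‖ ≤ 2 * r → ContDiffAt ℝ 2 v z)
    (hpos : ∀ z, r / 4 ≤ ‖z‖ → ‖z‖ ≤ 2 * r → 0 < v z)
    (hl0 : ∀ z, r / 4 ≤ ‖z‖ → ‖z‖ ≤ 2 * r → laplacian v z ≤ 0)
    (hl1 : ∀ z, r / 4 ≤ ‖z‖ → ‖z‖ ≤ 2 * r → -(K * v z ^ (-p)) ≤ laplacian v z)
    {x y : EuclideanSpace ℝ (Fin N)} (hx : ‖x‖ = r) (hy : ‖y‖ = r) :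
    v y ≤ ((2 * 4 ^ N) ^ 64) ^ 2 * (v x + 2 * δ) := by
  obtain ⟨z, hz, hxz, hzy⟩ := exists_mid hN x y hr
  have h1 := harnack_segment hp hδ hK hr hKr hv hpos hl0 hl1 hx hz hxz
  have h2 := harnack_segment hp hδ hK hr hKr hv hpos hl0 hl1 hz hy hzy
  set A : ℝ := (2 * 4 ^ N) ^ 64
  have hA : 0 ≤ A := by positivity
  calc v y ≤ v y + 2 * δ := by linarith
    _ ≤ A * (v z + 2 * δ) := h2
    _ ≤ A * (A * (v x + 2 * δ)) := by gcongr
    _ = _ := by ring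

theorem concave_lemma {m : ℝ → ℝ} (hm : ∀ s, 0 < s → 0 < m s)
    (hc : ∀ s r t, 0 < s → s < r → r < t → (t - r) * m s + (r - s) * m t ≤ (t - s) * m r) :
    ∃ a b : ℝ, 0 ≤ a ∧ 0 ≤ b ∧ (∀ s, 0 < s → a * s + b ≤ m s) ∧
      Tendsto (fun s => m s - a * s - b) (nhdsWithin 0 (Ioi 0)) (nhds 0) ∧
      Tendsto (fun s => (m s - a * s - b) / s) atTop (nhds 0) := by
  have hmono : ∀ s r, 0 < s → s < r → m s ≤ m r := by
    intro s r hs hsr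
    by_contra hlt
    push Not at hlt
    have hms := hm s hs
    -- choose `t` large
    set d := m s - m r with hd
    have hd0 : 0 < d := by linarith
    set t := r + (m r * (r - s)) / d + 1 with ht
    have hmr := hm r (by linarith)
    have hq : 0 ≤ m r * (r - s) / d := div_nonneg (by nlinarith) hd0.le
    have hrt : r < t := by linarith
    have h1 := hc s r t hs hsr hrt
    have hmt := hm t (by linarith)
    have h2 : (t - r) * d = m r * (r - s) + d := by
      rw [ht]; field_simp; ring
    have h3 : 0 < (r - s) * m t := mul_pos (by linarith) hmt
    have h4 : (t - s) * m r = (t - r) * m r + (r - s) * m r := by ring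
    have h5 : (t - r) * m s = (t - r) * m r + (t - r) * d := by rw [hd]; ring
    nlinarith
  have hbdd : BddBelow (m '' Ioi 0) := ⟨0, by rintro _ ⟨s, hs, rfl⟩; exact (hm s hs).le⟩
  set b := sInf (m '' Ioi 0) with hb
  have hne : (m '' Ioi (0:ℝ)).Nonempty := ⟨m 1, 1, by simp, rfl⟩
  have hb0 : 0 ≤ b := le_csInf hne (by rintro _ ⟨s, hs, rfl⟩; exact (hm s hs).le)
  have hbm : ∀ s, 0 < s → b ≤ m s := fun s hs => csInf_le hbdd ⟨s, hs, rfl⟩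
  have hlim0 : ∀ ε > 0, ∃ s0 > 0, ∀ s, 0 < s → s < s0 → m s < b + ε := by
    intro ε hε
    obtain ⟨_, ⟨s0, hs0, rfl⟩, h⟩ := exists_lt_of_csInf_lt hne (show sInf (m '' Ioi 0) < b + ε by
      rw [← hb]; linarith)
    exact ⟨s0, hs0, fun s hs hss => (hmono s s0 hs hss).trans_lt h⟩
  have hratio : ∀ r t, 0 < r → r < t → (m t - b) * r ≤ (m r - b) * t := by
    intro r t hr hrt
    by_contra hlt
    push Not at hlt
    set d := (m t - b) * r - (m r - b) * t with hd
    have hd0 : 0 < d := by linarith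
    have hmt := hbm t (by linarith)
    have hmr := hbm r hr
    set s := min (r / 2) (d / (m t - b + 1) / 2) with hs
    have hs0 : 0 < s := by
      refine lt_min (by linarith) ?_
      have : 0 < m t - b + 1 := by linarith
      positivity
    have hsr : s < r := (min_le_left _ _).trans_lt (by linarith)
    have hsd : s * (m t - b + 1) ≤ d / 2 := by
      have h1 : s ≤ d / (m t - b + 1) / 2 := min_le_right _ _
      have h2 : 0 < m t - b + 1 := by linarith
      calc _ ≤ d / (m t - b + 1) / 2 * (m t - b + 1) := by gcongr
        _ = d / 2 := by field_simp
    have h1 := hc s r t hs0 hsr hrt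
    have hms := hbm s hs0
    have h2 : (t - r) * (m s - b) + (r - s) * (m t - b) ≤ (t - s) * (m r - b) := by nlinarith
    have h3 : 0 ≤ (t - r) * (m s - b) := mul_nonneg (by linarith) (by linarith)
    have h4 : 0 ≤ s * (m r - b) := mul_nonneg hs0.le (by linarith)
    nlinarith
  set Q := (fun s => (m s - b) / s) '' Ioi 0 with hQ
  have hQne : Q.Nonempty := ⟨_, 1, by simp, rfl⟩
  have hQ0 : ∀ q ∈ Q, 0 ≤ q := by
    rintro _ ⟨s, hs, rfl⟩
    exact div_nonneg (by linarith [hbm s hs]) (le_of_lt hs)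
  have hQb : BddBelow Q := ⟨0, hQ0⟩
  set a := sInf Q with ha
  have ha0 : 0 ≤ a := le_csInf hQne hQ0
  have ham : ∀ s, 0 < s → a * s + b ≤ m s := by
    intro s hs
    have h1 : a ≤ (m s - b) / s := csInf_le hQb ⟨s, hs, rfl⟩
    rw [le_div_iff₀ hs] at h1
    linarith
  refine ⟨a, b, ha0, hb0, ham, ?_, ?_⟩
  · rw [Metric.tendsto_nhdsWithin_nhds]
    intro ε hε
    obtain ⟨s0, hs0, h⟩ := hlim0 ε hε
    refine ⟨s0, hs0, ?_⟩
    intro s hs hss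
    have hs' : 0 < s := hs
    rw [Real.dist_eq, sub_zero, abs_of_pos hs'] at hss
    rw [Real.dist_eq, sub_zero, abs_of_nonneg (by linarith [ham s hs'])]
    have := h s hs' hss
    have : 0 ≤ a * s := by positivity
    linarith
  · rw [Metric.tendsto_atTop]
    intro ε hε
    obtain ⟨_, ⟨s0, hs0, rfl⟩, h⟩ := exists_lt_of_csInf_lt hQne (show sInf Q < a + ε by
      rw [← ha]; linarith)
    have hs0' : 0 < s0 := hs0
    refine ⟨s0 + 1, fun s hs => ?_⟩
    have hs' : 0 < s := by linarith
    have h1 := hratio s0 s hs0' (by linarith)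
    have h2 : (m s - b) / s ≤ (m s0 - b) / s0 := by
      rw [div_le_div_iff₀ hs' hs0']; exact h1
    have e : (m s - a * s - b) / s = (m s - b) / s - a := by field_simp; ring
    have h3 : 0 ≤ (m s - a * s - b) / s := div_nonneg (by linarith [ham s hs']) hs'.le
    rw [Real.dist_eq, sub_zero, abs_of_nonneg h3, e]
    simp only at h
    linarith

theorem sol_cd {N : ℕ} {φ : ℝ → ℝ} {p : ℝ} {u : EuclideanSpace ℝ (Fin N) → ℝ}
    (hu : IsSol φ p u) {x : EuclideanSpace ℝ (Fin N)} (hx : x ≠ 0) : ContDiffAt ℝ 2 u x :=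
  hu.1.contDiffAt (isOpen_compl_singleton.mem_nhds hx)

theorem cd_w {N : ℕ} {u : EuclideanSpace ℝ (Fin N) → ℝ} {x : EuclideanSpace ℝ (Fin N)}
    (hx : x ≠ 0) (hu : ContDiffAt ℝ 2 u x) (A B : ℝ) :
    ContDiffAt ℝ 2 (fun y => u y - A * fund N y - B) x :=
  (hu.sub (contDiffAt_const.mul (fund_contDiffAt hx))).sub contDiffAt_const

theorem lap_w {N : ℕ} {u : EuclideanSpace ℝ (Fin N) → ℝ} {x : EuclideanSpace ℝ (Fin N)}
    (hx : x ≠ 0) (hu : ContDiffAt ℝ 2 u x) (A B : ℝ) :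
    laplacian (fun y => u y - A * fund N y - B) x = laplacian u x := by
  rw [lap_sub (u := fun y => u y - A * fund N y) (v := fun _ => B)
    (hu.sub (contDiffAt_const.mul (fund_contDiffAt hx))) contDiffAt_const,
    lap_sub (v := fun y => A * fund N y) hu (contDiffAt_const.mul (fund_contDiffAt hx)),
    lap_mul A (fund_contDiffAt hx), fund_lap hx, lap_const]
  ring

theorem annulus_compact {N : ℕ} (R S : ℝ) :
    IsCompact {z : EuclideanSpace ℝ (Fin N) | R ≤ ‖z‖ ∧ ‖z‖ ≤ S} := by
  refine (isCompact_closedBall (0 : EuclideanSpace ℝ (Fin N)) S).of_isClosed_subset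
    ((isClosed_le continuous_const continuous_norm).inter
      (isClosed_le continuous_norm continuous_const)) ?_
  intro z hz
  simpa using hz.2

theorem annulus_nhds {N : ℕ} {R S : ℝ} {x : EuclideanSpace ℝ (Fin N)}
    (h1 : R < ‖x‖) (h2 : ‖x‖ < S) :
    {z : EuclideanSpace ℝ (Fin N) | R ≤ ‖z‖ ∧ ‖z‖ ≤ S} ∈ nhds x := by
  have a1 : ∀ᶠ z in nhds x, R < ‖z‖ := continuous_norm.continuousAt.eventually_const_lt h1
  have a2 : ∀ᶠ z in nhds x, ‖z‖ < S := continuous_norm.continuousAt.eventually_lt_const h2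
  filter_upwards [a1, a2] with z h h'
  exact ⟨h.le, h'.le⟩

/-- weak minimum principle on annuli -/
theorem annulus_min {N : ℕ} {u : EuclideanSpace ℝ (Fin N) → ℝ}
    (hu : ∀ x, x ≠ 0 → ContDiffAt ℝ 2 u x) (hl : ∀ x, x ≠ 0 → laplacian u x < 0)
    {R S A B : ℝ} (hR : 0 < R)
    (h1 : ∀ z : EuclideanSpace ℝ (Fin N), ‖z‖ = R → A * fund N z + B ≤ u z)
    (h2 : ∀ z : EuclideanSpace ℝ (Fin N), ‖z‖ = S → A * fund N z + B ≤ u z)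
    {x : EuclideanSpace ℝ (Fin N)} (hx1 : R ≤ ‖x‖) (hx2 : ‖x‖ ≤ S) :
    A * fund N x + B ≤ u x := by
  have hne : ∀ z : EuclideanSpace ℝ (Fin N), R ≤ ‖z‖ → z ≠ 0 := fun z hz =>
    norm_pos_iff.1 (hR.trans_le hz)
  obtain ⟨z, ⟨hz1, hz2⟩, hz⟩ := (annulus_compact (N := N) R S).exists_isMinOn ⟨x, hx1, hx2⟩
    (f := fun y => u y - A * fund N y - B)
    (fun y hy => (cd_w (hne y hy.1) (hu y (hne y hy.1)) A B).continuousAt.continuousWithinAt)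
  have hzx := hz (show x ∈ {z : EuclideanSpace ℝ (Fin N) | R ≤ ‖z‖ ∧ ‖z‖ ≤ S} from ⟨hx1, hx2⟩)
  simp only [mem_setOf_eq] at hzx
  rcases hz1.eq_or_lt with h | h
  · have := h1 z h.symm; linarith
  rcases hz2.eq_or_lt with h' | h'
  · have := h2 z h'; linarith
  exfalso
  have hloc : IsLocalMin (fun y => u y - A * fund N y - B) z := hz.isLocalMin (annulus_nhds h h')
  have := lap_nonneg_of_isLocalMin (cd_w (hne z hz1) (hu z (hne z hz1)) A B) hloc
  rw [lap_w (hne z hz1) (hu z (hne z hz1))] at this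
  linarith [hl z (hne z hz1)]

theorem exists_sphere_min {N : ℕ} (hN : 1 ≤ N) {u : EuclideanSpace ℝ (Fin N) → ℝ}
    (hu : ∀ x, x ≠ 0 → ContDiffAt ℝ 2 u x) {R : ℝ} (hR : 0 < R) :
    ∃ x : EuclideanSpace ℝ (Fin N), ‖x‖ = R ∧ ∀ z : EuclideanSpace ℝ (Fin N), ‖z‖ = R → u x ≤ u z := by
  have hnt : Nonempty (Fin N) := ⟨⟨0, hN⟩⟩
  obtain ⟨x, hx, hm⟩ := (isCompact_sphere (0 : EuclideanSpace ℝ (Fin N)) R).exists_isMinOn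
    (NormedSpace.sphere_nonempty.2 hR.le) (f := u)
    (fun y hy => (hu y (by
      intro h; simp [h] at hy; exact hR.ne hy)).continuousAt.continuousWithinAt)
  refine ⟨x, by simpa using hx, fun z hz => hm (show z ∈ sphere 0 R by simpa using hz)⟩

theorem rad_fund {N : ℕ} (hN : 3 ≤ N) {r : ℝ} (hr : 0 < r) :
    (r ^ (1 / (2 - (N:ℝ)))) ^ (2 - (N:ℝ)) = r := by
  have : (2 - (N:ℝ)) ≠ 0 := by
    have : (3:ℝ) ≤ N := by exact_mod_cast hN
    linarith
  rw [← Real.rpow_mul hr.le, one_div_mul_cancel this, Real.rpow_one]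

theorem rad_fund_inv {N : ℕ} (hN : 3 ≤ N) {r : ℝ} (hr : 0 < r) :
    (r ^ (2 - (N:ℝ))) ^ (1 / (2 - (N:ℝ))) = r := by
  have : (2 - (N:ℝ)) ≠ 0 := by
    have : (3:ℝ) ≤ N := by exact_mod_cast hN
    linarith
  rw [← Real.rpow_mul hr.le, mul_one_div_cancel this, Real.rpow_one]

/-- the two limits: lower envelope. -/
theorem envelope {N : ℕ} (hN : 3 ≤ N) {u : EuclideanSpace ℝ (Fin N) → ℝ}
    (hu : ∀ x, x ≠ 0 → ContDiffAt ℝ 2 u x) (hl : ∀ x, x ≠ 0 → laplacian u x < 0)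
    (hpos : ∀ x, x ≠ 0 → 0 < u x) :
    ∃ (X : ℝ → EuclideanSpace ℝ (Fin N)) (a b : ℝ), (∀ r, 0 < r → ‖X r‖ = r) ∧ 0 ≤ a ∧ 0 ≤ b ∧
      (∀ x, x ≠ 0 → 0 < u x - a * fund N x - b) ∧
      Tendsto (fun r => u (X r) - a * fund N (X r) - b) atTop (nhds 0) ∧
      Tendsto (fun r => r ^ ((N:ℝ) - 2) * (u (X r) - a * fund N (X r) - b))
        (nhdsWithin 0 (Ioi 0)) (nhds 0) := by
  have hN3 : (3:ℝ) ≤ N := by exact_mod_cast hN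
  have hex : ∀ r : ℝ, ∃ x : EuclideanSpace ℝ (Fin N), 0 < r →
      ‖x‖ = r ∧ ∀ z : EuclideanSpace ℝ (Fin N), ‖z‖ = r → u x ≤ u z := by
    intro r
    by_cases hr : 0 < r
    · obtain ⟨x, hx⟩ := exists_sphere_min (by omega) hu hr
      exact ⟨x, fun _ => hx⟩
    · exact ⟨0, fun h => absurd h hr⟩
  choose X hX using hex
  have hX0 : ∀ r, 0 < r → X r ≠ 0 := fun r hr => norm_pos_iff.1 (by rw [(hX r hr).1]; exact hr)
  set rad : ℝ → ℝ := fun s => s ^ (1 / (2 - (N:ℝ))) with hrad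
  have hradpos : ∀ s, 0 < s → 0 < rad s := fun s hs => Real.rpow_pos_of_pos hs _
  have hradf : ∀ s, 0 < s → (rad s) ^ (2 - (N:ℝ)) = s := fun s hs => rad_fund hN hs
  have hradlt : ∀ s t, 0 < s → s < t → rad t < rad s := fun s t hs hst =>
    Real.rpow_lt_rpow_of_neg hs hst (by
      apply div_neg_of_pos_of_neg one_pos; linarith)
  obtain ⟨a, b, ha, hb, hle, ht0, ht1⟩ := concave_lemma (m := fun s => u (X (rad s)))
    (fun s hs => hpos _ (hX0 _ (hradpos s hs))) (by
      intro s r t hs hsr hrt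
      have hr : 0 < r := hs.trans hsr
      have ht : 0 < t := hr.trans hrt
      set A := (u (X (rad t)) - u (X (rad s))) / (t - s) with hA
      have hts : t - s ≠ 0 := by linarith
      have hAe : A * (t - s) = u (X (rad t)) - u (X (rad s)) := by
        rw [hA]; field_simp
      have key := annulus_min hu hl (A := A) (B := u (X (rad s)) - A * s) (hradpos t ht)
        (S := rad s)
        (by
          intro z hz
          have := (hX _ (hradpos t ht)).2 z hz
          rw [fund, hz, hradf t ht]
          linarith)
        (by
          intro z hz
          have := (hX _ (hradpos s hs)).2 z hz
          rw [fund, hz, hradf s hs]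
          linarith)
        (x := X (rad r)) (by rw [(hX _ (hradpos r hr)).1]; exact (hradlt r t hr hrt).le)
        (by rw [(hX _ (hradpos r hr)).1]; exact (hradlt s r hs hsr).le)
      rw [fund, (hX _ (hradpos r hr)).1, hradf r hr] at key
      have h2 : (t - s) * (A * r + (u (X (rad s)) - A * s)) ≤ (t - s) * u (X (rad r)) :=
        mul_le_mul_of_nonneg_left key (by linarith)
      have h3 : (t - s) * (A * r + (u (X (rad s)) - A * s))
        = (A * (t - s)) * (r - s) + (t - s) * u (X (rad s)) := by ring
      rw [h3, hAe] at h2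
      linarith)
  have hge : ∀ x : EuclideanSpace ℝ (Fin N), x ≠ 0 → 0 ≤ u x - a * fund N x - b := by
    intro x hx
    have hxn : 0 < ‖x‖ := norm_pos_iff.2 hx
    have hf : 0 < fund N x := Real.rpow_pos_of_pos hxn _
    have h1 := hle _ hf
    have h2 : rad (fund N x) = ‖x‖ := rad_fund_inv hN hxn
    rw [h2] at h1
    have := (hX _ hxn).2 x rfl
    linarith
  have hfX : ∀ r, 0 < r → fund N (X r) = r ^ (2 - (N:ℝ)) := fun r hr => by
    rw [fund, (hX r hr).1]
  refine ⟨X, a, b, fun r hr => (hX r hr).1, ha, hb, ?_, ?_, ?_⟩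
  · intro x hx
    refine lt_of_le_of_ne (hge x hx) fun h => ?_
    have hloc : IsLocalMin (fun y => u y - a * fund N y - b) x := by
      filter_upwards [isOpen_compl_singleton.mem_nhds hx] with y hy
      rw [← h]
      exact hge y hy
    have := lap_nonneg_of_isLocalMin (cd_w hx (hu x hx) a b) hloc
    rw [lap_w hx (hu x hx)] at this
    linarith [hl x hx]
  · have h1 : Tendsto (fun r : ℝ => r ^ (2 - (N:ℝ))) atTop (nhdsWithin 0 (Ioi 0)) := by
      rw [tendsto_nhdsWithin_iff]
      constructor
      · have := tendsto_rpow_neg_atTop (y := (N:ℝ) - 2) (by linarith)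
        simpa using this
      · filter_upwards [eventually_gt_atTop 0] with r hr
        exact Real.rpow_pos_of_pos hr _
    refine (ht0.comp h1).congr' ?_
    filter_upwards [eventually_gt_atTop 0] with r hr
    simp only [Function.comp, hrad, rad_fund_inv hN hr, hfX r hr]
  · have h1 : Tendsto (fun r : ℝ => r ^ (2 - (N:ℝ))) (nhdsWithin 0 (Ioi 0)) atTop := by
      have := (tendsto_rpow_atTop (y := (N:ℝ) - 2) (by linarith)).comp
        (tendsto_inv_nhdsGT_zero (𝕜 := ℝ))
      refine this.congr' ?_
      filter_upwards [self_mem_nhdsWithin] with r hr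
      have hr : 0 < r := hr
      simp only [Function.comp]
      rw [Real.inv_rpow hr.le, ← Real.rpow_neg hr.le]
      congr 1; ring
    refine (ht1.comp h1).congr' ?_
    filter_upwards [self_mem_nhdsWithin] with r hr
    have hr : 0 < r := hr
    simp only [Function.comp, hrad, rad_fund_inv hN hr, hfX r hr]
    have : r ^ ((N:ℝ) - 2) = (r ^ (2 - (N:ℝ)))⁻¹ := by
      rw [← Real.rpow_neg hr.le]; congr 1; ring
    rw [this]
    ring

theorem rpow_bd {r s e : ℝ} (hr : 0 < r) (h1 : r / 4 ≤ s) (h2 : s ≤ 2 * r) :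
    s ^ e ≤ ((1 / 4 : ℝ) ^ e + 2 ^ e) * r ^ e := by
  have hs : 0 < s := by linarith
  have h4 : (0:ℝ) < (1 / 4 : ℝ) ^ e := by positivity
  have h5 : (0:ℝ) < (2 : ℝ) ^ e := by positivity
  have hre : 0 < r ^ e := by positivity
  rcases le_total 0 e with he | he
  · have := Real.rpow_le_rpow hs.le h2 he
    rw [Real.mul_rpow (by norm_num) hr.le] at this
    nlinarith
  · have := Real.rpow_le_rpow_of_nonpos (x := 1 / 4 * r) (by positivity)
      (show 1 / 4 * r ≤ s by linarith) he
    rw [Real.mul_rpow (by norm_num) hr.le] at this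
    nlinarith

theorem sphere_bound {N : ℕ} (hN : 2 ≤ N) {φ : ℝ → ℝ} {p c e : ℝ} (hp : 0 < p) (hc : 0 < c)
    (hφpos : ∀ r : ℝ, 0 < r → 0 < φ r)
    {u : EuclideanSpace ℝ (Fin N) → ℝ} (hu : IsSol φ p u) {a b : ℝ} (ha : 0 ≤ a) (hb : 0 ≤ b)
    (hv : ∀ x, x ≠ 0 → 0 < u x - a * fund N x - b) :
    ∃ C D : ℝ, 0 ≤ C ∧ ∀ r, 0 < r → (∀ s, r / 4 ≤ s → s ≤ 2 * r → φ s ≤ c * s ^ e) →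
      ∀ x y : EuclideanSpace ℝ (Fin N), ‖x‖ = r → ‖y‖ = r →
      u y - a * fund N y - b
        ≤ C * ((u x - a * fund N x - b) + D * r ^ ((2 + e) / (1 + p))) := by
  set k : ℝ := c * ((1 / 4 : ℝ) ^ e + 2 ^ e) with hk
  have hkpos : 0 < k := by positivity
  refine ⟨((2 * 4 ^ N) ^ 64) ^ 2, 2 * k ^ (1 / (1 + p)), by positivity, ?_⟩
  intro r hr hφ x y hx hy
  have h1p : (1 + p) ≠ 0 := by positivity
  have hne : ∀ z : EuclideanSpace ℝ (Fin N), r / 4 ≤ ‖z‖ → z ≠ 0 := fun z hz =>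
    norm_pos_iff.1 (by linarith)
  have hlap : ∀ z, z ≠ 0 → laplacian (fun y => u y - a * fund N y - b) z
      = -(φ ‖z‖ * u z ^ (-p)) := by
    intro z hz
    rw [lap_w hz (sol_cd hu hz)]
    linarith [(hu.2 z hz).2]
  have := harnack_sphere hN (p := p) (δ := k ^ (1 / (1 + p)) * r ^ ((2 + e) / (1 + p)))
    (K := k * r ^ e) hp (by positivity) (by positivity) hr
    (by
      rw [Real.mul_rpow (by positivity) (by positivity), ← Real.rpow_mul hkpos.le,
        ← Real.rpow_mul hr.le, one_div_mul_cancel h1p, div_mul_cancel₀ _ h1p, Real.rpow_one,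
        Real.rpow_add hr, Real.rpow_two]
      apply le_of_eq; ring)
    (v := fun y => u y - a * fund N y - b)
    (fun z hz _ => cd_w (hne z hz) (sol_cd hu (hne z hz)) a b)
    (fun z hz _ => hv z (hne z hz))
    (fun z hz _ => by
      rw [hlap z (hne z hz)]
      have h1 := hφpos ‖z‖ (norm_pos_iff.2 (hne z hz))
      have h2 := Real.rpow_pos_of_pos (hu.2 z (hne z hz)).1 (-p)
      nlinarith [mul_pos h1 h2])
    (fun z hz hz2 => by
      rw [hlap z (hne z hz)]
      have h1 := hφpos ‖z‖ (norm_pos_iff.2 (hne z hz))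
      have h3 : φ ‖z‖ ≤ k * r ^ e := by
        refine (hφ _ hz hz2).trans ?_
        rw [hk, mul_assoc]
        exact mul_le_mul_of_nonneg_left (rpow_bd hr hz hz2) hc.le
      have hvz := hv z (hne z hz)
      have hf : 0 ≤ fund N z := Real.rpow_nonneg (norm_nonneg z) _
      have h4 : u z ^ (-p) ≤ (u z - a * fund N z - b) ^ (-p) :=
        Real.rpow_le_rpow_of_nonpos hvz (by nlinarith [mul_nonneg ha hf]) (by linarith)
      have h2 := Real.rpow_pos_of_pos (hu.2 z (hne z hz)).1 (-p)
      have := mul_le_mul h3 h4 h2.le (by positivity)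
      linarith)
    hx hy
  refine this.trans (le_of_eq ?_)
  ring

theorem fund_tendsto {N : ℕ} (hN : 3 ≤ N) :
    Tendsto (fund N) (cocompact (EuclideanSpace ℝ (Fin N))) (nhds 0) := by
  have hN3 : (3:ℝ) ≤ N := by exact_mod_cast hN
  have := tendsto_rpow_neg_atTop (y := (N:ℝ) - 2) (by linarith)
  have := this.comp (tendsto_norm_cocompact_atTop (E := EuclideanSpace ℝ (Fin N)))
  refine this.congr fun x => ?_
  simp [fund]

theorem pow_fund {N : ℕ} {x : EuclideanSpace ℝ (Fin N)} (hx : x ≠ 0) :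
    ‖x‖ ^ ((N:ℝ) - 2) * fund N x = 1 := by
  have : 0 < ‖x‖ := norm_pos_iff.2 hx
  rw [fund, ← Real.rpow_add this]
  simp

theorem rpow_tendsto_zero {q : ℝ} (hq : 0 < q) :
    Tendsto (fun r : ℝ => r ^ q) (nhdsWithin 0 (Ioi 0)) (nhds 0) := by
  have := (Real.continuousAt_rpow_const 0 q (Or.inr hq.le)).tendsto
  rw [Real.zero_rpow hq.ne'] at this
  exact this.mono_left nhdsWithin_le_nhds

theorem norm_tendsto_punctured {N : ℕ} :
    Tendsto (fun x : EuclideanSpace ℝ (Fin N) => ‖x‖)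
      (nhdsWithin (0 : EuclideanSpace ℝ (Fin N)) {0}ᶜ) (nhdsWithin 0 (Ioi 0)) :=
  tendsto_norm_nhdsNE_zero

theorem limits {N : ℕ} (hN : 3 ≤ N) {p : ℝ} (hp : 0 < p) {α β : ℝ}
    (haabb : 0 < (N:ℝ) + α + p * ((N:ℝ) - 2)) (hβ2 : β < -2) {φ : ℝ → ℝ}
    (hφpos : ∀ r : ℝ, 0 < r → 0 < φ r) {c₂ : ℝ} (hc₂ : 0 < c₂)
    (hα : ∀ r : ℝ, 0 < r → r < 1 → φ r ≤ c₂ * r ^ α)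
    (hβ : ∀ r : ℝ, 1 < r → φ r ≤ c₂ * r ^ β)
    {u : EuclideanSpace ℝ (Fin N) → ℝ} (hu : IsSol φ p u) :
    ∃ a b : ℝ, 0 ≤ a ∧ 0 ≤ b ∧
        Tendsto (fun x : EuclideanSpace ℝ (Fin N) => ‖x‖ ^ ((N:ℝ) - 2) * u x)
          (nhdsWithin (0 : EuclideanSpace ℝ (Fin N)) {0}ᶜ) (nhds a) ∧
        Tendsto u (Filter.cocompact (EuclideanSpace ℝ (Fin N))) (nhds b) := by
  have hN3 : (3:ℝ) ≤ N := by exact_mod_cast hN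
  obtain ⟨X, a, b, hX, ha, hb, hv, hinf, hzero⟩ := envelope hN (fun x hx => sol_cd hu hx)
    (fun x hx => by
      have h1 := hφpos ‖x‖ (norm_pos_iff.2 hx)
      have h2 := Real.rpow_pos_of_pos (hu.2 x hx).1 (-p)
      have := (hu.2 x hx).2
      nlinarith [mul_pos h1 h2]) (fun x hx => (hu.2 x hx).1)
  refine ⟨a, b, ha, hb, ?_, ?_⟩
  · obtain ⟨C, D, hC, hbd⟩ := sphere_bound (e := α) (by omega) hp hc₂ hφpos hu ha hb hv
    have hq : 0 < ((N:ℝ) - 2) + (2 + α) / (1 + p) := by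
      have : ((N:ℝ) - 2) + (2 + α) / (1 + p) = ((N:ℝ) + α + p * ((N:ℝ) - 2)) / (1 + p) := by
        field_simp; ring
      rw [this]; positivity
    have hG : Tendsto (fun r : ℝ => C * (r ^ ((N:ℝ) - 2) * (u (X r) - a * fund N (X r) - b)
        + D * r ^ (((N:ℝ) - 2) + (2 + α) / (1 + p)))) (nhdsWithin 0 (Ioi 0)) (nhds 0) := by
      have := (hzero.add ((rpow_tendsto_zero hq).const_mul D)).const_mul C
      simpa using this
    have hev : ∀ᶠ x in nhdsWithin (0 : EuclideanSpace ℝ (Fin N)) {0}ᶜ, ‖x‖ < 1 / 2 := by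
      have : ∀ᶠ r in nhdsWithin (0:ℝ) (Ioi 0), r < 1 / 2 :=
        nhdsWithin_le_nhds (Iio_mem_nhds (by norm_num))
      exact norm_tendsto_punctured.eventually this
    have hvz : Tendsto (fun x => ‖x‖ ^ ((N:ℝ) - 2) * (u x - a * fund N x - b))
        (nhdsWithin (0 : EuclideanSpace ℝ (Fin N)) {0}ᶜ) (nhds 0) := by
      refine squeeze_zero' ?_ ?_ (hG.comp norm_tendsto_punctured)
      · filter_upwards [self_mem_nhdsWithin] with x hx
        exact mul_nonneg (Real.rpow_nonneg (norm_nonneg _) _) (hv x hx).le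
      · filter_upwards [self_mem_nhdsWithin, hev] with x hx hx2
        have hxn : 0 < ‖x‖ := norm_pos_iff.2 hx
        have := hbd ‖x‖ hxn (fun s h1 h2 => hα s (by linarith) (by linarith)) (X ‖x‖) x
          (hX _ hxn) rfl
        have := mul_le_mul_of_nonneg_left this (Real.rpow_nonneg hxn.le ((N:ℝ) - 2))
        refine this.trans (le_of_eq ?_)
        simp only [Function.comp]
        rw [Real.rpow_add hxn]
        ring
    have hr := (rpow_tendsto_zero (q := (N:ℝ) - 2) (by linarith)).comp
      (norm_tendsto_punctured (N := N))
    have := (hvz.add_const a).add (hr.const_mul b)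
    simp only [zero_add, mul_zero, add_zero] at this
    refine this.congr' ?_
    filter_upwards [self_mem_nhdsWithin] with x hx
    have := pow_fund (N := N) hx
    simp only [Function.comp]
    linear_combination (-a) * this
  · obtain ⟨C, D, hC, hbd⟩ := sphere_bound (e := β) (by omega) hp hc₂ hφpos hu ha hb hv
    have hq : 0 < -((2 + β) / (1 + p)) := by
      rw [← neg_div]; apply div_pos <;> linarith
    have hG : Tendsto (fun r : ℝ => C * ((u (X r) - a * fund N (X r) - b)
        + D * r ^ ((2 + β) / (1 + p)))) atTop (nhds 0) := by
      have h1 := tendsto_rpow_neg_atTop hq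
      rw [neg_neg] at h1
      have := (hinf.add (h1.const_mul D)).const_mul C
      simpa using this
    have hnorm := tendsto_norm_cocompact_atTop (E := EuclideanSpace ℝ (Fin N))
    have hev : ∀ᶠ x in cocompact (EuclideanSpace ℝ (Fin N)), 4 < ‖x‖ :=
      hnorm.eventually (eventually_gt_atTop 4)
    have hvz : Tendsto (fun x => (u x - a * fund N x - b))
        (cocompact (EuclideanSpace ℝ (Fin N))) (nhds 0) := by
      refine squeeze_zero' ?_ ?_ (hG.comp hnorm)
      · filter_upwards [hev] with x hx
        exact (hv x (norm_pos_iff.1 (by linarith))).le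
      · filter_upwards [hev] with x hx
        have hxn : 0 < ‖x‖ := by linarith
        exact hbd ‖x‖ hxn (fun s h1 h2 => hβ s (by linarith)) (X ‖x‖) x (hX _ hxn) rfl
    have := (hvz.add_const b).add ((fund_tendsto hN).const_mul a)
    simp only [zero_add, mul_zero, add_zero] at this
    refine this.congr fun x => ?_
    ring

theorem unique_le {N : ℕ} (hN : 3 ≤ N) {p : ℝ} (hp : 0 < p) {φ : ℝ → ℝ}
    (hφpos : ∀ r : ℝ, 0 < r → 0 < φ r)
    {u v : EuclideanSpace ℝ (Fin N) → ℝ} (hu : IsSol φ p u) (hv : IsSol φ p v) {a b : ℝ}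
    (hu0 : Tendsto (fun x : EuclideanSpace ℝ (Fin N) => ‖x‖ ^ ((N:ℝ) - 2) * u x)
          (nhdsWithin (0 : EuclideanSpace ℝ (Fin N)) {0}ᶜ) (nhds a))
    (hui : Tendsto u (Filter.cocompact (EuclideanSpace ℝ (Fin N))) (nhds b))
    (hv0 : Tendsto (fun x : EuclideanSpace ℝ (Fin N) => ‖x‖ ^ ((N:ℝ) - 2) * v x)
          (nhdsWithin (0 : EuclideanSpace ℝ (Fin N)) {0}ᶜ) (nhds a))
    (hvi : Tendsto v (Filter.cocompact (EuclideanSpace ℝ (Fin N))) (nhds b))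
    {x : EuclideanSpace ℝ (Fin N)} (hx : x ≠ 0) : u x ≤ v x := by
  have key : ∀ ε : ℝ, 0 < ε → (fun y => u y - v y) x - ε * fund N x - ε ≤ 0 := by
    intro ε hε
    by_contra hcon
    push Not at hcon
    have hxn : 0 < ‖x‖ := norm_pos_iff.2 hx
    have hdu : ∀ z, z ≠ 0 → ContDiffAt ℝ 2 (fun y => u y - v y) z := fun z hz =>
      (sol_cd hu hz).sub (sol_cd hv hz)
    -- near zero
    have h0 := hu0.sub hv0
    rw [sub_self] at h0
    have h0 : ∀ᶠ r in nhdsWithin (0 : EuclideanSpace ℝ (Fin N)) {0}ᶜ,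
      ‖r‖ ^ ((N:ℝ) - 2) * u r - ‖r‖ ^ ((N:ℝ) - 2) * v r < ε := h0.eventually_lt_const hε
    rw [eventually_nhdsWithin_iff, Metric.eventually_nhds_iff] at h0
    obtain ⟨R, hR, h0⟩ := h0
    have hi := hui.sub hvi
    rw [sub_self] at hi
    have hi : ∀ᶠ z in cocompact (EuclideanSpace ℝ (Fin N)), u z - v z < ε :=
      hi.eventually_lt_const hε
    rw [Filter.Eventually, mem_cocompact] at hi
    obtain ⟨t, htc, hts⟩ := hi
    obtain ⟨S, hS⟩ := htc.isBounded.exists_norm_le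
    set R' := min (R / 2) ‖x‖
    set S' := max (S + 1) ‖x‖
    have hR' : 0 < R' := lt_min (by linarith) hxn
    have hne : ∀ z : EuclideanSpace ℝ (Fin N), R' ≤ ‖z‖ → z ≠ 0 := fun z hz =>
      norm_pos_iff.1 (hR'.trans_le hz)
    obtain ⟨z, ⟨hz1, hz2⟩, hz⟩ := (annulus_compact (N := N) R' S').exists_isMaxOn
      ⟨x, min_le_right _ _, le_max_right _ _⟩
      (f := fun y => (fun y => u y - v y) y - ε * fund N y - ε)
      (fun y hy => (cd_w (hne y hy.1) (hdu y (hne y hy.1)) ε ε).continuousAt.continuousWithinAt)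
    have hzx := hz (show x ∈ {z : EuclideanSpace ℝ (Fin N) | R' ≤ ‖z‖ ∧ ‖z‖ ≤ S'} from
      ⟨min_le_right _ _, le_max_right _ _⟩)
    simp only [mem_setOf_eq] at hzx
    have hz0 := hne z hz1
    have hf : 0 < fund N z := Real.rpow_pos_of_pos (norm_pos_iff.2 hz0) _
    have hzpos : 0 < u z - v z - ε * fund N z - ε := lt_of_lt_of_le hcon hzx
    have hzR : R' < ‖z‖ := by
      refine lt_of_le_of_ne hz1 fun h => ?_
      have h1 : ‖z‖ < R := by
        rw [← h]; exact lt_of_le_of_lt (min_le_left _ _) (by linarith)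
      have h2 := h0 (by simpa using h1) hz0
      have h3 := pow_fund (N := N) hz0
      have h4 : 0 < ‖z‖ ^ ((N:ℝ) - 2) := Real.rpow_pos_of_pos (norm_pos_iff.2 hz0) _
      have h5 := mul_pos h4 hzpos
      have h6 : ‖z‖ ^ ((N:ℝ) - 2) * (u z - v z - ε * fund N z - ε)
        = (‖z‖ ^ ((N:ℝ) - 2) * u z - ‖z‖ ^ ((N:ℝ) - 2) * v z)
          - ε * (‖z‖ ^ ((N:ℝ) - 2) * fund N z) - ε * ‖z‖ ^ ((N:ℝ) - 2) := by ring
      rw [h6, h3] at h5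
      nlinarith [mul_pos hε h4]
    have hzS : ‖z‖ < S' := by
      refine lt_of_le_of_ne hz2 fun h => ?_
      have h1 : z ∉ t := fun hzt => by
        have := hS z hzt
        have : S + 1 ≤ S' := le_max_left _ _
        linarith
      have h2 : u z - v z < ε := hts h1
      nlinarith [mul_pos hε hf]
    have hloc : IsLocalMax (fun y => (fun y => u y - v y) y - ε * fund N y - ε) z :=
      hz.isLocalMax (annulus_nhds hzR hzS)
    have hle := lap_nonpos_of_isLocalMax (cd_w hz0 (hdu z hz0) ε ε) hloc
    rw [lap_w hz0 (hdu z hz0), lap_sub (sol_cd hu hz0) (sol_cd hv hz0)] at hle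
    have huv : v z < u z := by nlinarith [mul_pos hε hf]
    have h7 : u z ^ (-p) < v z ^ (-p) :=
      Real.rpow_lt_rpow_of_neg (hv.2 z hz0).1 huv (by linarith)
    have h8 := hφpos ‖z‖ (norm_pos_iff.2 hz0)
    have h9 := mul_lt_mul_of_pos_left h7 h8
    linarith [(hu.2 z hz0).2, (hv.2 z hz0).2]
  have hlim : Tendsto (fun ε : ℝ => u x - v x - ε * fund N x - ε) (nhdsWithin 0 (Ioi 0))
      (nhds (u x - v x - 0 * fund N x - 0)) := by
    refine Tendsto.mono_left (Continuous.tendsto ?_ 0) nhdsWithin_le_nhds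
    fun_prop
  have := le_of_tendsto hlim (by
    filter_upwards [self_mem_nhdsWithin] with ε hε
    exact key ε hε)
  linarith

theorem sol_rot {N : ℕ} {φ : ℝ → ℝ} {p : ℝ} {u : EuclideanSpace ℝ (Fin N) → ℝ}
    (hu : IsSol φ p u) (R : EuclideanSpace ℝ (Fin N) ≃ₗᵢ[ℝ] EuclideanSpace ℝ (Fin N)) :
    IsSol φ p (fun y => u (R y)) := by
  have hR : ∀ x, x ≠ 0 → R x ≠ 0 := fun x hx => by simpa using hx
  refine ⟨fun x hx => ?_, fun x hx => ?_⟩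
  · have h1 : ContDiffAt ℝ 2 u (R x) := sol_cd hu (hR x hx)
    have h2 : ContDiffAt ℝ 2 R x := R.contDiff.contDiffAt
    exact (h1.comp x h2).contDiffWithinAt
  · have := hu.2 (R x) (hR x hx)
    rw [lap_rot]
    rw [R.norm_map] at this
    exact this

/-- Theorem 4.2 (ii): every solution is radially symmetric, has finite nonnegative
limits `a = lim_{|x|→0} |x|^{N-2} u(x)` and `b = lim_{|x|→∞} u(x)`, and two solutions
with the same limits coincide. -/
theorem statement_15 {N : ℕ} (hN : 3 ≤ N) (p : ℝ) (hp : 0 < p) (α β : ℝ)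
    (haabb : 0 < (N:ℝ) + α + p * ((N:ℝ) - 2)) (hβ2 : β < -2)
    (γ : NNReal) (hγ0 : 0 < γ) (hγ1 : γ < 1) (φ : ℝ → ℝ)
    (hφpos : ∀ r : ℝ, 0 < r → 0 < φ r)
    (hφhold : ∀ s : Set ℝ, IsCompact s → s ⊆ Ioi (0:ℝ) → ∃ C : NNReal, HolderOnWith C γ φ s)
    (c₁ c₂ : ℝ) (hc₁ : 0 < c₁) (hc₂ : 0 < c₂)
    (hα : ∀ r : ℝ, 0 < r → r < 1 → c₁ * r ^ α ≤ φ r ∧ φ r ≤ c₂ * r ^ α)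
    (hβ : ∀ r : ℝ, 1 < r → c₁ * r ^ β ≤ φ r ∧ φ r ≤ c₂ * r ^ β) :
    (∀ u : EuclideanSpace ℝ (Fin N) → ℝ, IsSol φ p u →
      (∀ x y : EuclideanSpace ℝ (Fin N), x ≠ 0 → y ≠ 0 → ‖x‖ = ‖y‖ → u x = u y) ∧
      ∃ a b : ℝ, 0 ≤ a ∧ 0 ≤ b ∧
        Tendsto (fun x : EuclideanSpace ℝ (Fin N) => ‖x‖ ^ ((N:ℝ) - 2) * u x)
          (nhdsWithin (0 : EuclideanSpace ℝ (Fin N)) {0}ᶜ) (nhds a) ∧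
        Tendsto u (Filter.cocompact (EuclideanSpace ℝ (Fin N))) (nhds b)) ∧
    (∀ u v : EuclideanSpace ℝ (Fin N) → ℝ, IsSol φ p u → IsSol φ p v →
      ∀ a b : ℝ,
        Tendsto (fun x : EuclideanSpace ℝ (Fin N) => ‖x‖ ^ ((N:ℝ) - 2) * u x)
          (nhdsWithin (0 : EuclideanSpace ℝ (Fin N)) {0}ᶜ) (nhds a) →
        Tendsto u (Filter.cocompact (EuclideanSpace ℝ (Fin N))) (nhds b) →
        Tendsto (fun x : EuclideanSpace ℝ (Fin N) => ‖x‖ ^ ((N:ℝ) - 2) * v x)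
          (nhdsWithin (0 : EuclideanSpace ℝ (Fin N)) {0}ᶜ) (nhds a) →
        Tendsto v (Filter.cocompact (EuclideanSpace ℝ (Fin N))) (nhds b) →
        ∀ x : EuclideanSpace ℝ (Fin N), x ≠ 0 → u x = v x) := by
  have huniq : ∀ u v : EuclideanSpace ℝ (Fin N) → ℝ, IsSol φ p u → IsSol φ p v →
      ∀ a b : ℝ,
        Tendsto (fun x : EuclideanSpace ℝ (Fin N) => ‖x‖ ^ ((N:ℝ) - 2) * u x)
          (nhdsWithin (0 : EuclideanSpace ℝ (Fin N)) {0}ᶜ) (nhds a) →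
        Tendsto u (Filter.cocompact (EuclideanSpace ℝ (Fin N))) (nhds b) →
        Tendsto (fun x : EuclideanSpace ℝ (Fin N) => ‖x‖ ^ ((N:ℝ) - 2) * v x)
          (nhdsWithin (0 : EuclideanSpace ℝ (Fin N)) {0}ᶜ) (nhds a) →
        Tendsto v (Filter.cocompact (EuclideanSpace ℝ (Fin N))) (nhds b) →
        ∀ x : EuclideanSpace ℝ (Fin N), x ≠ 0 → u x = v x :=
    fun u v hu hv a b h1 h2 h3 h4 x hx =>
      le_antisymm (unique_le hN hp hφpos hu hv h1 h2 h3 h4 hx)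
        (unique_le hN hp hφpos hv hu h3 h4 h1 h2 hx)
  refine ⟨fun u hu => ?_, huniq⟩
  obtain ⟨a, b, ha, hb, h0, hi⟩ := limits hN hp haabb hβ2 hφpos hc₂
    (fun r h1 h2 => (hα r h1 h2).2) (fun r h1 => (hβ r h1).2) hu
  refine ⟨fun x y hx hy hxy => ?_, a, b, ha, hb, h0, hi⟩
  set R := (Submodule.span ℝ {x - y})ᗮ.reflection with hR
  have hRx : R x = y := Submodule.reflection_sub hxy
  have hc : Tendsto (fun z => R z) (nhdsWithin (0 : EuclideanSpace ℝ (Fin N)) {0}ᶜ)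
      (nhdsWithin (0 : EuclideanSpace ℝ (Fin N)) {0}ᶜ) := by
    rw [tendsto_nhdsWithin_iff]
    constructor
    · have := R.continuous.tendsto 0
      rw [map_zero] at this
      exact this.mono_left nhdsWithin_le_nhds
    · filter_upwards [self_mem_nhdsWithin] with z hz
      simpa using hz
  have hci : Tendsto (fun z => R z) (Filter.cocompact (EuclideanSpace ℝ (Fin N)))
      (Filter.cocompact (EuclideanSpace ℝ (Fin N))) :=
    R.toHomeomorph.isClosedEmbedding.tendsto_cocompact
  have h0' := h0.comp hc
  have h0'' : Tendsto (fun z : EuclideanSpace ℝ (Fin N) => ‖z‖ ^ ((N:ℝ) - 2) * u (R z))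
      (nhdsWithin (0 : EuclideanSpace ℝ (Fin N)) {0}ᶜ) (nhds a) := by
    refine h0'.congr fun z => ?_
    simp only [Function.comp, R.norm_map]
  have := huniq u (fun z => u (R z)) hu (sol_rot hu R) a b h0 hi h0'' (hi.comp hci) x hx
  simpa [hRx] using this
end

section
/- Let N ≥ 3, p > 0, α, β ∈ ℝ, and let φ : (0,∞) → (0,∞) be continuous and satisfy, for some constants c₁, c₂ > 0: c₁ r^α ≤ φ(r) ≤ c₂ r^α for all 0 < r < 1, and c₁ r^β ≤ φ(r) ≤ c₂ r^β for all r > 1. Then there exists a constant c > 0, depending only on N, p, α, β, c₁, c₂, such that every C² positive solution u of −Δu = φ(|x|) u^{−p} on ℝ^N \ {0} satisfies u(x) ≥ c |x|^{(2+α)/(1+p)} for all x with 0 < |x| < 1, and u(x) ≥ c |x|^{(2+β)/(1+p)} for all x with |x| > 1. -/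
open Metric Set MeasureTheory Filter

lemma deriv2_nonneg_of_isLocalMin {g : ℝ → ℝ} (hmin : IsLocalMin g 0)
    (hc : ContinuousAt g 0) : 0 ≤ deriv (deriv g) 0 := by
  by_contra! h
  have hd : deriv g 0 = 0 := hmin.deriv_eq_zero
  have hmax : IsLocalMax g 0 := isLocalMax_of_deriv_deriv_neg h hd hc
  have he : g =ᶠ[nhds 0] fun _ => g 0 := by
    filter_upwards [hmin, hmax] with t h1 h2
    exact le_antisymm h2 h1
  have h2 := he.deriv.deriv_eq
  simp at h2
  linarith

lemma dir_second {N : ℕ} {u : EuclideanSpace ℝ (Fin N) → ℝ}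
    {z x₀ e : EuclideanSpace ℝ (Fin N)} {ε : ℝ} (he : ‖e‖ = 1)
    (hu : ContDiffAt ℝ 2 u z)
    (hmin : IsLocalMin (fun x => u x + ε * ‖x - x₀‖ ^ 2) z) :
    0 ≤ iteratedFDeriv ℝ 2 u z ![e, e] + 2 * ε := by
  have hline : ∀ t : ℝ, HasDerivAt (fun t : ℝ => z + t • e) e t := by
    intro t
    simpa using ((hasDerivAt_id t).smul_const e).const_add z
  have hlc : ContinuousAt (fun t : ℝ => z + t • e) 0 := (hline 0).continuousAt
  have hl0 : Tendsto (fun t : ℝ => z + t • e) (nhds 0) (nhds z) := by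
    have := hlc.tendsto
    simpa using this
  have hq : ∀ t : ℝ, HasDerivAt (fun t : ℝ => ε * ‖z + t • e - x₀‖ ^ 2)
      (ε * (2 * inner ℝ (z + t • e - x₀) e)) t := by
    intro t
    exact (((hline t).sub_const x₀).norm_sq).const_mul ε
  have hev : ∀ᶠ x in nhds z, DifferentiableAt ℝ u x := by
    have := hu.eventually (by simp)
    filter_upwards [this] with x hx
    exact hx.differentiableAt (by norm_num)
  have hd1 : ∀ᶠ t in nhds (0:ℝ), HasDerivAt (fun t : ℝ => u (z + t • e) + ε * ‖z + t • e - x₀‖ ^ 2)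
      (fderiv ℝ u (z + t • e) e + ε * (2 * inner ℝ (z + t • e - x₀) e)) t := by
    filter_upwards [hl0.eventually hev] with t ht
    exact (ht.hasFDerivAt.comp_hasDerivAt t (hline t)).add (hq t)
  have hd1' := hd1.mono (fun t h => h.deriv)
  have hF : DifferentiableAt ℝ (fderiv ℝ u) z :=
    (hu.fderiv_right (m := 1) (by norm_num)).differentiableAt (by norm_num)
  have hF' : HasFDerivAt (fderiv ℝ u) (fderiv ℝ (fderiv ℝ u) z) (z + (0:ℝ) • e) := by
    simpa using hF.hasFDerivAt
  have hd2 : HasDerivAt (fun t : ℝ => fderiv ℝ u (z + t • e) e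
      + ε * (2 * inner ℝ (z + t • e - x₀) e)) (fderiv ℝ (fderiv ℝ u) z e e + 2 * ε) 0 := by
    have h0 : HasDerivAt (fun t : ℝ => fderiv ℝ u (z + t • e)) (fderiv ℝ (fderiv ℝ u) z e) 0 :=
      hF'.comp_hasDerivAt (0:ℝ) (hline 0)
    have h1 : HasDerivAt (fun t : ℝ => fderiv ℝ u (z + t • e) e)
        (fderiv ℝ (fderiv ℝ u) z e e) 0 :=
      (ContinuousLinearMap.apply ℝ ℝ e).hasFDerivAt.comp_hasDerivAt (0:ℝ) h0
    have h2 : HasDerivAt (fun t : ℝ => inner ℝ (z + t • e - x₀) e) 1 0 := by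
      have := ((hline 0).sub_const x₀).inner ℝ (hasDerivAt_const (0:ℝ) e)
      simpa [he] using this
    have h3 := h1.add ((h2.const_mul 2).const_mul ε)
    have h4 : ε * (2 * 1) = 2 * ε := by ring
    rw [h4] at h3
    exact h3
  have hg := deriv2_nonneg_of_isLocalMin
    (g := fun t : ℝ => u (z + t • e) + ε * ‖z + t • e - x₀‖ ^ 2) ?_ ?_
  · rw [Filter.EventuallyEq.deriv_eq hd1', hd2.deriv] at hg
    rw [iteratedFDeriv_two_apply]
    simpa using hg
  · have := hl0.eventually hmin
    filter_upwards [this] with t ht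
    simpa using ht
  · exact hd1.self_of_nhds.continuousAt

lemma local_bound {N : ℕ} {p : ℝ} (hp : 0 < p) {φ : ℝ → ℝ}
    {u : EuclideanSpace ℝ (Fin N) → ℝ} (hu : IsSol φ p u)
    {x₀ : EuclideanSpace ℝ (Fin N)} {ρ K M : ℝ} (hρ : 0 < ρ) (hρ' : ρ < ‖x₀‖)
    (hM : 0 < M) (hKM : 2 * N * M ^ (1 + p) ≤ K * ρ ^ 2) (hK : 0 < K)
    (hφ : ∀ x ∈ closedBall x₀ ρ, K ≤ φ ‖x‖) : M ≤ u x₀ := by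
  by_contra! hlt
  have hne : ∀ x ∈ closedBall x₀ ρ, x ≠ 0 := by
    rintro x hx rfl
    rw [mem_closedBall, dist_zero_left] at hx
    linarith
  have hcont : ContinuousOn u (closedBall x₀ ρ) := hu.1.continuousOn.mono hne
  set ε := M / ρ ^ 2 with hε
  have hεM : ε * ρ ^ 2 = M := by rw [hε]; field_simp
  have hε0 : 0 < ε := by positivity
  obtain ⟨z, hz, hzmin⟩ := (isCompact_closedBall x₀ ρ).exists_isMinOn
    ⟨x₀, mem_closedBall_self hρ.le⟩
    (f := fun x => u x + ε * ‖x - x₀‖ ^ 2) (hcont.add (by fun_prop))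
  have h0 : u z + ε * ‖z - x₀‖ ^ 2 ≤ u x₀ := by
    simpa using hzmin (mem_closedBall_self hρ.le)
  have hz0 := hne z hz
  obtain ⟨huz, heq⟩ := hu.2 z hz0
  have hzi : ‖z - x₀‖ < ρ := by
    have : ε * ‖z - x₀‖ ^ 2 < ε * ρ ^ 2 := by linarith
    exact lt_of_pow_lt_pow_left₀ 2 hρ.le (lt_of_mul_lt_mul_left this hε0.le)
  have huM : u z < M := by
    have : 0 ≤ ε * ‖z - x₀‖ ^ 2 := by positivity
    linarith
  have hloc : IsLocalMin (fun x => u x + ε * ‖x - x₀‖ ^ 2) z := by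
    apply hzmin.isLocalMin
    apply closedBall_mem_nhds_of_mem
    rwa [mem_ball, dist_eq_norm]
  have hca : ContDiffAt ℝ 2 u z := hu.1.contDiffAt (isOpen_compl_singleton.mem_nhds hz0)
  have hsum : 0 ≤ ∑ i : Fin N, (iteratedFDeriv ℝ 2 u z
      ![EuclideanSpace.single i 1, EuclideanSpace.single i 1] + 2 * ε) :=
    Finset.sum_nonneg fun i _ => dir_second (by simp) hca hloc
  rw [Finset.sum_add_distrib] at hsum
  have hsum' : 0 ≤ laplacian u z + N * (2 * ε) := by
    simpa [laplacian] using hsum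
  have h1 : M ^ (-p) < u z ^ (-p) := Real.rpow_lt_rpow_of_neg huz huM (by linarith)
  have h2 : K * M ^ (-p) < φ ‖z‖ * u z ^ (-p) :=
    mul_lt_mul_of_le_of_lt_of_pos_of_nonneg (hφ z hz) h1 hK (by positivity)
  have h3 : N * (2 * ε) ≤ K * M ^ (-p) := by
    have hMp : 0 < M ^ p := Real.rpow_pos_of_pos hM p
    rw [Real.rpow_add hM, Real.rpow_one] at hKM
    rw [Real.rpow_neg hM.le, ← div_eq_mul_inv, le_div_iff₀ hMp, hε]
    have : N * (2 * (M / ρ ^ 2)) * M ^ p = (2 * N * (M * M ^ p)) / ρ ^ 2 := by ring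
    rw [this, div_le_iff₀ (by positivity)]
    exact hKM
  linarith

/-- comparing powers of comparable numbers -/
lemma rpow_cmp {s : ℝ} (γ : ℝ) (h1 : 1 / 2 ≤ s) (h2 : s ≤ 2) :
    (2:ℝ) ^ (-|γ|) ≤ s ^ γ := by
  have hs : 0 < s := by linarith
  rcases le_total 0 γ with h | h
  · rw [abs_of_nonneg h, Real.rpow_neg (by norm_num), ← Real.inv_rpow (by norm_num)]
    exact Real.rpow_le_rpow (by norm_num) (by linarith) h
  · rw [abs_of_nonpos h, neg_neg]
    exact Real.rpow_le_rpow_of_nonpos hs h2 h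

lemma two_rpow_le_one (γ : ℝ) : (2:ℝ) ^ (-|γ|) ≤ 1 :=
  Real.rpow_le_one_of_one_le_of_nonpos (by norm_num) (by simp)

/-- same region -/
lemma same_region {c₁ α β r R f : ℝ} (hc₁ : 0 < c₁) (hR : 0 < R) (h1 : R / 2 ≤ r)
    (h2 : r ≤ 2 * R) (hf : c₁ * r ^ α ≤ f) :
    c₁ * 2 ^ (-|α|) * 2 ^ (-|β|) * R ^ α ≤ f := by
  refine le_trans ?_ hf
  have hr : 0 < r := by linarith
  have h3 := rpow_cmp (s := r / R) α (by rw [le_div_iff₀ hR]; linarith)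
    (by rw [div_le_iff₀ hR]; linarith)
  rw [Real.div_rpow hr.le hR.le, le_div_iff₀ (by positivity)] at h3
  have h4 : (2:ℝ) ^ (-|α|) * 2 ^ (-|β|) * R ^ α ≤ r ^ α :=
    calc _ = (2:ℝ) ^ (-|β|) * (2 ^ (-|α|) * R ^ α) := by ring
      _ ≤ 1 * (2 ^ (-|α|) * R ^ α) :=
        mul_le_mul_of_nonneg_right (two_rpow_le_one β) (by positivity)
      _ ≤ r ^ α := by linarith
  calc _ = c₁ * ((2:ℝ) ^ (-|α|) * 2 ^ (-|β|) * R ^ α) := by ring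
    _ ≤ _ := mul_le_mul_of_nonneg_left h4 hc₁.le

/-- other region -/
lemma other_region {c₁ α β r R f : ℝ} (hc₁ : 0 < c₁) (hR1 : 1 / 2 ≤ R) (hR2 : R ≤ 2)
    (h1 : 1 / 2 ≤ r) (h2 : r ≤ 2) (hf : c₁ * r ^ β ≤ f) :
    c₁ * 2 ^ (-|α|) * 2 ^ (-|β|) * R ^ α ≤ f := by
  refine le_trans ?_ hf
  have hR : 0 < R := by linarith
  have h3 := rpow_cmp β h1 h2
  have h4 := rpow_cmp (-α) hR1 hR2
  rw [abs_neg, Real.rpow_neg hR.le, ← one_div, le_div_iff₀ (by positivity)] at h4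
  calc _ = c₁ * (((2:ℝ) ^ (-|α|) * R ^ α) * 2 ^ (-|β|)) := by ring
    _ ≤ c₁ * (1 * r ^ β) := by
      apply mul_le_mul_of_nonneg_left _ hc₁.le
      exact mul_le_mul h4 h3 (by positivity) (by norm_num)
    _ = _ := by ring

lemma final_bound {N : ℕ} (hN : 3 ≤ N) {p : ℝ} (hp : 0 < p) {γ k c : ℝ} (hk : 0 < k)
    (hc : 0 < c) (hck : 8 * N * c ^ (1 + p) = k) {φ : ℝ → ℝ}
    {u : EuclideanSpace ℝ (Fin N) → ℝ} (hu : IsSol φ p u)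
    {x : EuclideanSpace ℝ (Fin N)} (hx : x ≠ 0)
    (hφ : ∀ r, ‖x‖ / 2 ≤ r → r ≤ 3 / 2 * ‖x‖ → k * ‖x‖ ^ γ ≤ φ r) :
    c * ‖x‖ ^ ((2 + γ) / (1 + p)) ≤ u x := by
  have hR : 0 < ‖x‖ := norm_pos_iff.mpr hx
  refine local_bound hp hu (ρ := ‖x‖ / 2) (K := k * ‖x‖ ^ γ) (by linarith) (by linarith)
    (by positivity) ?_ (by positivity) ?_
  · rw [Real.mul_rpow hc.le (by positivity), ← Real.rpow_mul hR.le,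
      div_mul_cancel₀ _ (by linarith), Real.rpow_add hR, ← hck, Real.rpow_two]
    apply le_of_eq
    ring
  · intro y hy
    rw [mem_closedBall, dist_eq_norm] at hy
    apply hφ
    · have := norm_sub_norm_le x y
      rw [norm_sub_rev] at this
      linarith
    · have := norm_sub_norm_le y x
      linarith

/-- Step 3 in the proof of Theorem 4.2: universal lower bounds for solutions, with
a constant depending only on `N, p, α, β, c₁, c₂`. -/
theorem statement_16 {N : ℕ} (hN : 3 ≤ N) (p : ℝ) (hp : 0 < p) (α β : ℝ)
    (c₁ c₂ : ℝ) (hc₁ : 0 < c₁) (hc₂ : 0 < c₂) :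
    ∃ c : ℝ, 0 < c ∧
      ∀ φ : ℝ → ℝ, ContinuousOn φ (Ioi (0:ℝ)) → (∀ r : ℝ, 0 < r → 0 < φ r) →
        (∀ r : ℝ, 0 < r → r < 1 → c₁ * r ^ α ≤ φ r ∧ φ r ≤ c₂ * r ^ α) →
        (∀ r : ℝ, 1 < r → c₁ * r ^ β ≤ φ r ∧ φ r ≤ c₂ * r ^ β) →
        ∀ u : EuclideanSpace ℝ (Fin N) → ℝ, IsSol φ p u →
          (∀ x : EuclideanSpace ℝ (Fin N), x ≠ 0 → ‖x‖ < 1 →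
            c * ‖x‖ ^ ((2 + α) / (1 + p)) ≤ u x) ∧
          (∀ x : EuclideanSpace ℝ (Fin N), 1 < ‖x‖ →
            c * ‖x‖ ^ ((2 + β) / (1 + p)) ≤ u x) := by
  have hN0 : (0:ℝ) < N := by exact_mod_cast (by omega : 0 < N)
  set k : ℝ := c₁ * 2 ^ (-|α|) * 2 ^ (-|β|) with hkdef
  have hk' : k = c₁ * 2 ^ (-|β|) * 2 ^ (-|α|) := by rw [hkdef]; ring
  have hk : 0 < k := by positivity
  have hck : 8 * N * ((k / (8 * N)) ^ (1 / (1 + p))) ^ (1 + p) = k := by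
    rw [← Real.rpow_mul (by positivity), one_div_mul_cancel (by linarith), Real.rpow_one]
    field_simp
  have hcpos : 0 < (k / (8 * N)) ^ (1 / (1 + p)) := by positivity
  refine ⟨_, hcpos, ?_⟩
  intro φ hφc hφp hφ1 hφ2 u hu
  have hone : c₁ ≤ φ 1 := by
    have hca : ContinuousAt φ 1 := hφc.continuousAt (Ioi_mem_nhds one_pos)
    have ht : Tendsto φ (nhdsWithin 1 (Ioi 1)) (nhds (φ 1)) :=
      hca.tendsto.mono_left nhdsWithin_le_nhds
    have ht2 : Tendsto (fun r : ℝ => c₁ * r ^ β) (nhdsWithin 1 (Ioi 1)) (nhds c₁) := by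
      have : ContinuousAt (fun r : ℝ => c₁ * r ^ β) 1 :=
        continuousAt_const.mul (Real.continuousAt_rpow_const 1 β (Or.inl one_ne_zero))
      have h := this.tendsto.mono_left (nhdsWithin_le_nhds (s := Ioi 1))
      simpa using h
    refine le_of_tendsto_of_tendsto ht2 ht ?_
    filter_upwards [self_mem_nhdsWithin] with r hr
    exact (hφ2 r hr).1
  have hlow : ∀ r : ℝ, 0 < r → r ≤ 1 → c₁ * r ^ α ≤ φ r := by
    intro r h0 h1
    rcases h1.lt_or_eq with h | rfl
    · exact (hφ1 r h0 h).1
    · simpa using hone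
  constructor
  · intro x hx hx1
    have hR : 0 < ‖x‖ := norm_pos_iff.mpr hx
    refine final_bound hN hp hk hcpos hck hu hx ?_
    intro r h1 h2
    rcases le_or_gt r 1 with h | h
    · exact same_region hc₁ hR h1 (by linarith) (hlow r (by linarith) h)
    · exact other_region hc₁ (by linarith) (by linarith) (by linarith) (by linarith) (hφ2 r h).1
  · intro x hx1
    have hR : 0 < ‖x‖ := by linarith
    refine final_bound hN hp hk hcpos hck hu (norm_pos_iff.mp hR) ?_
    intro r h1 h2
    rw [hk']
    rcases le_or_gt r 1 with h | h
    · exact other_region hc₁ (by linarith) (by linarith) (by linarith) (by linarith)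
        (hlow r (by linarith) h)
    · exact same_region hc₁ hR h1 (by linarith) (hφ2 r h).1
end
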